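/- arXiv:1008.3604 — 2 statements merged into one kernel-verified Lean document; each statement's English description precedes it below -/
import Mathlib

section
/- Let C be a coalgebra over k with coradical filtration {C_n}, and let I be a nonzero coideal of C. Then I ∩ C₁ ≠ {0}. -/
open scoped TensorProduct

/-! Basic definitions: subcoalgebras, the coradical, the coradical filtration, coideals. -/

section Defs

variable (k : Type*) [Field k] (C : Type*) [AddCommGroup C] [Module k C] [Coalgebra k C]

/-- The image of `D ⊗ E` in `C ⊗ C`, for submodules `D, E ⊆ C`. -/
noncomputable def subTensor (D E : Submodule k C) : Submodule k (C ⊗[k] C) :=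
  LinearMap.range (TensorProduct.mapIncl D E)

/-- A subcoalgebra is a subspace `D` with `Δ(D) ⊆ D ⊗ D`. -/
def IsSubcoalgebra (D : Submodule k C) : Prop :=
  ∀ x ∈ D, Coalgebra.comul (R := k) x ∈ subTensor k C D D

/-- A simple subcoalgebra is a nonzero subcoalgebra with no nonzero proper subcoalgebra. -/
def IsSimpleSubcoalgebra (D : Submodule k C) : Prop :=
  D ≠ ⊥ ∧ IsSubcoalgebra k C D ∧
    ∀ D' : Submodule k C, D' ≤ D → IsSubcoalgebra k C D' → D' = ⊥ ∨ D' = D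

/-- The coradical `C₀` of `C`: the sum of all simple subcoalgebras of `C`. -/
noncomputable def coradical : Submodule k C :=
  sSup {D : Submodule k C | IsSimpleSubcoalgebra k C D}

/-- The coradical filtration, defined inductively by `C_n = Δ⁻¹(C ⊗ C_{n-1} + C₀ ⊗ C)`. -/
noncomputable def coradicalFiltration : ℕ → Submodule k C
  | 0 => coradical k C
  | n + 1 =>
      Submodule.comap (Coalgebra.comul (R := k))
        (subTensor k C ⊤ (coradicalFiltration n) ⊔ subTensor k C (coradical k C) ⊤)

/-- A coideal is a subspace `I` with `ε(I) = 0` and `Δ(I) ⊆ I ⊗ C + C ⊗ I`. -/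
def IsCoideal (I : Submodule k C) : Prop :=
  (∀ x ∈ I, Coalgebra.counit (R := k) x = 0) ∧
    ∀ x ∈ I, Coalgebra.comul (R := k) x ∈ subTensor k C I ⊤ ⊔ subTensor k C ⊤ I

end Defs

/-!
Let `J` be the annihilator of `C₀` in the dual algebra `C*`, which acts on `C` from the left by
`f ⇀ x = ∑ f(x₂) x₁` and from the right by `x ↼ f = ∑ f(x₁) x₂`. Unfolding the definition of the
filtration, `x ∈ Cₙ₊₁` if and only if `x ↼ f ∈ Cₙ` for all `f ∈ J`; since the two actions commute,
this is also equivalent to `f ⇀ x ∈ Cₙ` for all `f ∈ J`.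

* The filtration is exhaustive. The submodule `C* ⇀ x` is finite-dimensional, and `J` kills every
  simple subquotient of the left module `C`: every homomorphism from a submodule of `C` to `C` is of
  the form `· ↼ f`, hence subcoalgebras are the fully invariant submodules and the isotypic
  component of a simple submodule is a simple subcoalgebra.
* If `I ∩ Cₙ = 0`, then `I ∩ Cₙ₊₁ ⊆ C₁`. Indeed, every functional is the sum of one vanishing on `I`
  and one vanishing on `Cₙ`. For `f, g ∈ J` split in this way and `x ∈ I ∩ Cₙ₊₁`, every term of
  `∑ f(x₁) g(x₂)` vanishes.

So `I ∩ C₁ = 0` would propagate to `I ∩ Cₙ = 0` for all `n`, that is, to `I = 0`.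
-/

open WithConv

section SubTensor

variable {k V W : Type*} [Field k] [AddCommGroup V] [Module k V] [AddCommGroup W] [Module k W]

theorem eq_of_forall_dual_eq {x y : V} (h : ∀ f : Module.Dual k V, f x = f y) : x = y :=
  Module.eval_apply_injective k (LinearMap.ext h)

theorem eq_zero_of_forall_mul'_map_eq_zero {t : V ⊗[k] W}
    (h : ∀ (f : Module.Dual k V) (g : Module.Dual k W),
      LinearMap.mul' k k (TensorProduct.map f g t) = 0) : t = 0 := by
  let b := Module.Basis.ofVectorSpace k V
  let b' := Module.Basis.ofVectorSpace k W
  have coord_eq (i j) : (b.tensorProduct b').coord (i, j) =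
      LinearMap.mul' k k ∘ₗ TensorProduct.map (b.coord i) (b'.coord j) :=
    TensorProduct.ext' fun x y => by simp [mul_comm]
  refine (b.tensorProduct b').ext_elem fun ⟨i, j⟩ => ?_
  simpa using (LinearMap.congr_fun (coord_eq i j) t).trans (h _ _)

variable {D E : Submodule k V} {t : V ⊗[k] V} {f g : Module.Dual k V}

theorem subTensor_le {P : Submodule k (V ⊗[k] V)} :
    subTensor k V D E ≤ P ↔ ∀ x ∈ D, ∀ y ∈ E, x ⊗ₜ[k] y ∈ P := by
  rw [subTensor, TensorProduct.range_mapIncl, Submodule.map₂_le]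
  rfl

theorem subTensor_mono {D' E' : Submodule k V} (hD : D ≤ D') (hE : E ≤ E') :
    subTensor k V D E ≤ subTensor k V D' E' :=
  TensorProduct.range_mapIncl_mono hD hE

theorem mul'_map_eq_zero_of_left (hf : f ∈ D.dualAnnihilator) (ht : t ∈ subTensor k V D E) :
    LinearMap.mul' k k (TensorProduct.map f g t) = 0 := by
  have hle : subTensor k V D E ≤ LinearMap.ker (LinearMap.mul' k k ∘ₗ TensorProduct.map f g) :=
    subTensor_le.mpr fun x hx y _ => by simp [(Submodule.mem_dualAnnihilator f).mp hf x hx]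
  exact hle ht

theorem mul'_map_eq_zero_of_right (hg : g ∈ E.dualAnnihilator) (ht : t ∈ subTensor k V D E) :
    LinearMap.mul' k k (TensorProduct.map f g t) = 0 := by
  have hle : subTensor k V D E ≤ LinearMap.ker (LinearMap.mul' k k ∘ₗ TensorProduct.map f g) :=
    subTensor_le.mpr fun x _ y hy => by simp [(Submodule.mem_dualAnnihilator g).mp hg y hy]
  exact hle ht

theorem mem_subTensor_iff :
    t ∈ subTensor k V D E ↔
      (∀ f ∈ D.dualAnnihilator, ∀ g, LinearMap.mul' k k (TensorProduct.map f g t) = 0) ∧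
        ∀ f, ∀ g ∈ E.dualAnnihilator, LinearMap.mul' k k (TensorProduct.map f g t) = 0 := by
  refine ⟨fun ht => ⟨fun f hf g => mul'_map_eq_zero_of_left hf ht,
    fun f g hg => mul'_map_eq_zero_of_right hg ht⟩, fun ⟨hD, hE⟩ => ?_⟩
  obtain ⟨p, hp⟩ := D.subtype.exists_leftInverse_of_injective D.ker_subtype
  obtain ⟨q, hq⟩ := E.subtype.exists_leftInverse_of_injective E.ker_subtype
  refine ⟨TensorProduct.map p q t, (sub_eq_zero.mp ?_).symm⟩
  refine eq_zero_of_forall_mul'_map_eq_zero fun f g => ?_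
  have hf : f - f ∘ₗ D.subtype ∘ₗ p ∈ D.dualAnnihilator :=
    (Submodule.mem_dualAnnihilator _).mpr fun x hx => by
      simpa [sub_eq_zero] using congr(f ($hp ⟨x, hx⟩)).symm
  have hg : g - g ∘ₗ E.subtype ∘ₗ q ∈ E.dualAnnihilator :=
    (Submodule.mem_dualAnnihilator _).mpr fun x hx => by
      simpa [sub_eq_zero] using congr(g ($hq ⟨x, hx⟩)).symm
  have split : TensorProduct.map f g =
      TensorProduct.map (f - f ∘ₗ D.subtype ∘ₗ p) g +
        TensorProduct.map (f ∘ₗ D.subtype ∘ₗ p) (g - g ∘ₗ E.subtype ∘ₗ q) +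
        TensorProduct.map (f ∘ₗ D.subtype ∘ₗ p) (g ∘ₗ E.subtype ∘ₗ q) := by
    rw [add_assoc, ← TensorProduct.map_add_right, sub_add_cancel, ← TensorProduct.map_add_left,
      sub_add_cancel]
  have project : TensorProduct.map f g (TensorProduct.mapIncl D E (TensorProduct.map p q t)) =
      TensorProduct.map (f ∘ₗ D.subtype ∘ₗ p) (g ∘ₗ E.subtype ∘ₗ q) t := by
    rw [TensorProduct.mapIncl, TensorProduct.map_map, TensorProduct.map_map]
    rfl
  rw [map_sub, map_sub, project, split, LinearMap.add_apply, LinearMap.add_apply, map_add, map_add,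
    hD _ hf g, hE _ _ hg, zero_add, zero_add, sub_self]

theorem mem_subTensor_sup_iff :
    t ∈ subTensor k V D ⊤ ⊔ subTensor k V ⊤ E ↔
      ∀ f ∈ D.dualAnnihilator, ∀ g ∈ E.dualAnnihilator,
        LinearMap.mul' k k (TensorProduct.map f g t) = 0 := by
  constructor
  · intro ht f hf g hg
    obtain ⟨u, hu, v, hv, rfl⟩ := Submodule.mem_sup.mp ht
    rw [map_add, map_add, mul'_map_eq_zero_of_left hf hu, mul'_map_eq_zero_of_right hg hv, add_zero]
  · intro h
    have hker : t ∈ LinearMap.ker (TensorProduct.map D.mkQ E.mkQ) :=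
      eq_zero_of_forall_mul'_map_eq_zero fun f g => by
        rw [TensorProduct.map_map]
        exact h _ (D.range_dualMap_mkQ_eq ▸ ⟨f, rfl⟩) _ (E.range_dualMap_mkQ_eq ▸ ⟨g, rfl⟩)
    rw [TensorProduct.map_ker (LinearMap.exact_subtype_mkQ D) D.mkQ_surjective
      (LinearMap.exact_subtype_mkQ E) E.mkQ_surjective] at hker
    have hle : LinearMap.range (E.subtype.lTensor V) ⊔ LinearMap.range (D.subtype.rTensor V) ≤
        subTensor k V D ⊤ ⊔ subTensor k V ⊤ E :=
      sup_comm (subTensor k V D ⊤) _ ▸ sup_le_sup (TensorProduct.range_map_mono (by simp) le_rfl)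
        (TensorProduct.range_map_mono le_rfl (by simp))
    exact hle hker

end SubTensor

section Coalgebra

variable {k C : Type*} [Field k] [AddCommGroup C] [Module k C] [Coalgebra k C]

variable (k C) in
/-- The dual algebra `C*` of a coalgebra, with the convolution product. -/
abbrev DualAlgebra : Type _ := WithConv (Module.Dual k C)

-- Otherwise `Semiring (DualAlgebra k C)` is found as `convSemiring` rather than through `convRing`,
-- and unification fails to identify the two.
attribute [local instance low] LinearMap.convSemiring

namespace DualAlgebra

/-- The left action `f ⇀ x = ∑ f(x₂) x₁` of the dual algebra on the coalgebra. -/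
noncomputable instance : SMul (DualAlgebra k C) C where
  smul f x := TensorProduct.rid k C (f.ofConv.lTensor C (Coalgebra.comul x))

theorem apply_smul (f : DualAlgebra k C) (g : Module.Dual k C) (x : C) :
    g (f • x) = (toConv g * f).ofConv x := by
  have pairing_eq : g ∘ₗ (TensorProduct.rid k C).toLinearMap ∘ₗ f.ofConv.lTensor C =
      LinearMap.mul' k k ∘ₗ TensorProduct.map g f.ofConv :=
    TensorProduct.ext' fun y z => by simp [mul_comm]
  exact LinearMap.congr_fun pairing_eq (Coalgebra.comul x)

theorem smul_eq_sum {x : C} {ι : Type*} (𝓡 : Coalgebra.Repr k x ι) (f : DualAlgebra k C) :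
    f • x = ∑ i ∈ 𝓡.index, f.ofConv (𝓡.right i) • 𝓡.left i := by
  change TensorProduct.rid k C (f.ofConv.lTensor C (Coalgebra.comul x)) = _
  simp [← 𝓡.eq]

noncomputable instance : Module (DualAlgebra k C) C where
  one_smul x := eq_of_forall_dual_eq (k := k) fun g => by simp [apply_smul]
  mul_smul f h x := eq_of_forall_dual_eq (k := k) fun g => by simp only [apply_smul, ← mul_assoc]
  smul_zero f := eq_of_forall_dual_eq (k := k) fun g => by simp [apply_smul]
  smul_add f x y := eq_of_forall_dual_eq (k := k) fun g => by simp [apply_smul]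
  add_smul f h x := eq_of_forall_dual_eq (k := k) fun g => by simp [apply_smul, mul_add]
  zero_smul x := eq_of_forall_dual_eq (k := k) fun g => by simp [apply_smul]

theorem counit_toConv_smul (f : Module.Dual k C) (x : C) :
    Coalgebra.counit (R := k) (toConv f • x) = f x :=
  (apply_smul _ _ x).trans congr(($(one_mul (toConv f))).ofConv x)

instance : IsScalarTower k (DualAlgebra k C) C where
  smul_assoc a f x := eq_of_forall_dual_eq (k := k) fun g => by simp [apply_smul]

theorem apply_lid_rTensor_comul (f g : Module.Dual k C) (x : C) :
    g (TensorProduct.lid k C (f.rTensor C (Coalgebra.comul x))) =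
      (toConv f * toConv g).ofConv x := by
  have pairing_eq : g ∘ₗ (TensorProduct.lid k C).toLinearMap ∘ₗ f.rTensor C =
      LinearMap.mul' k k ∘ₗ TensorProduct.map f g :=
    TensorProduct.ext' fun y z => by simp
  exact LinearMap.congr_fun pairing_eq (Coalgebra.comul x)

/-- The right action `x ↼ f = ∑ f(x₁) x₂` of the dual algebra on the coalgebra, by endomorphisms of
the left module. -/
noncomputable def rightHit (f : Module.Dual k C) : Module.End (DualAlgebra k C) C where
  toFun x := TensorProduct.lid k C (f.rTensor C (Coalgebra.comul x))
  map_add' x y := by simp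
  map_smul' h x := eq_of_forall_dual_eq (k := k) fun g => by
    simp only [apply_lid_rTensor_comul, apply_smul, mul_assoc, toConv_ofConv, RingHom.id_apply]

theorem apply_rightHit (f g : Module.Dual k C) (x : C) :
    g (rightHit f x) = (toConv f * toConv g).ofConv x :=
  apply_lid_rTensor_comul f g x

theorem isFiniteLength_span_singleton (x : C) :
    IsFiniteLength (DualAlgebra k C) (Submodule.span (DualAlgebra k C) {x}) := by
  let 𝓡 := Coalgebra.Repr.arbitrary k x
  have hle : (Submodule.span (DualAlgebra k C) {x}).restrictScalars k ≤
      Submodule.span k (𝓡.left '' 𝓡.index) := by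
    intro y hy
    obtain ⟨f, rfl⟩ := Submodule.mem_span_singleton.mp hy
    rw [smul_eq_sum 𝓡]
    exact sum_mem fun i hi => Submodule.smul_mem _ _ <|
      Submodule.subset_span (Set.mem_image_of_mem _ hi)
  have := FiniteDimensional.span_of_finite k (𝓡.index.finite_toSet.image 𝓡.left)
  have : FiniteDimensional k (Submodule.span (DualAlgebra k C) {x}) :=
    Submodule.finiteDimensional_of_le hle
  exact isFiniteLength_iff_isNoetherian_isArtinian.mpr
    ⟨isNoetherian_of_tower k inferInstance, isArtinian_of_tower k inferInstance⟩

-- The functional `f` is an extension of `ε ∘ φ`.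
theorem exists_forall_eq_rightHit {T : Submodule (DualAlgebra k C) C}
    (φ : T →ₗ[DualAlgebra k C] C) : ∃ f : Module.Dual k C, ∀ t : T, φ t = rightHit f t := by
  obtain ⟨f, hf⟩ := LinearMap.exists_extend (p := T.restrictScalars k)
    (Coalgebra.counit ∘ₗ φ.restrictScalars k)
  refine ⟨f, fun t => eq_of_forall_dual_eq (k := k) fun g => ?_⟩
  calc g (φ t) = Coalgebra.counit (R := k) (φ (toConv g • t)) := by
        rw [map_smul, counit_toConv_smul]
    _ = f (toConv g • (t : C)) := (LinearMap.congr_fun hf (toConv g • t)).symm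
    _ = g (rightHit f t) := by rw [apply_smul, apply_rightHit]

theorem isotypicComponent_le_of_isFullyInvariant {N T : Submodule (DualAlgebra k C) C}
    (hN : N.IsFullyInvariant) (hT : T ≤ N) : isotypicComponent (DualAlgebra k C) C T ≤ N := by
  refine sSup_le ?_
  rintro T' ⟨e⟩ x hx
  obtain ⟨f, hf⟩ := exists_forall_eq_rightHit (T'.subtype ∘ₗ e.symm.toLinearMap)
  have h := hf (e ⟨x, hx⟩)
  simp only [LinearMap.comp_apply, LinearEquiv.coe_coe, LinearEquiv.symm_apply_apply,
    Submodule.subtype_apply] at h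
  exact h ▸ hN (rightHit f) (hT (e ⟨x, hx⟩).2)

end DualAlgebra

open DualAlgebra

theorem isSubcoalgebra_iff_smul_mem_and_rightHit_mem {D : Submodule k C} :
    IsSubcoalgebra k C D ↔
      ∀ x ∈ D, ∀ f : Module.Dual k C, toConv f • x ∈ D ∧ rightHit f x ∈ D := by
  refine forall₂_congr fun x _ => ?_
  simp only [mem_subTensor_iff, forall_and, apply_smul, apply_rightHit, LinearMap.convMul_apply,
    ← Subspace.forall_mem_dualAnnihilator_apply_eq_zero_iff D]
  exact and_congr_left' ⟨fun h g f hf => h f hf g, fun h f hf g => h g f hf⟩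

theorem isSubcoalgebra_iff_exists_isFullyInvariant {D : Submodule k C} :
    IsSubcoalgebra k C D ↔
      ∃ N : Submodule (DualAlgebra k C) C, N.IsFullyInvariant ∧ N.restrictScalars k = D := by
  rw [isSubcoalgebra_iff_smul_mem_and_rightHit_mem]
  constructor
  · intro hD
    refine ⟨⟨D.toAddSubmonoid, fun f x hx => (hD x hx f.ofConv).1⟩, fun φ x hx => ?_, rfl⟩
    obtain ⟨f, hf⟩ := exists_forall_eq_rightHit (φ.domRestrict ⊤)
    have hx' : φ x = rightHit f x := hf ⟨x, trivial⟩
    change φ x ∈ D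
    exact hx' ▸ (hD x hx f).2
  · rintro ⟨N, hN, rfl⟩ x hx f
    exact ⟨N.smul_mem _ hx, hN (rightHit f) hx⟩

theorem isSimpleSubcoalgebra_isotypicComponent (S : Submodule (DualAlgebra k C) C)
    [IsSimpleModule (DualAlgebra k C) S] :
    IsSimpleSubcoalgebra k C ((isotypicComponent (DualAlgebra k C) C S).restrictScalars k) := by
  refine ⟨?_, isSubcoalgebra_iff_exists_isFullyInvariant.mpr
    ⟨_, .isotypicComponent _ _ _, rfl⟩, fun D hD hsub => ?_⟩
  · rw [Ne, Submodule.restrictScalars_eq_bot_iff]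
    exact (bot_lt_isotypicComponent S).ne'
  · obtain ⟨N, hN, rfl⟩ := isSubcoalgebra_iff_exists_isFullyInvariant.mp hsub
    have hle : N ≤ isotypicComponent (DualAlgebra k C) C S := hD
    have : IsSemisimpleModule (DualAlgebra k C) N :=
      .of_injective _ (Submodule.inclusion_injective hle)
    refine (IsSemisimpleModule.eq_bot_or_exists_simple_le N).imp
      (by rintro rfl; simp) fun ⟨T, hTN, hT⟩ => ?_
    obtain ⟨e⟩ := isIsotypicOfType_submodule_iff.mp (.isotypicComponent (DualAlgebra k C) C S) T
      (hTN.trans hle)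
    refine congrArg _ (hle.antisymm ?_)
    rw [← e.isotypicComponent_eq]
    exact isotypicComponent_le_of_isFullyInvariant hN hTN

theorem apply_mem_coradical_of_isSimpleModule {S : Type*} [AddCommGroup S]
    [Module (DualAlgebra k C) S] [IsSimpleModule (DualAlgebra k C) S]
    (ψ : S →ₗ[DualAlgebra k C] C) (s : S) : ψ s ∈ coradical k C := by
  rcases ψ.injective_or_eq_zero with hψ | rfl
  · have : IsSimpleModule (DualAlgebra k C) (LinearMap.range ψ) :=
      .congr (LinearEquiv.ofInjective ψ hψ).symm
    exact Submodule.mem_sSup_of_mem (isSimpleSubcoalgebra_isotypicComponent (LinearMap.range ψ))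
      (Submodule.le_isotypicComponent (LinearMap.range ψ) ⟨s, rfl⟩)
  · exact zero_mem _

-- With `i` an inclusion: the annihilator of the coradical kills every simple subquotient of `C`.
theorem smul_mem_map_of_isSimpleModule_quotient {M : Type*} [AddCommGroup M]
    [Module (DualAlgebra k C) M] (i : M →ₗ[DualAlgebra k C] C) (N : Submodule (DualAlgebra k C) M)
    [IsSimpleModule (DualAlgebra k C) (M ⧸ N)] {f : Module.Dual k C}
    (hf : f ∈ (coradical k C).dualAnnihilator) (m : M) : toConv f • i m ∈ N.map i := by
  change _ ∈ (N.map i).restrictScalars k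
  rw [← Subspace.forall_mem_dualAnnihilator_apply_eq_zero_iff]
  intro g hg
  have hker : N ≤ LinearMap.ker (rightHit g ∘ₗ i) := fun n hn =>
    eq_of_forall_dual_eq (k := k) fun h => by
      simpa only [LinearMap.comp_apply, apply_rightHit, map_zero, apply_smul] using
        (Submodule.mem_dualAnnihilator g).mp hg (toConv h • i n)
          ⟨toConv h • n, N.smul_mem _ hn, map_smul i _ n⟩
  rw [apply_smul, ← apply_rightHit]
  exact (Submodule.mem_dualAnnihilator f).mp hf _ <|
    apply_mem_coradical_of_isSimpleModule (N.liftQ _ hker) (N.mkQ m)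

variable (k C) in
theorem coradical_le_coradicalFiltration_one : coradical k C ≤ coradicalFiltration k C 1 :=
  sSup_le fun _ hD x hx =>
    le_sup_of_le_right (a := subTensor k C ⊤ (coradical k C))
      (subTensor_mono (le_sSup hD) le_top) (hD.2.1 x hx)

variable (k C) in
theorem coradicalFiltration_monotone : Monotone (coradicalFiltration k C) := by
  refine monotone_nat_of_le_succ fun n => ?_
  induction n with
  | zero => exact coradical_le_coradicalFiltration_one k C
  | succ n ih => exact Submodule.comap_mono (sup_le_sup_right (subTensor_mono le_rfl ih) _)

theorem mem_coradicalFiltration_succ_iff_rightHit {n : ℕ} {x : C} :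
    x ∈ coradicalFiltration k C (n + 1) ↔
      ∀ f ∈ (coradical k C).dualAnnihilator, rightHit f x ∈ coradicalFiltration k C n := by
  rw [coradicalFiltration, Submodule.mem_comap, sup_comm, mem_subTensor_sup_iff]
  simp only [← Subspace.forall_mem_dualAnnihilator_apply_eq_zero_iff (coradicalFiltration k C n),
    apply_rightHit, LinearMap.convMul_apply]

theorem mem_coradicalFiltration_succ_iff_smul {n : ℕ} {x : C} :
    x ∈ coradicalFiltration k C (n + 1) ↔
      ∀ f ∈ (coradical k C).dualAnnihilator, toConv f • x ∈ coradicalFiltration k C n := by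
  induction n generalizing x with
  | zero =>
    rw [mem_coradicalFiltration_succ_iff_rightHit]
    simp only [coradicalFiltration, apply_rightHit, apply_smul,
      ← Subspace.forall_mem_dualAnnihilator_apply_eq_zero_iff (coradical k C)]
    exact ⟨fun h f hf g hg => h g hg f hf, fun h f hf g hg => h g hg f hf⟩
  | succ n ih =>
    let J := (coradical k C).dualAnnihilator
    calc x ∈ coradicalFiltration k C (n + 1 + 1)
        ↔ ∀ f ∈ J, ∀ g ∈ J, toConv g • rightHit f x ∈ coradicalFiltration k C n := by
          simp only [mem_coradicalFiltration_succ_iff_rightHit (n := n + 1), ih, J]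
      _ ↔ ∀ g ∈ J, ∀ f ∈ J, rightHit f (toConv g • x) ∈ coradicalFiltration k C n := by
          simp only [map_smul]
          exact ⟨fun h g hg f hf => h f hf g hg, fun h f hf g hg => h g hg f hf⟩
      _ ↔ ∀ g ∈ J, toConv g • x ∈ coradicalFiltration k C (n + 1) := by
          simp only [mem_coradicalFiltration_succ_iff_rightHit, J]

theorem exists_forall_mem_coradicalFiltration_of_isFiniteLength {M : Type*} [AddCommGroup M]
    [Module (DualAlgebra k C) M] (hM : IsFiniteLength (DualAlgebra k C) M)
    (i : M →ₗ[DualAlgebra k C] C) : ∃ n, ∀ m, i m ∈ coradicalFiltration k C n := by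
  induction hM with
  | of_subsingleton => exact ⟨0, fun m => by simp [Subsingleton.elim m 0]⟩
  | @of_simple_quotient M _ _ N _ _ ih =>
    obtain ⟨n, hn⟩ := ih (i ∘ₗ N.subtype)
    refine ⟨n + 1, fun m => mem_coradicalFiltration_succ_iff_smul.mpr fun f hf => ?_⟩
    obtain ⟨m', hm', h⟩ := smul_mem_map_of_isSimpleModule_quotient i N hf m
    exact h ▸ hn ⟨m', hm'⟩

variable (k) in
theorem exists_mem_coradicalFiltration (x : C) : ∃ n, x ∈ coradicalFiltration k C n := by
  obtain ⟨n, hn⟩ := exists_forall_mem_coradicalFiltration_of_isFiniteLength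
    (isFiniteLength_span_singleton (k := k) x) (Submodule.subtype _)
  exact ⟨n, hn ⟨x, Submodule.mem_span_singleton_self x⟩⟩

theorem inf_coradicalFiltration_succ_le_one {I : Submodule k C}
    (hI : ∀ x ∈ I, Coalgebra.comul (R := k) x ∈ subTensor k C I ⊤ ⊔ subTensor k C ⊤ I) {n : ℕ}
    (hn : I ⊓ coradicalFiltration k C n = ⊥) :
    I ⊓ coradicalFiltration k C (n + 1) ≤ coradicalFiltration k C 1 := by
  have split : ∀ f : Module.Dual k C, ∃ a ∈ I.dualAnnihilator,
      ∃ b ∈ (coradicalFiltration k C n).dualAnnihilator, a + b = f := fun f => by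
    rw [← Submodule.mem_sup, ← Subspace.dualAnnihilator_inf_eq, hn]
    simp
  have hC₀ : coradical k C ≤ coradicalFiltration k C n :=
    coradicalFiltration_monotone k C n.zero_le
  rintro x ⟨hxI, hxn⟩
  rw [mem_coradicalFiltration_succ_iff_rightHit]
  intro f hf
  rw [coradicalFiltration, ← Subspace.forall_mem_dualAnnihilator_apply_eq_zero_iff]
  intro g hg
  obtain ⟨a, ha, b, hb, rfl⟩ := split f
  obtain ⟨c, hc, d, hd, rfl⟩ := split g
  have ha₀ : a ∈ (coradical k C).dualAnnihilator := by
    simpa using sub_mem hf (Submodule.dualAnnihilator_anti hC₀ hb)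
  have hac : c (rightHit a x) = 0 :=
    (apply_rightHit a c x).trans (mem_subTensor_sup_iff.mp (hI x hxI) a ha c hc)
  have had : d (rightHit a x) = 0 := (Submodule.mem_dualAnnihilator d).mp hd _
    (mem_coradicalFiltration_succ_iff_rightHit.mp hxn a ha₀)
  have hbg : b (toConv (c + d) • x) = 0 := (Submodule.mem_dualAnnihilator b).mp hb _
    (mem_coradicalFiltration_succ_iff_smul.mp hxn (c + d) hg)
  calc (c + d) (rightHit (a + b) x)
      = c (rightHit a x) + d (rightHit a x) + b (toConv (c + d) • x) := by
        simp only [apply_rightHit, apply_smul, toConv_add, add_mul, mul_add, ofConv_add,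
          LinearMap.add_apply]
        abel
    _ = 0 := by rw [hac, had, hbg, add_zero, add_zero]

end Coalgebra

theorem coideal_inf_coradicalFiltration_one_ne_bot_general {k C : Type*} [Field k]
    [AddCommGroup C] [Module k C] [Coalgebra k C] (I : Submodule k C)
    (hI : ∀ x ∈ I, Coalgebra.comul (R := k) x ∈ subTensor k C I ⊤ ⊔ subTensor k C ⊤ I)
    (hI0 : I ≠ ⊥) : I ⊓ coradicalFiltration k C 1 ≠ ⊥ := by
  intro h
  have hdisjoint : ∀ n, I ⊓ coradicalFiltration k C n = ⊥ := fun n => by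
    induction n with
    | zero => exact eq_bot_mono (inf_le_inf_left I (coradicalFiltration_monotone k C zero_le_one)) h
    | succ n ih =>
      exact eq_bot_mono (le_inf inf_le_left (inf_coradicalFiltration_succ_le_one hI ih)) h
  refine hI0 ((Submodule.eq_bot_iff I).mpr fun x hx => ?_)
  obtain ⟨n, hn⟩ := exists_mem_coradicalFiltration k x
  exact (Submodule.mem_bot k).mp (hdisjoint n ▸ ⟨hx, hn⟩)

/-- **Statement 4**: if `I` is a nonzero coideal of a coalgebra `C`, then `I ∩ C₁ ≠ 0`. -/
theorem coideal_inf_coradicalFiltration_one_ne_bot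
    (k : Type*) [Field k] [IsAlgClosed k] [CharZero k]
    (C : Type*) [AddCommGroup C] [Module k C] [Coalgebra k C]
    (I : Submodule k C) (hI : IsCoideal k C I) (hI0 : I ≠ ⊥) :
    I ⊓ coradicalFiltration k C 1 ≠ ⊥ :=
  coideal_inf_coradicalFiltration_one_ne_bot_general I hI.2 hI0
end

section
/- Let G be a group such that 2 ≤ GKdim k[G] < ∞. Then G has a subgroup isomorphic to ℤ². -/
open scoped TensorProduct ENNReal

/-- The Gelfand–Kirillov dimension of a `k`-algebra `A`:
`sup_V limsup_n log_n (dim_k V^n)` over finite-dimensional subspaces `V ⊆ A`,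
as an extended nonnegative real. -/
noncomputable def gkDim (k A : Type*) [Field k] [Ring A] [Algebra k A] : ℝ≥0∞ :=
  ⨆ V : {V : Submodule k A // FiniteDimensional k V},
    Filter.limsup
      (fun n : ℕ =>
        ENNReal.ofReal (Real.logb n (Module.finrank k ((V : Submodule k A) ^ n : Submodule k A))))
      Filter.atTop

/-!
Finite Gelfand–Kirillov dimension of `k[G]` means that `G` has polynomial growth. As in Ozawa's
proof of Gromov's theorem, an infinite finitely generated group of polynomial growth carries a
nonzero harmonic cocycle with values in an orthogonal representation, and the growth condition
forces it to have a nonzero finite-dimensional component. The image of that representation is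
virtually abelian. If it is infinite, it gives a map from a subgroup of finite index onto `ℤ`; if it
is finite, the cocycle restricts to such a map.

The kernel of that map is finitely generated, of growth degree one less. By induction on the degree,
it contains `ℤ²` or is virtually cyclic. If it is virtually infinite cyclic, a power of its
generator commutes with the square of a lift of `1 ∈ ℤ`, and the two generate `ℤ²`; if it is finite,
the group is virtually cyclic. So without `ℤ²` in `G` every finitely generated subgroup is virtually
cyclic, `G` grows linearly, and the dimension is at most one.
-/

namespace PolynomialGrowth

section RandomWalk

open scoped Pointwise
open Finset Filter

lemma cast_card_pos {α : Type*} {S : Finset α} (hS : S.Nonempty) : (0 : ℝ) < #S := by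
  exact_mod_cast hS.card_pos

variable {G : Type*} [Group G]

/-- The expectation `F ↦ 𝔼 F(s₁ ⋯ sₙ)` at time `n` of the random walk on `G` started at `1`, whose
steps `sᵢ` are independent and uniform in `S`. -/
noncomputable def walkMean (S : Finset G) : ℕ → (G → ℝ) →ₗ[ℝ] ℝ
  | 0 => LinearMap.proj 1
  | n + 1 => (#S : ℝ)⁻¹ • ∑ s ∈ S, walkMean S n ∘ₗ LinearMap.funLeft ℝ ℝ (s * ·)

/-- Functions on `G` satisfying the mean value property for the steps in `S`, for the random walk
`x ↦ x * s`. -/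
def RightHarmonic (S : Finset G) (f : G → ℝ) : Prop :=
  ∀ x, ∑ s ∈ S, f (x * s) = #S * f x

variable {S : Finset G}

@[simp]
lemma walkMean_zero_apply (F : G → ℝ) : walkMean S 0 F = F 1 := rfl

lemma walkMean_succ_apply (n : ℕ) (F : G → ℝ) :
    walkMean S (n + 1) F = (∑ s ∈ S, walkMean S n fun x => F (s * x)) / #S := by
  simp only [walkMean, LinearMap.smul_apply, LinearMap.sum_apply, LinearMap.comp_apply,
    smul_eq_mul, div_eq_inv_mul]
  rfl

lemma walkMean_mono (n : ℕ) : Monotone (walkMean S n) := by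
  induction n with
  | zero => exact fun _ _ h => h 1
  | succ n ih =>
    intro F F' h
    simp only [walkMean_succ_apply]
    gcongr
    exact ih fun x => h _

lemma walkMean_nonneg (n : ℕ) {F : G → ℝ} (h : 0 ≤ F) : 0 ≤ walkMean S n F := by
  simpa using walkMean_mono (S := S) n h

lemma abs_walkMean_le (n : ℕ) {F F' : G → ℝ} (h : ∀ x, |F x| ≤ F' x) :
    |walkMean S n F| ≤ walkMean S n F' := by
  rw [abs_le, ← map_neg]
  exact ⟨walkMean_mono n fun x => (abs_le.1 (h x)).1, walkMean_mono n fun x => (abs_le.1 (h x)).2⟩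

lemma walkMean_const (hS : S.Nonempty) (n : ℕ) (c : ℝ) : walkMean S n (fun _ => c) = c := by
  induction n with
  | zero => rfl
  | succ n ih =>
    rw [walkMean_succ_apply, ih, sum_const, nsmul_eq_mul,
      mul_div_cancel_left₀ _ (cast_card_pos hS).ne']

lemma walkMean_succ_right (n : ℕ) (F : G → ℝ) :
    walkMean S (n + 1) F = walkMean S n (fun x => ∑ s ∈ S, F (x * s)) / #S := by
  induction n generalizing F with
  | zero => simp [walkMean_succ_apply]
  | succ n ih =>
    rw [walkMean_succ_apply, walkMean_succ_apply]
    simp_rw [ih, ← sum_div, mul_assoc]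

lemma walkMean_mul_left_le (n : ℕ) {F : G → ℝ} (hF : 0 ≤ F) {s : G} (hs : s ∈ S) :
    walkMean S n (fun x => F (s * x)) ≤ #S * walkMean S (n + 1) F := by
  rw [walkMean_succ_apply, mul_div_cancel₀ _ (cast_card_pos ⟨s, hs⟩).ne']
  exact single_le_sum (f := fun s => walkMean S n fun x => F (s * x))
    (fun s _ => walkMean_nonneg _ fun x => hF (s * x)) hs

lemma RightHarmonic.walkMean_mul_left (hS : S.Nonempty) {f : G → ℝ} (hf : RightHarmonic S f)
    (n : ℕ) (g : G) : walkMean S n (fun x => f (g * x)) = f g := by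
  induction n with
  | zero => simp
  | succ n ih =>
    have hmean : (fun x => ∑ s ∈ S, f (g * (x * s))) = (#S : ℝ) • fun x => f (g * x) :=
      by
      ext x
      simpa only [mul_assoc, Pi.smul_apply, smul_eq_mul] using hf (g * x)
    rw [walkMean_succ_right, hmean, map_smul, ih, smul_eq_mul,
      mul_div_cancel_left₀ _ (cast_card_pos hS).ne']

variable [DecidableEq G]

/-- The probability that the random walk with uniform steps in `S` is at `x` at time `n`. -/
noncomputable def walkProb (S : Finset G) (n : ℕ) (x : G) : ℝ :=
  walkMean S n (Pi.single x 1)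

/-- The Shannon entropy at time `n` of the random walk with uniform steps in `S`. -/
noncomputable def walkEntropy (S : Finset G) (n : ℕ) : ℝ :=
  ∑ x ∈ S ^ n, Real.negMulLog (walkProb S n x)

lemma walkProb_nonneg (n : ℕ) (x : G) : 0 ≤ walkProb S n x :=
  walkMean_nonneg n (Pi.single_nonneg.2 zero_le_one)

lemma walkProb_zero (x : G) : walkProb S 0 x = if x = 1 then 1 else 0 := by
  simp [walkProb, Pi.single_apply, eq_comm]

lemma walkProb_succ (n : ℕ) (x : G) :
    walkProb S (n + 1) x = (∑ s ∈ S, walkProb S n (s⁻¹ * x)) / #S := by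
  have hsingle : ∀ s : G, (fun y => (Pi.single x 1 : G → ℝ) (s * y)) = Pi.single (s⁻¹ * x) 1 := by
    intro s
    ext y
    simp [Pi.single_apply, eq_inv_mul_iff_mul_eq]
  simp only [walkProb, walkMean_succ_apply, hsingle]

lemma walkProb_eq_zero {n : ℕ} {x : G} (hx : x ∉ S ^ n) : walkProb S n x = 0 := by
  induction n generalizing x with
  | zero => simpa [walkProb_zero] using hx
  | succ n ih =>
    rw [walkProb_succ, sum_eq_zero, zero_div]
    refine fun s hs => ih fun h => hx ?_
    rw [pow_succ']
    exact mem_mul.2 ⟨s, hs, _, h, mul_inv_cancel_left s x⟩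

lemma sum_pow_succ_shift {n : ℕ} {F : G → ℝ} (hF : ∀ x ∉ S ^ n, F x = 0) {s : G} (hs : s ∈ S) :
    ∑ x ∈ S ^ (n + 1), F (s⁻¹ * x) = ∑ x ∈ S ^ n, F x := by
  refine (sum_of_injOn (s * ·) (mul_right_injective s).injOn (fun x hx => ?_)
    (fun x _ hx => hF _ fun h => hx ⟨_, h, mul_inv_cancel_left s x⟩)
    (fun x _ => by rw [inv_mul_cancel_left])).symm
  rw [pow_succ']
  exact mul_mem_mul hs hx

lemma walkMean_eq_sum (n : ℕ) (F : G → ℝ) :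
    walkMean S n F = ∑ x ∈ S ^ n, walkProb S n x * F x := by
  induction n generalizing F with
  | zero => simp [walkProb_zero, ← Finset.singleton_one]
  | succ n ih =>
    simp only [walkMean_succ_apply, walkProb_succ, ih, div_mul_eq_mul_div, sum_mul, ← sum_div]
    rw [sum_comm (s := S ^ (n + 1))]
    congr 1
    refine sum_congr rfl fun s hs => ?_
    simpa using (sum_pow_succ_shift (F := fun x => walkProb S n x * F (s * x))
      (fun x hx => by rw [walkProb_eq_zero hx, zero_mul]) hs).symm

lemma sum_walkProb (hS : S.Nonempty) (n : ℕ) : ∑ x ∈ S ^ n, walkProb S n x = 1 := by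
  simpa [walkMean_const hS] using (walkMean_eq_sum (S := S) n fun _ => 1).symm

lemma sum_walkProb_inv_mul (n : ℕ) {s : G} (hs : s ∈ S) (F : G → ℝ) :
    ∑ x ∈ S ^ (n + 1), walkProb S n (s⁻¹ * x) * F x = walkMean S n fun x => F (s * x) := by
  rw [walkMean_eq_sum]
  simpa using sum_pow_succ_shift (F := fun x => walkProb S n x * F (s * x))
    (fun x hx => by rw [walkProb_eq_zero hx, zero_mul]) hs

lemma sq_sqrt_sub_sqrt_le {a c : ℝ} (ha : 0 ≤ a) (hc : 0 ≤ c) (h : c = 0 → a = 0) :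
    (√a - √c) ^ 2 + (Real.log c + 1) * (a - c) ≤ Real.negMulLog c - Real.negMulLog a := by
  rcases hc.eq_or_lt with rfl | hc'
  · simp [h rfl]
  rcases ha.eq_or_lt with rfl | ha'
  · simp [Real.negMulLog, Real.sq_sqrt hc]; linarith
  have hlog := Real.log_le_sub_one_of_pos (div_pos (Real.sqrt_pos.2 hc') (Real.sqrt_pos.2 ha'))
  rw [Real.log_div (by positivity) (by positivity), Real.log_sqrt hc, Real.log_sqrt ha] at hlog
  have hratio : a * (√c / √a) = √a * √c := by
    rw [mul_div_assoc', div_eq_iff (by positivity)]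
    linear_combination (-√c) * Real.sq_sqrt ha
  simp only [Real.negMulLog]
  nlinarith [mul_le_mul_of_nonneg_left hlog ha, Real.sq_sqrt ha, Real.sq_sqrt hc]

lemma card_mul_entropy_increment_eq (hS : S.Nonempty) (n : ℕ) :
    #S * (walkEntropy S (n + 1) - walkEntropy S n) =
      ∑ x ∈ S ^ (n + 1), ∑ s ∈ S, (Real.negMulLog (walkProb S (n + 1) x) -
        Real.negMulLog (walkProb S n (s⁻¹ * x)) -
        (Real.log (walkProb S (n + 1) x) + 1) *
          (walkProb S n (s⁻¹ * x) - walkProb S (n + 1) x)) := by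
  have hmean : ∀ x, ∑ s ∈ S, (Real.log (walkProb S (n + 1) x) + 1) *
      (walkProb S n (s⁻¹ * x) - walkProb S (n + 1) x) = 0 := by
    intro x
    rw [← mul_sum, sum_sub_distrib, sum_const, nsmul_eq_mul, walkProb_succ,
      mul_div_cancel₀ _ (cast_card_pos hS).ne', sub_self, mul_zero]
  simp_rw [sum_sub_distrib (s := S) _ fun _ => _ * (_ - _), hmean, sub_zero]
  rw [sum_comm]
  simp_rw [sum_sub_distrib]
  rw [sum_congr rfl fun s hs => sum_pow_succ_shift (F := fun x => Real.negMulLog (walkProb S n x))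
    (fun x hx => by rw [walkProb_eq_zero hx, Real.negMulLog_zero]) hs]
  simp [walkEntropy, mul_sub]

/-- A quantitative form of the concavity of entropy, in terms of the Hellinger distance. -/
lemma sum_sq_sqrt_sub_le_entropy (hS : S.Nonempty) (n : ℕ) :
    ∑ s ∈ S, ∑ x ∈ S ^ (n + 1), (√(walkProb S n (s⁻¹ * x)) - √(walkProb S (n + 1) x)) ^ 2 ≤
      #S * (walkEntropy S (n + 1) - walkEntropy S n) := by
  rw [card_mul_entropy_increment_eq hS, sum_comm]
  refine sum_le_sum fun x _ => sum_le_sum fun s hs => ?_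
  rw [le_sub_iff_add_le]
  refine sq_sqrt_sub_sqrt_le (walkProb_nonneg _ _) (walkProb_nonneg _ _) fun h0 => ?_
  rw [walkProb_succ, div_eq_zero_iff, or_iff_left (cast_card_pos hS).ne',
    sum_eq_zero_iff_of_nonneg fun _ _ => walkProb_nonneg _ _] at h0
  exact h0 s hs

lemma RightHarmonic.apply_eq_sum (hS : S.Nonempty) {f : G → ℝ} (hf : RightHarmonic S f)
    (hf1 : f 1 = 0) (n : ℕ) {s : G} (hs : s ∈ S) :
    f s = ∑ x ∈ S ^ (n + 1), (√(walkProb S n (s⁻¹ * x)) - √(walkProb S (n + 1) x)) *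
      ((√(walkProb S n (s⁻¹ * x)) + √(walkProb S (n + 1) x)) * f x) := by
  have hshift := sum_walkProb_inv_mul n hs f
  rw [hf.walkMean_mul_left hS] at hshift
  have hcenter := hf.walkMean_mul_left hS (n + 1) 1
  simp only [one_mul, hf1, walkMean_eq_sum] at hcenter
  rw [← hshift, ← sub_zero (∑ x ∈ _, _), ← hcenter, ← sum_sub_distrib]
  refine sum_congr rfl fun x _ => ?_
  linear_combination (-f x) * Real.sq_sqrt (walkProb_nonneg (S := S) n (s⁻¹ * x)) +
    f x * Real.sq_sqrt (walkProb_nonneg (S := S) (n + 1) x)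

lemma sum_sq_sqrt_add_mul_le (f : G → ℝ) (n : ℕ) {s : G} (hs : s ∈ S) :
    ∑ x ∈ S ^ (n + 1),
        ((√(walkProb S n (s⁻¹ * x)) + √(walkProb S (n + 1) x)) * f x) ^ 2 ≤
      2 * (#S + 1) * walkMean S (n + 1) (fun x => f x ^ 2) := by
  have hsqrt : ∀ a c : ℝ, 0 ≤ a → 0 ≤ c → (√a + √c) ^ 2 ≤ 2 * a + 2 * c := fun a c ha hc => by
    nlinarith [sq_nonneg (√a - √c), Real.sq_sqrt ha, Real.sq_sqrt hc]
  calc _ ≤ ∑ x ∈ S ^ (n + 1), (2 * (walkProb S n (s⁻¹ * x) * f x ^ 2) +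
          2 * (walkProb S (n + 1) x * f x ^ 2)) := by
        refine sum_le_sum fun x _ => ?_
        rw [mul_pow, ← mul_assoc, ← mul_assoc, ← add_mul]
        gcongr
        exact hsqrt _ _ (walkProb_nonneg _ _) (walkProb_nonneg _ _)
    _ = 2 * walkMean S n (fun x => f (s * x) ^ 2) +
          2 * walkMean S (n + 1) (fun x => f x ^ 2) := by
        rw [sum_add_distrib, ← mul_sum, ← mul_sum, sum_walkProb_inv_mul n hs fun x => f x ^ 2,
          walkMean_eq_sum (n + 1)]
    _ ≤ _ := by linarith [walkMean_mul_left_le n (fun x => sq_nonneg (f x)) hs]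

lemma RightHarmonic.sq_le_entropy (hS : S.Nonempty) {f : G → ℝ} (hf : RightHarmonic S f)
    (hf1 : f 1 = 0) (n : ℕ) {s : G} (hs : s ∈ S) :
    f s ^ 2 ≤ (#S * (walkEntropy S (n + 1) - walkEntropy S n)) *
      (2 * (#S + 1) * walkMean S (n + 1) (fun x => f x ^ 2)) := by
  have hhellinger : ∑ x ∈ S ^ (n + 1),
      (√(walkProb S n (s⁻¹ * x)) - √(walkProb S (n + 1) x)) ^ 2 ≤
        #S * (walkEntropy S (n + 1) - walkEntropy S n) :=
    (single_le_sum (f := fun s => ∑ x ∈ S ^ (n + 1),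
      (√(walkProb S n (s⁻¹ * x)) - √(walkProb S (n + 1) x)) ^ 2)
      (fun s _ => sum_nonneg fun x _ => sq_nonneg _) hs).trans (sum_sq_sqrt_sub_le_entropy hS n)
  calc f s ^ 2 ≤ _ := by
        rw [hf.apply_eq_sum hS hf1 n hs]
        exact sum_mul_sq_le_sq_mul_sq _ _ _
    _ ≤ _ := mul_le_mul hhellinger (sum_sq_sqrt_add_mul_le f n hs)
      (sum_nonneg fun _ _ => sq_nonneg _) ((sum_nonneg fun _ _ => sq_nonneg _).trans hhellinger)

lemma walkEntropy_le_log_card (hS : S.Nonempty) (n : ℕ) :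
    walkEntropy S n ≤ Real.log #(S ^ n) := by
  have hN := cast_card_pos (hS.pow (n := n))
  have hgibbs : ∀ x ∈ S ^ n, Real.negMulLog (walkProb S n x) ≤
      walkProb S n x * Real.log #(S ^ n) + ((#(S ^ n) : ℝ)⁻¹ - walkProb S n x) := by
    intro x _
    rcases (walkProb_nonneg (S := S) n x).eq_or_lt with h | h
    · rw [← h]; simp
    · have hlog := Real.log_le_sub_one_of_pos (inv_pos.2 (mul_pos h hN))
      rw [Real.log_inv, Real.log_mul h.ne' hN.ne'] at hlog
      have hmul := mul_le_mul_of_nonneg_left hlog h.le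
      rw [mul_sub, mul_inv, mul_inv_cancel_left₀ h.ne'] at hmul
      simp only [Real.negMulLog]
      linarith
  refine (sum_le_sum hgibbs).trans ?_
  rw [sum_add_distrib, ← sum_mul, sum_sub_distrib, sum_walkProb hS]
  simp [hN.ne']

lemma log_add_one_sub_log_le (n : ℕ) :
    Real.log ((n + 1 : ℕ) + 1) - Real.log (n + 1) ≤ 1 / (n + 1) := by
  rw [← Real.log_div (by positivity) (by positivity)]
  refine (Real.log_le_sub_one_of_pos (by positivity)).trans_eq ?_
  push_cast
  field_simp
  ring

lemma frequently_increment_le_of_le_log {u : ℕ → ℝ} {A : ℝ} {d : ℕ}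
    (hu : ∀ n : ℕ, u n ≤ A + d * Real.log (n + 1)) :
    ∃ᶠ n : ℕ in atTop, u (n + 1) - u n ≤ (d + 1) / (n + 1) := by
  intro hev
  obtain ⟨N, hN⟩ := eventually_atTop.1 hev
  simp only [not_le] at hN
  have hmono : ∀ n ≥ N, u N - (d + 1) * Real.log (N + 1) ≤ u n - (d + 1) * Real.log (n + 1) := by
    intro n hn
    induction n, hn using Nat.le_induction with
    | base => exact le_rfl
    | succ n hn ih =>
      have hlog := mul_le_mul_of_nonneg_left (log_add_one_sub_log_le n)
        (by positivity : (0 : ℝ) ≤ d + 1)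
      rw [mul_one_div] at hlog
      linarith [hN n hn]
  have hlim : Tendsto (fun n : ℕ => Real.log ((n : ℝ) + 1)) atTop atTop :=
    Real.tendsto_log_atTop.comp (tendsto_atTop_add_const_right _ _ tendsto_natCast_atTop_atTop)
  obtain ⟨n, hlarge, hn⟩ := ((hlim.eventually_gt_atTop
    (A - (u N - (d + 1) * Real.log (N + 1)))).and (eventually_ge_atTop N)).exists
  linarith [hmono n hn, hu n]

lemma frequently_entropy_increment_le (hS : S.Nonempty) {C d : ℕ}
    (hC : ∀ n, #(S ^ n) ≤ C * (n + 1) ^ d) :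
    ∃ᶠ n : ℕ in atTop, walkEntropy S (n + 1) - walkEntropy S n ≤ (d + 1) / (n + 1) := by
  have hCpos : (0 : ℝ) < C := by
    have hC0 := (hS.pow (n := 0)).card_pos.trans_le (hC 0)
    rw [zero_add, one_pow, mul_one] at hC0
    exact_mod_cast hC0
  refine frequently_increment_le_of_le_log (A := Real.log C) fun n => ?_
  rw [← Real.log_pow, ← Real.log_mul hCpos.ne' (by positivity)]
  exact (walkEntropy_le_log_card hS n).trans
    (Real.log_le_log (cast_card_pos hS.pow) (by exact_mod_cast hC n))

theorem frequently_le_walkMean_sq (hS : S.Nonempty) {C d : ℕ}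
    (hC : ∀ n, #(S ^ n) ≤ C * (n + 1) ^ d) :
    ∃ c > (0 : ℝ), ∃ᶠ n : ℕ in atTop, ∀ f : G → ℝ, RightHarmonic S f → f 1 = 0 → ∀ s ∈ S,
      c * f s ^ 2 * n ≤ walkMean S n (fun x => f x ^ 2) := by
  have := cast_card_pos hS
  refine ⟨(#S * (d + 1) * (2 * (#S + 1)))⁻¹, by positivity, (tendsto_add_atTop_nat 1).frequently
    ((frequently_entropy_increment_le hS hC).mono fun n hn f hf hf1 s hs => ?_)⟩
  have hpos : 0 ≤ walkMean S (n + 1) fun x => f x ^ 2 := walkMean_nonneg _ fun _ => sq_nonneg _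
  have hle : f s ^ 2 ≤ (#S * ((d + 1) / (n + 1))) *
      (2 * (#S + 1) * walkMean S (n + 1) (fun x => f x ^ 2)) :=
    (hf.sq_le_entropy hS hf1 n hs).trans (by gcongr)
  push_cast
  rw [mul_assoc, inv_mul_le_iff₀ (by positivity)]
  calc f s ^ 2 * (n + 1) ≤ (#S * ((d + 1) / (n + 1))) *
      (2 * (#S + 1) * walkMean S (n + 1) (fun x => f x ^ 2)) * (n + 1) := by gcongr
    _ = _ := by field_simp

end RandomWalk

section PositiveOperators

open Filter Topology Submodule RCLike

variable {𝕜 E : Type*} [RCLike 𝕜] [NormedAddCommGroup E] [InnerProductSpace 𝕜 E]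

lemma exists_orthonormal_of_forall_finiteDimensional {P : E → Prop}
    (h : ∀ F : Submodule 𝕜 E, FiniteDimensional 𝕜 F → ∃ v ∈ Fᗮ, ‖v‖ = 1 ∧ P v) (n : ℕ) :
    ∃ v : Fin n → E, Orthonormal 𝕜 v ∧ ∀ i, P (v i) := by
  induction n with
  | zero => exact ⟨Fin.elim0, ⟨fun i => i.elim0, fun i => i.elim0⟩, fun i => i.elim0⟩
  | succ n ih =>
    obtain ⟨v, hv, hP⟩ := ih
    obtain ⟨u, hu, hu1, hPu⟩ := h (span 𝕜 (Set.range v))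
      (FiniteDimensional.span_of_finite 𝕜 (Set.finite_range v))
    have hvu : ∀ i, inner 𝕜 (v i) u = 0 := fun i => hu _ (subset_span ⟨i, rfl⟩)
    refine ⟨Fin.cons u v, ⟨Fin.cases hu1 hv.1, ?_⟩, Fin.cases hPu hP⟩
    refine Fin.cases (Fin.cases (fun h => (h rfl).elim) fun j _ => inner_eq_zero_symm.1 (hvu j))
      fun i => Fin.cases (fun _ => hvu i) fun j hij => hv.2 fun h => hij (congrArg Fin.succ h)

lemma norm_apply_sq_le_of_isPositive {T : E →L[𝕜] E} (hT : T.IsPositive) (x : E) :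
    ‖T x‖ ^ 2 ≤ ‖T‖ * re (inner 𝕜 (T x) x) := by
  rcases (norm_nonneg T).eq_or_lt with h0 | h0
  · simp [norm_eq_zero.1 h0.symm]
  have hquad : 0 ≤ re (inner 𝕜 (T x) x) - 2 * ‖T‖⁻¹ * ‖T x‖ ^ 2 +
      ‖T‖⁻¹ ^ 2 * re (inner 𝕜 (T (T x)) (T x)) := by
    have h := hT.re_inner_nonneg_left (x - (‖T‖⁻¹ : 𝕜) • T x)
    have hcross : inner 𝕜 (T (T x)) x = inner 𝕜 (T x) (T x) := hT.isSymmetric (T x) x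
    simp only [map_sub, map_smul, inner_sub_left, inner_sub_right, inner_smul_left,
      inner_smul_right, hcross, inner_self_eq_norm_sq_to_K, map_inv₀, conj_ofReal] at h
    norm_cast at h
    simp only [map_sub, re_ofReal_mul, ofReal_re] at h
    linarith
  have htop : re (inner 𝕜 (T (T x)) (T x)) ≤ ‖T‖ * ‖T x‖ ^ 2 :=
    calc _ ≤ ‖T (T x)‖ * ‖T x‖ := re_inner_le_norm _ _
      _ ≤ ‖T‖ * ‖T x‖ * ‖T x‖ := by gcongr; exact T.le_opNorm _
      _ = _ := by ring
  have hle := mul_le_mul_of_nonneg_left htop (sq_nonneg ‖T‖⁻¹)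
  have hcancel : ‖T‖⁻¹ ^ 2 * (‖T‖ * ‖T x‖ ^ 2) = ‖T‖⁻¹ * ‖T x‖ ^ 2 := by field_simp
  rw [← inv_mul_le_iff₀ h0]
  linarith

lemma exists_finiteDimensional_forall_orthogonal_inner_le {T : E →L[𝕜] E} {c ε : ℝ}
    (htrace : ∀ (n : ℕ) (v : Fin n → E), Orthonormal 𝕜 v → ∑ i, re (inner 𝕜 (T (v i)) (v i)) ≤ c)
    (hε : 0 < ε) :
    ∃ F : Submodule 𝕜 E, FiniteDimensional 𝕜 F ∧
      ∀ v ∈ Fᗮ, re (inner 𝕜 (T v) v) ≤ ε * ‖v‖ ^ 2 := by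
  by_contra! hcon
  have hunit : ∀ F : Submodule 𝕜 E, FiniteDimensional 𝕜 F →
      ∃ v ∈ Fᗮ, ‖v‖ = 1 ∧ ε ≤ re (inner 𝕜 (T v) v) := by
    intro F hF
    obtain ⟨v, hvF, hv⟩ := hcon F hF
    have hv0 : v ≠ 0 := by rintro rfl; simp at hv
    refine ⟨(‖v‖⁻¹ : 𝕜) • v, Fᗮ.smul_mem _ hvF, norm_smul_inv_norm hv0, ?_⟩
    rw [map_smul, inner_smul_left, inner_smul_right, ← mul_assoc, map_inv₀, conj_ofReal]
    norm_cast
    rw [re_ofReal_mul, ← mul_inv, ← sq, le_inv_mul_iff₀ (by positivity), mul_comm]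
    exact hv.le
  obtain ⟨n, hn⟩ := exists_nat_gt (c / ε)
  obtain ⟨v, hv, hP⟩ := exists_orthonormal_of_forall_finiteDimensional hunit n
  have hsum := (Finset.card_nsmul_le_sum Finset.univ _ ε fun i _ => hP i).trans (htrace n v hv)
  rw [div_lt_iff₀ hε] at hn
  simp only [Finset.card_univ, Fintype.card_fin, nsmul_eq_mul] at hsum
  linarith

/-- A positive operator with bounded trace is a norm limit of finite-rank operators. -/
theorem isCompactOperator_of_forall_sum_inner_le [CompleteSpace E] {T : E →L[𝕜] E}
    (hT : T.IsPositive) {c : ℝ}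
    (htrace : ∀ (n : ℕ) (v : Fin n → E), Orthonormal 𝕜 v →
      ∑ i, re (inner 𝕜 (T (v i)) (v i)) ≤ c) :
    IsCompactOperator T := by
  refine isClosed_setOfPred_isCompactOperator.closure_subset
    (Metric.mem_closure_iff.2 fun ε hε => ?_)
  obtain ⟨F, hF, hsmall⟩ := exists_finiteDimensional_forall_orthogonal_inner_le htrace
    (show 0 < (ε / 2) ^ 2 / (‖T‖ + 1) by positivity)
  refine ⟨T ∘L F.starProjection, ?_, ?_⟩
  · have := FiniteDimensional.proper 𝕜 F
    have hfin : IsCompactOperator (T ∘L F.subtypeL) :=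
      isCompactOperator_of_locallyCompactSpace_rng (T ∘L F.subtypeL)
    exact hfin.comp_clm F.orthogonalProjectionOnto
  · rw [dist_eq_norm]
    refine (ContinuousLinearMap.opNorm_le_bound _ (by positivity) fun v => ?_).trans_lt
      (half_lt_self hε)
    have hperp : v - F.starProjection v ∈ Fᗮ := sub_starProjection_mem_orthogonal v
    have hsq : ‖T (v - F.starProjection v)‖ ^ 2 ≤ (ε / 2 * ‖v - F.starProjection v‖) ^ 2 := by
      refine (norm_apply_sq_le_of_isPositive hT _).trans ?_
      calc _ ≤ (‖T‖ + 1) * ((ε / 2) ^ 2 / (‖T‖ + 1) * ‖v - F.starProjection v‖ ^ 2) := by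
            gcongr
            · exact hT.re_inner_nonneg_left _
            · linarith
            · exact hsmall _ hperp
        _ = _ := by field_simp
    have hproj : ‖v - F.starProjection v‖ ≤ ‖v‖ := by
      rw [← starProjection_orthogonal_val]
      exact Fᗮ.norm_starProjection_apply_le v
    calc ‖(T - T ∘L F.starProjection) v‖ = ‖T (v - F.starProjection v)‖ := by simp
      _ ≤ ε / 2 * ‖v - F.starProjection v‖ := le_of_sq_le_sq hsq (by positivity)
      _ ≤ ε / 2 * ‖v‖ := by gcongr

lemma hasEigenvalue_norm_of_isPositive [CompleteSpace E] {T : E →L[𝕜] E} (hT : T.IsPositive)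
    (hcomp : IsCompactOperator T) (h0 : T ≠ 0) :
    Module.End.HasEigenvalue (T : Module.End 𝕜 E) (‖T‖ : 𝕜) := by
  have hnorm : (‖T‖ : 𝕜) ≠ 0 := by simpa using h0
  have : Nontrivial E := by
    obtain ⟨x, hx⟩ := DFunLike.ne_iff.1 h0
    exact ⟨_, _, hx⟩
  rw [hcomp.hasEigenvalue_iff_mem_spectrum hnorm]
  by_contra hres
  obtain ⟨ε, hε, hle⟩ :=
    T.rayleighQuotient_le_of_norm_mem_resolventSet (spectrum.notMem_iff.1 hres)
  have hpos : ∀ x, 0 ≤ T.rayleighQuotient x := fun x =>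
    div_nonneg (hT.re_inner_nonneg_left x) (sq_nonneg _)
  have hsup := T.norm_eq_iSup_rayleighQuotient hT.isSymmetric
  have := ciSup_le fun x => (abs_of_nonneg (hpos x)).trans_le (hle x)
  linarith

lemma re_inner_apply_self_le_norm (T : E →L[𝕜] E) (v : E) :
    re (inner 𝕜 (T v) v) ≤ ‖T‖ * ‖v‖ ^ 2 :=
  calc _ ≤ ‖T v‖ * ‖v‖ := re_inner_le_norm _ _
    _ ≤ ‖T‖ * ‖v‖ * ‖v‖ := by gcongr; exact T.le_opNorm _
    _ = _ := by ring

lemma mem_eigenspace_norm_iff {T : E →L[𝕜] E} {v : E} :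
    v ∈ Module.End.eigenspace (T : Module.End 𝕜 E) (‖T‖ : 𝕜) ↔
      re (inner 𝕜 (T v) v) = ‖T‖ * ‖v‖ ^ 2 := by
  rw [Module.End.mem_eigenspace_iff, ContinuousLinearMap.coe_coe]
  constructor
  · intro h
    rw [h, inner_smul_left, conj_ofReal, re_ofReal_mul, inner_self_eq_norm_sq]
  · intro h
    have hTv : ‖T v‖ ^ 2 ≤ (‖T‖ * ‖v‖) ^ 2 := by gcongr; exact T.le_opNorm v
    have hdist : ‖T v - (‖T‖ : 𝕜) • v‖ ^ 2 ≤ 0 := by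
      rw [@norm_sub_sq 𝕜, inner_smul_right, re_ofReal_mul, h, norm_smul, norm_ofReal, abs_norm]
      linarith
    exact sub_eq_zero.1 (norm_eq_zero.1 (pow_eq_zero_iff two_ne_zero |>.1
      (hdist.antisymm (sq_nonneg _))))

end PositiveOperators

section BilinearForms

open Filter Topology

lemma exists_tendsto_ultrafilter_of_bounded {ι : Type*} (ω : Ultrafilter ι) {a : ι → ℝ} {C : ℝ}
    (h : ∀ i, |a i| ≤ C) : ∃ L, Tendsto a ω (𝓝 L) := by
  obtain ⟨L, -, hL⟩ := (isCompact_Icc (a := -C) (b := C)).ultrafilter_le_nhds (ω.map a)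
    (le_principal_iff.2 (mem_map.2 (univ_mem' fun i => abs_le.1 (h i))))
  exact ⟨L, hL⟩

lemma exists_bilinForm_tendsto_ultrafilter {ι X : Type*} [AddCommGroup X] [Module ℝ X]
    (ω : Ultrafilter ι) (B : ι → LinearMap.BilinForm ℝ X)
    (hB : ∀ v w, ∃ C, ∀ i, |B i v w| ≤ C) :
    ∃ q : LinearMap.BilinForm ℝ X, ∀ v w, Tendsto (fun i => B i v w) ω (𝓝 (q v w)) := by
  choose Q hQ using fun v w => exists_tendsto_ultrafilter_of_bounded ω (hB v w).choose_spec
  have hQ_eq : ∀ {v w L}, Tendsto (fun i => B i v w) ω (𝓝 L) → Q v w = L :=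
    fun h => tendsto_nhds_unique (hQ _ _) h
  refine ⟨LinearMap.mk₂ ℝ Q
    (fun v v' w => hQ_eq (((hQ v w).add (hQ v' w)).congr fun i => ?_))
    (fun a v w => hQ_eq (((hQ v w).const_mul a).congr fun i => ?_))
    (fun v w w' => hQ_eq (((hQ v w).add (hQ v w')).congr fun i => ?_))
    (fun a v w => hQ_eq (((hQ v w).const_mul a).congr fun i => ?_)), hQ⟩ <;> simp

lemma exists_continuousLinearMap_inner_eq {H : Type*} [NormedAddCommGroup H]
    [InnerProductSpace ℝ H] [CompleteSpace H] (q : LinearMap.BilinForm ℝ H) {κ : ℝ}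
    (hq : ∀ v w, |q v w| ≤ κ * ‖v‖ * ‖w‖) :
    ∃ T : H →L[ℝ] H, ∀ v w, inner ℝ (T v) w = q v w :=
  ⟨InnerProductSpace.continuousLinearMapOfBilin (𝕜 := ℝ) (q.mkContinuous₂ κ hq), fun v w => by
    rw [InnerProductSpace.continuousLinearMapOfBilin_apply]; rfl⟩

end BilinearForms

section HarmonicCocycle

open scoped Pointwise
open Finset Filter Topology

/-- The mean energy `𝔼 ‖b X₁‖²` of `b` at the first step `X₁` of the `S`-random walk. -/
noncomputable def stepEnergy {G H : Type*} [NormedAddCommGroup H] (S : Finset G) (b : G → H) : ℝ :=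
  (∑ s ∈ S, ‖b s‖ ^ 2) / #S

lemma stepEnergy_nonneg {G H : Type*} [NormedAddCommGroup H] {S : Finset G} {b : G → H} :
    0 ≤ stepEnergy S b := by
  unfold stepEnergy
  positivity

variable {G : Type*} [Group G] {S : Finset G} {H : Type*} [NormedAddCommGroup H]
  [InnerProductSpace ℝ H] {π : G →* (H ≃ₗᵢ[ℝ] H)} {b : G → H}

/-- A 1-cocycle of the orthogonal representation `π`, i.e. the orbit map `g ↦ g • 0` of an affine
isometric action with linear part `π`. -/
def IsCocycle (π : G →* (H ≃ₗᵢ[ℝ] H)) (b : G → H) : Prop :=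
  ∀ g h, b (g * h) = b g + π g (b h)

/-- The covariance form `(v, w) ↦ 𝔼 ⟪b Xₙ, v⟫ ⟪b Xₙ, w⟫ / n` of `b` along the `S`-random walk. -/
noncomputable def covariance (S : Finset G) (b : G → H) (n : ℕ) : LinearMap.BilinForm ℝ H :=
  LinearMap.mk₂ ℝ (fun v w => walkMean S n (fun x => inner ℝ (b x) v * inner ℝ (b x) w) / n)
    (fun v v' w => by
      rw [← add_div, ← map_add]
      simp only [inner_add_right, add_mul]
      rfl)
    (fun a v w => by
      rw [smul_eq_mul, ← mul_div_assoc, ← smul_eq_mul, ← map_smul]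
      simp only [inner_smul_right, mul_assoc]
      rfl)
    (fun v w w' => by
      rw [← add_div, ← map_add]
      simp only [inner_add_right, mul_add]
      rfl)
    (fun a v w => by
      rw [smul_eq_mul, ← mul_div_assoc, ← smul_eq_mul, ← map_smul]
      simp only [inner_smul_right, mul_left_comm _ a]
      rfl)

lemma covariance_self (n : ℕ) (v : H) :
    covariance S b n v v = walkMean S n (fun x => inner ℝ (b x) v ^ 2) / n := by
  simp only [sq]
  rfl

namespace IsCocycle

lemma map_one (hb : IsCocycle π b) : b 1 = 0 := by
  simpa using hb 1 1

lemma rightHarmonic_inner (hb : IsCocycle π b) (hharm : ∑ s ∈ S, b s = 0) (v : H) :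
    RightHarmonic S fun x => inner ℝ (b x) v := by
  intro x
  simp_rw [hb x, inner_add_left, sum_add_distrib, ← sum_inner, ← map_sum, hharm]
  simp [← Nat.cast_smul_eq_nsmul ℝ, inner_smul_left]

lemma sum_norm_sq_mul (hb : IsCocycle π b) (hharm : ∑ s ∈ S, b s = 0) (x : G) :
    ∑ s ∈ S, ‖b (x * s)‖ ^ 2 = #S * ‖b x‖ ^ 2 + ∑ s ∈ S, ‖b s‖ ^ 2 := by
  simp_rw [hb x, @norm_add_sq_real, LinearIsometryEquiv.norm_map, sum_add_distrib, ← mul_sum,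
    ← inner_sum, ← map_sum, hharm]
  simp

lemma sum_inner_sq_mul (hb : IsCocycle π b) (hharm : ∑ s ∈ S, b s = 0) (x : G) (v : H) :
    ∑ s ∈ S, inner ℝ (b (x * s)) v ^ 2 =
      #S * inner ℝ (b x) v ^ 2 + ∑ s ∈ S, inner ℝ (π x (b s)) v ^ 2 := by
  simp_rw [hb x, inner_add_left, add_sq, sum_add_distrib, ← mul_sum, ← sum_inner, ← map_sum, hharm]
  simp

lemma walkMean_norm_sq (hb : IsCocycle π b) (hS : S.Nonempty) (hharm : ∑ s ∈ S, b s = 0) (n : ℕ) :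
    walkMean S n (fun x => ‖b x‖ ^ 2) = n * stepEnergy S b := by
  have hc := (cast_card_pos hS).ne'
  induction n with
  | zero => simp [hb.map_one]
  | succ n ih =>
    have hsum : (fun x => ∑ s ∈ S, ‖b (x * s)‖ ^ 2) =
        (#S : ℝ) • (fun x => ‖b x‖ ^ 2) + fun _ => ∑ s ∈ S, ‖b s‖ ^ 2 :=
      funext (hb.sum_norm_sq_mul hharm)
    rw [walkMean_succ_right, hsum, map_add, map_smul, walkMean_const hS, ih, stepEnergy,
      smul_eq_mul]
    push_cast
    field_simp

lemma walkMean_inner_sq_succ (hb : IsCocycle π b) (hS : S.Nonempty) (hharm : ∑ s ∈ S, b s = 0)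
    (n : ℕ) (v : H) :
    walkMean S (n + 1) (fun x => inner ℝ (b x) v ^ 2) =
      (∑ s ∈ S, (inner ℝ (b s) v ^ 2 +
        walkMean S n fun x => inner ℝ (b x) (π s⁻¹ v) ^ 2)) / #S := by
  rw [walkMean_succ_apply]
  congr 1
  refine sum_congr rfl fun s _ => ?_
  have hexpand : (fun x => inner ℝ (b (s * x)) v ^ 2) = (fun _ => inner ℝ (b s) v ^ 2) +
      ((2 * inner ℝ (b s) v) • (fun x => inner ℝ (b x) (π s⁻¹ v)) +
        fun x => inner ℝ (b x) (π s⁻¹ v) ^ 2) := by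
    funext x
    have hadj : inner ℝ (π s (b x)) v = inner ℝ (b x) (π s⁻¹ v) := by
      rw [← LinearIsometryEquiv.inner_map_map (π s) (b x)]
      simp
    simp only [Pi.add_apply, Pi.smul_apply, smul_eq_mul, hb s, inner_add_left, hadj]
    ring
  have hmean := (hb.rightHarmonic_inner hharm (π s⁻¹ v)).walkMean_mul_left hS n 1
  simp only [one_mul, hb.map_one, inner_zero_left] at hmean
  rw [hexpand, map_add, map_add, map_smul, walkMean_const hS, hmean, smul_zero, zero_add]

lemma walkMean_inner_sq_succ_right (hb : IsCocycle π b) (hS : S.Nonempty)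
    (hharm : ∑ s ∈ S, b s = 0) (n : ℕ) (v : H) :
    walkMean S (n + 1) (fun x => inner ℝ (b x) v ^ 2) =
      walkMean S n (fun x => inner ℝ (b x) v ^ 2) +
        walkMean S n (fun x => ∑ s ∈ S, inner ℝ (π x (b s)) v ^ 2) / #S := by
  have hsum : (fun x => ∑ s ∈ S, inner ℝ (b (x * s)) v ^ 2) =
      (#S : ℝ) • (fun x => inner ℝ (b x) v ^ 2) +
        fun x => ∑ s ∈ S, inner ℝ (π x (b s)) v ^ 2 :=
    funext fun x => hb.sum_inner_sq_mul hharm x v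
  rw [walkMean_succ_right, hsum, map_add, map_smul, smul_eq_mul, add_div,
    mul_div_cancel_left₀ _ (cast_card_pos hS).ne']

lemma walkMean_inner_sq_le_succ (hb : IsCocycle π b) (hS : S.Nonempty) (hharm : ∑ s ∈ S, b s = 0)
    (n : ℕ) (v : H) :
    walkMean S n (fun x => inner ℝ (b x) v ^ 2) ≤
      walkMean S (n + 1) fun x => inner ℝ (b x) v ^ 2 := by
  rw [hb.walkMean_inner_sq_succ_right hS hharm]
  exact le_add_of_nonneg_right (div_nonneg
    (walkMean_nonneg n fun x => sum_nonneg fun s _ => sq_nonneg _) (Nat.cast_nonneg _))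

lemma walkMean_inner_sq_succ_le (hb : IsCocycle π b) (hS : S.Nonempty) (hharm : ∑ s ∈ S, b s = 0)
    (n : ℕ) (v : H) :
    walkMean S (n + 1) (fun x => inner ℝ (b x) v ^ 2) ≤
      walkMean S n (fun x => inner ℝ (b x) v ^ 2) + stepEnergy S b * ‖v‖ ^ 2 := by
  have hle : (fun x => ∑ s ∈ S, inner ℝ (π x (b s)) v ^ 2) ≤
      fun _ => (∑ s ∈ S, ‖b s‖ ^ 2) * ‖v‖ ^ 2 := by
    intro x
    dsimp only
    rw [sum_mul]
    refine sum_le_sum fun s _ => ?_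
    rw [← mul_pow, ← (π x).norm_map (b s), ← sq_abs]
    gcongr
    exact abs_real_inner_le_norm _ _
  have hmean := walkMean_mono (S := S) n hle
  rw [walkMean_const hS] at hmean
  rw [hb.walkMean_inner_sq_succ_right hS hharm, stepEnergy, ← mul_div_right_comm]
  gcongr

lemma walkMean_norm_sq_div_le (hb : IsCocycle π b) (hS : S.Nonempty) (hharm : ∑ s ∈ S, b s = 0)
    (n : ℕ) : walkMean S n (fun x => ‖b x‖ ^ 2) / n ≤ stepEnergy S b := by
  rw [hb.walkMean_norm_sq hS hharm]
  rcases n.eq_zero_or_pos with rfl | hn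
  · simpa using stepEnergy_nonneg
  · rw [mul_div_cancel_left₀ _ (by positivity)]

lemma abs_covariance_le (hb : IsCocycle π b) (hS : S.Nonempty) (hharm : ∑ s ∈ S, b s = 0)
    (n : ℕ) (v w : H) : |covariance S b n v w| ≤ stepEnergy S b * ‖v‖ * ‖w‖ := by
  have hpoint : ∀ x, |inner ℝ (b x) v * inner ℝ (b x) w| ≤
      ((‖v‖ * ‖w‖) • fun x => ‖b x‖ ^ 2) x := fun x =>
    calc |inner ℝ (b x) v * inner ℝ (b x) w|
        ≤ (‖b x‖ * ‖v‖) * (‖b x‖ * ‖w‖) := by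
          rw [abs_mul]
          gcongr <;> exact abs_real_inner_le_norm _ _
      _ = (‖v‖ * ‖w‖) * ‖b x‖ ^ 2 := by ring
  calc |covariance S b n v w|
      = |walkMean S n fun x => inner ℝ (b x) v * inner ℝ (b x) w| / n := by
        rw [← Nat.abs_cast n, ← abs_div]
        rfl
    _ ≤ walkMean S n ((‖v‖ * ‖w‖) • fun x => ‖b x‖ ^ 2) / n := by
        gcongr
        exact abs_walkMean_le n hpoint
    _ = walkMean S n (fun x => ‖b x‖ ^ 2) / n * ‖v‖ * ‖w‖ := by
        rw [map_smul, smul_eq_mul]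
        ring
    _ ≤ stepEnergy S b * ‖v‖ * ‖w‖ := by
        gcongr
        exact hb.walkMean_norm_sq_div_le hS hharm n

lemma sum_covariance_orthonormal_le (hb : IsCocycle π b) (hS : S.Nonempty)
    (hharm : ∑ s ∈ S, b s = 0) (n : ℕ) {ι : Type*} [Fintype ι] {v : ι → H}
    (hv : Orthonormal ℝ v) : ∑ i, covariance S b n (v i) (v i) ≤ stepEnergy S b := by
  simp_rw [covariance_self]
  rw [← sum_div, ← map_sum]
  refine le_trans ?_ (hb.walkMean_norm_sq_div_le hS hharm n)
  gcongr
  refine walkMean_mono n fun x => ?_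
  have hbessel := hv.sum_inner_products_le (s := Finset.univ) (b x)
  simpa [real_inner_comm] using hbessel

end IsCocycle

section LimitCovariance

variable {l : Filter ℕ} {T : H →L[ℝ] H}

lemma isPositive_of_tendsto_covariance [l.NeBot]
    (hT : ∀ v w, Tendsto (fun n => covariance S b n v w) l (𝓝 (inner ℝ (T v) w))) :
    T.IsPositive := by
  rw [ContinuousLinearMap.isPositive_iff]
  refine ⟨fun v w => tendsto_nhds_unique (hT v w) ?_, fun v => ge_of_tendsto (hT v v) ?_⟩
  · rw [ContinuousLinearMap.coe_coe, real_inner_comm]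
    refine (hT w v).congr fun n => ?_
    simp only [covariance, LinearMap.mk₂_apply, mul_comm]
  · refine Eventually.of_forall fun n => ?_
    rw [covariance_self]
    exact div_nonneg (walkMean_nonneg _ fun x => sq_nonneg _) (Nat.cast_nonneg n)

lemma IsCocycle.tendsto_walkMean_succ_div (hb : IsCocycle π b) (hS : S.Nonempty)
    (hharm : ∑ s ∈ S, b s = 0) (hl : l ≤ atTop) {v : H} {a : ℝ}
    (hv : Tendsto (fun n => covariance S b n v v) l (𝓝 a)) :
    Tendsto (fun n : ℕ => walkMean S (n + 1) (fun x => inner ℝ (b x) v ^ 2) / n) l (𝓝 a) := by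
  simp_rw [covariance_self] at hv
  have hupper := hv.add
    ((tendsto_const_div_atTop_nhds_zero_nat (stepEnergy S b * ‖v‖ ^ 2)).mono_left hl)
  rw [add_zero] at hupper
  refine tendsto_of_tendsto_of_tendsto_of_le_of_le hv hupper (fun n => ?_) fun n => ?_
  · dsimp only
    gcongr
    exact hb.walkMean_inner_sq_le_succ hS hharm n v
  · dsimp only
    rw [← add_div]
    gcongr
    exact hb.walkMean_inner_sq_succ_le hS hharm n v

lemma IsCocycle.sum_inner_of_tendsto_covariance [l.NeBot] (hb : IsCocycle π b)
    (hS : S.Nonempty) (hharm : ∑ s ∈ S, b s = 0) (hl : l ≤ atTop)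
    (hT : ∀ v w, Tendsto (fun n => covariance S b n v w) l (𝓝 (inner ℝ (T v) w))) (v : H) :
    ∑ s ∈ S, inner ℝ (T (π s⁻¹ v)) (π s⁻¹ v) = #S * inner ℝ (T v) v := by
  have hc := (cast_card_pos hS).ne'
  have hsum : Tendsto (fun n : ℕ => ∑ s ∈ S, (inner ℝ (b s) v ^ 2 / n +
      covariance S b n (π s⁻¹ v) (π s⁻¹ v))) l
      (𝓝 (∑ s ∈ S, (0 + inner ℝ (T (π s⁻¹ v)) (π s⁻¹ v)))) :=
    tendsto_finsetSum _ fun s _ =>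
      ((tendsto_const_div_atTop_nhds_zero_nat _).mono_left hl).add (hT _ _)
  simp only [zero_add] at hsum
  have hshift := (hb.tendsto_walkMean_succ_div hS hharm hl (hT v v)).const_mul (#S : ℝ)
  refine tendsto_nhds_unique hsum (hshift.congr fun n => ?_)
  rw [hb.walkMean_inner_sq_succ hS hharm]
  simp_rw [covariance_self, ← add_div, ← sum_div]
  field_simp

end LimitCovariance

-- If all translates `π s⁻¹ w` of a vector `w` maximising `⟪T w, w⟫ / ‖w‖²` average to the same
-- value, each of them is maximising too.
lemma map_mem_eigenspace_norm_of_sum_inner {T : H →L[ℝ] H} {v : H}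
    (hsum : ∑ s ∈ S, inner ℝ (T (π s⁻¹ v)) (π s⁻¹ v) = #S * inner ℝ (T v) v)
    (hv : v ∈ Module.End.eigenspace (T : Module.End ℝ H) ‖T‖) {s : G} (hs : s ∈ S) :
    π s⁻¹ v ∈ Module.End.eigenspace (T : Module.End ℝ H) ‖T‖ := by
  have hmax : ∀ t ∈ S, inner ℝ (T (π t⁻¹ v)) (π t⁻¹ v) ≤ ‖T‖ * ‖v‖ ^ 2 := fun t _ => by
    simpa using re_inner_apply_self_le_norm (𝕜 := ℝ) T (π t⁻¹ v)
  have hTv := (mem_eigenspace_norm_iff (𝕜 := ℝ)).1 hv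
  simp only [RCLike.re_to_real] at hTv
  have heq := (Finset.sum_eq_sum_iff_of_le hmax).1 (by rw [hsum, hTv]; simp) s hs
  exact (mem_eigenspace_norm_iff (𝕜 := ℝ)).2 (by simpa using heq)

lemma map_mem_of_closure_eq_top (hgen : Subgroup.closure (S : Set G) = ⊤)
    (hinv : ∀ s ∈ S, s⁻¹ ∈ S) {W : Submodule ℝ H} (hW : ∀ s ∈ S, ∀ w ∈ W, π s⁻¹ w ∈ W) (g : G) :
    ∀ w ∈ W, π g w ∈ W := by
  suffices h : (∀ w ∈ W, π g w ∈ W) ∧ ∀ w ∈ W, π g⁻¹ w ∈ W from h.1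
  have hg : g ∈ Subgroup.closure (S : Set G) := hgen ▸ Subgroup.mem_top g
  induction hg using Subgroup.closure_induction with
  | mem s hs => exact ⟨by simpa using hW s⁻¹ (hinv s hs), hW s hs⟩
  | one => simp
  | mul x y _ _ hx hy =>
    exact ⟨fun w hw => by rw [_root_.map_mul]; exact hx.1 _ (hy.1 _ hw),
      fun w hw => by rw [mul_inv_rev, _root_.map_mul]; exact hy.2 _ (hx.2 _ hw)⟩
  | inv x _ hx => exact ⟨hx.2, by simpa using hx.1⟩

/-- A limit covariance of a harmonic cocycle is a compact positive operator, so its top eigenspace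
is finite-dimensional; harmonicity makes that eigenspace invariant. -/
lemma IsCocycle.exists_finiteDimensional_invariant_of_tendsto [CompleteSpace H] {l : Filter ℕ}
    [l.NeBot] {T : H →L[ℝ] H} (hb : IsCocycle π b) (hS : S.Nonempty) (hinv : ∀ s ∈ S, s⁻¹ ∈ S)
    (hgen : Subgroup.closure (S : Set G) = ⊤) (hharm : ∑ s ∈ S, b s = 0) (hl : l ≤ atTop)
    (hT : ∀ v w, Tendsto (fun n => covariance S b n v w) l (𝓝 (inner ℝ (T v) w))) (hT0 : T ≠ 0) :
    ∃ W : Submodule ℝ H, FiniteDimensional ℝ W ∧ (∀ g, ∀ w ∈ W, π g w ∈ W) ∧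
      ∃ g, ∃ w ∈ W, inner ℝ (b g) w ≠ 0 := by
  have hpos := isPositive_of_tendsto_covariance hT
  have hcomp : IsCompactOperator T := isCompactOperator_of_forall_sum_inner_le hpos
    fun n v hv => le_of_tendsto (tendsto_finsetSum _ fun i _ => hT (v i) (v i))
      (Eventually.of_forall fun m => hb.sum_covariance_orthonormal_le hS hharm m hv)
  have hnorm : 0 < ‖T‖ := norm_pos_iff.2 hT0
  refine ⟨Module.End.eigenspace (T : Module.End ℝ H) ‖T‖,
    ContinuousLinearMap.finite_dimensional_eigenspace hcomp _ hnorm.ne',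
    map_mem_of_closure_eq_top hgen hinv fun s hs w hw => map_mem_eigenspace_norm_of_sum_inner
      (hb.sum_inner_of_tendsto_covariance hS hharm hl hT w) hw hs, ?_⟩
  obtain ⟨w, hw, hw0⟩ := (hasEigenvalue_norm_of_isPositive hpos hcomp hT0).exists_hasEigenvector
  by_contra! hcon
  have hzero : inner ℝ (T w) w = 0 := by
    refine tendsto_nhds_unique (hT w w) (tendsto_const_nhds.congr fun n => ?_)
    simp_rw [covariance_self, hcon _ w hw]
    simp [walkMean_const hS]
  have htop := (mem_eigenspace_norm_iff (𝕜 := ℝ)).1 hw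
  rw [RCLike.re_to_real, hzero] at htop
  have := norm_pos_iff.2 hw0
  exact absurd htop (by positivity)

lemma IsCocycle.exists_tendsto_covariance [CompleteSpace H] (hb : IsCocycle π b) (hS : S.Nonempty)
    (hharm : ∑ s ∈ S, b s = 0) (ω : Ultrafilter ℕ) :
    ∃ T : H →L[ℝ] H, ∀ v w, Tendsto (fun n => covariance S b n v w) ω (𝓝 (inner ℝ (T v) w)) := by
  obtain ⟨q, hq⟩ := exists_bilinForm_tendsto_ultrafilter ω (covariance S b)
    fun v w => ⟨_, fun n => hb.abs_covariance_le hS hharm n v w⟩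
  obtain ⟨T, hT⟩ := exists_continuousLinearMap_inner_eq q fun v w =>
    le_of_tendsto (hq v w).abs (Eventually.of_forall fun n => hb.abs_covariance_le hS hharm n v w)
  exact ⟨T, fun v w => hT v w ▸ hq v w⟩

theorem IsCocycle.exists_finiteDimensional_invariant [DecidableEq G] [CompleteSpace H]
    (hb : IsCocycle π b) (hS : S.Nonempty) (hinv : ∀ s ∈ S, s⁻¹ ∈ S)
    (hgen : Subgroup.closure (S : Set G) = ⊤) {C d : ℕ} (hC : ∀ n, #(S ^ n) ≤ C * (n + 1) ^ d)
    (hharm : ∑ s ∈ S, b s = 0) (hne : ∃ s ∈ S, b s ≠ 0) :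
    ∃ W : Submodule ℝ H, FiniteDimensional ℝ W ∧ (∀ g, ∀ w ∈ W, π g w ∈ W) ∧
      ∃ g, ∃ w ∈ W, inner ℝ (b g) w ≠ 0 := by
  obtain ⟨c, hc, hfreq⟩ := frequently_le_walkMean_sq hS hC
  let growing : Set ℕ := {n | ∀ f, RightHarmonic S f → f 1 = 0 →
    ∀ s ∈ S, c * f s ^ 2 * n ≤ walkMean S n fun x => f x ^ 2}
  have : (atTop ⊓ 𝓟 growing).NeBot := frequently_mem_iff_neBot.1 hfreq
  obtain ⟨ω, hωle⟩ := Ultrafilter.exists_le (atTop ⊓ 𝓟 growing)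
  have hgrowth := hωle.trans inf_le_right
  have hωtop := hωle.trans inf_le_left
  obtain ⟨T, hT⟩ := hb.exists_tendsto_covariance hS hharm ω
  obtain ⟨s, hs, hbs⟩ := hne
  have hpos : 0 < inner ℝ (T (b s)) (b s) := by
    have : 0 < ‖b s‖ := norm_pos_iff.2 hbs
    refine (show 0 < c * (‖b s‖ ^ 2) ^ 2 by positivity).trans_le (ge_of_tendsto (hT _ _) ?_)
    filter_upwards [le_principal_iff.1 hgrowth, hωtop (eventually_gt_atTop 0)] with n hn hn0
    have := hn _ (hb.rightHarmonic_inner hharm (b s)) (by simp [hb.map_one]) s hs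
    rw [covariance_self, le_div_iff₀ (by exact_mod_cast hn0)]
    simpa only [real_inner_self_eq_norm_sq] using this
  refine hb.exists_finiteDimensional_invariant_of_tendsto hS hinv hgen hharm hωtop hT ?_
  rintro rfl
  simp at hpos

end HarmonicCocycle

section OrthogonalRepresentations

open scoped BoundedContinuousFunction
open Filter Topology UniformSpace

universe u v

variable {G : Type*} [Group G]

lemma exists_isometric_rep_completion {X : Type*} [SeminormedAddCommGroup X] [NormedSpace ℝ X]
    (ρ : Representation ℝ G X) (hρ : ∀ g x, ‖ρ g x‖ = ‖x‖) :
    ∃ π : G →* (Completion X ≃ₗᵢ[ℝ] Completion X), ∀ g (x : X), π g x = (ρ g x : X) := by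
  let L (g : G) : X →L[ℝ] X := (ρ g).mkContinuous 1 fun x => by rw [hρ, one_mul]
  let M (g : G) : Completion X →L[ℝ] Completion X := (L g).completion
  have hM_coe : ∀ g (x : X), M g x = (ρ g x : X) := fun g => (L g).completion_apply_coe
  have hM_one : ∀ x, M 1 x = x := by
    refine fun x => Completion.induction_on x
      (isClosed_eq (M 1).continuous continuous_id) fun a => ?_
    rw [hM_coe, map_one, Module.End.one_apply]
  have hM_mul : ∀ g h x, M (g * h) x = M g (M h x) := by
    refine fun g h x => Completion.induction_on x
      (isClosed_eq (M _).continuous ((M g).continuous.comp (M h).continuous)) fun a => ?_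
    rw [hM_coe, hM_coe, hM_coe, map_mul, Module.End.mul_apply]
  have hM_norm : ∀ g x, ‖M g x‖ = ‖x‖ := by
    refine fun g x => Completion.induction_on x
      (isClosed_eq (M g).continuous.norm continuous_norm) fun a => ?_
    rw [hM_coe, Completion.norm_coe, Completion.norm_coe, hρ]
  exact ⟨
    { toFun := fun g =>
        { toLinearEquiv := LinearEquiv.ofLinearMap (M g : Completion X →ₗ[ℝ] Completion X) (M g⁻¹)
            (by ext x; simp [← hM_mul, hM_one]) (by ext x; simp [← hM_mul, hM_one])
          norm_map' := hM_norm g }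
      map_one' := by ext x; exact hM_one x
      map_mul' := fun g h => by ext x; exact hM_mul g h x }, hM_coe⟩

/-- The GNS construction for an invariant positive semidefinite form. -/
theorem exists_orthogonal_rep_of_isPosSemidef {X : Type u} [AddCommGroup X] [Module ℝ X]
    (ρ : Representation ℝ G X) {B : LinearMap.BilinForm ℝ X} (hB : B.IsPosSemidef)
    (hinv : ∀ g x y, B (ρ g x) (ρ g y) = B x y) :
    ∃ (H : Type u) (_ : NormedAddCommGroup H) (_ : InnerProductSpace ℝ H) (_ : CompleteSpace H)
      (π : G →* (H ≃ₗᵢ[ℝ] H)) (φ : X →ₗ[ℝ] H),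
      (∀ x y, inner ℝ (φ x) (φ y) = B x y) ∧ ∀ g x, φ (ρ g x) = π g (φ x) := by
  let core : PreInnerProductSpace.Core ℝ X :=
    { inner := fun x y => B x y
      conj_inner_symm := fun x y => hB.isSymm.eq y x
      re_inner_nonneg := hB.isNonneg.nonneg
      add_left := fun x y z => by rw [map_add, LinearMap.add_apply]
      smul_left := fun x y a => by rw [map_smul, LinearMap.smul_apply]; rfl }
  let : SeminormedAddCommGroup X := @InnerProductSpace.Core.toSeminormedAddCommGroup ℝ X _ _ _ core
  let : InnerProductSpace ℝ X := InnerProductSpace.ofCore core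
  have hnorm : ∀ g x, ‖ρ g x‖ = ‖x‖ := by
    intro g x
    have h : inner ℝ (ρ g x) (ρ g x) = inner ℝ x x := hinv g x x
    rwa [real_inner_self_eq_norm_sq, real_inner_self_eq_norm_sq,
      sq_eq_sq₀ (norm_nonneg _) (norm_nonneg _)] at h
  obtain ⟨π, hπ⟩ := exists_isometric_rep_completion ρ hnorm
  exact ⟨Completion X, inferInstance, inferInstance, inferInstance, π,
    (Completion.toComplL : X →L[ℝ] Completion X), Completion.inner_coe, fun g x => (hπ g x).symm⟩

lemma exists_orthonormal_orbit (G : Type u) [Group G] :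
    ∃ (H : Type u) (_ : NormedAddCommGroup H) (_ : InnerProductSpace ℝ H)
      (π : G →* (H ≃ₗᵢ[ℝ] H)) (δ : H), Orthonormal ℝ fun g => π g δ := by
  classical
  let B : LinearMap.BilinForm ℝ (G →₀ ℝ) := Finsupp.linearCombination ℝ fun g => Finsupp.lapply g
  have hB : ∀ x y, B x y = x.sum fun g a => a * y g := fun x y => by
    simp [B, Finsupp.linearCombination_apply, Finsupp.sum]
  have hB_single : ∀ g h, B (.single g 1) (.single h 1) = if g = h then 1 else 0 := fun g h => by
    simp [hB, Finsupp.single_apply, eq_comm]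
  have hB_symm : B = B.flip := by ext g h; simp [hB_single, eq_comm]
  let ρ : Representation ℝ G (G →₀ ℝ) :=
    { toFun := fun g => Finsupp.lmapDomain ℝ ℝ (g * ·)
      map_one' := by ext; simp
      map_mul' := fun g h => by ext; simp [mul_assoc] }
  have hρ : ∀ g h, ρ g (.single h 1) = .single (g * h) 1 := fun g h => Finsupp.mapDomain_single
  obtain ⟨H, i1, i2, -, π, φ, hφ, hπ⟩ := exists_orthogonal_rep_of_isPosSemidef ρ (B := B)
    ⟨⟨fun x y => LinearMap.congr_fun₂ hB_symm x y⟩,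
      ⟨fun x => hB x x ▸ Finset.sum_nonneg fun g _ => mul_self_nonneg _⟩⟩
    (fun g x y => by
      suffices B.compl₁₂ (ρ g) (ρ g) = B from LinearMap.congr_fun₂ this x y
      ext h k
      simp [hρ, hB_single])
  refine ⟨H, i1, i2, π, φ (.single 1 1), orthonormal_iff_ite.2 fun g h => ?_⟩
  rw [← hπ, ← hπ, hφ, hρ, hρ, hB_single, mul_one, mul_one]

lemma exists_ultralimit_rep {ι : Type v} [TopologicalSpace ι] (ω : Ultrafilter ι) {H : Type u}
    [NormedAddCommGroup H] [InnerProductSpace ℝ H] (π : G →* (H ≃ₗᵢ[ℝ] H)) :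
    ∃ (H' : Type (max v u)) (_ : NormedAddCommGroup H') (_ : InnerProductSpace ℝ H')
      (_ : CompleteSpace H') (π' : G →* (H' ≃ₗᵢ[ℝ] H')) (φ : (ι →ᵇ H) →ₗ[ℝ] H'),
      (∀ x, Tendsto (fun i => ‖x i‖ ^ 2) ω (𝓝 (‖φ x‖ ^ 2))) ∧
      ∀ g x y, (∀ i, y i = π g (x i)) → φ y = π' g (φ x) := by
  let eval (i : ι) : (ι →ᵇ H) →ₗ[ℝ] H := (BoundedContinuousFunction.evalCLM ℝ i : _ →L[ℝ] H)
  obtain ⟨B, hB⟩ := exists_bilinForm_tendsto_ultrafilter ω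
    (fun i => (innerₗ H).compl₁₂ (eval i) (eval i)) fun x y => ⟨‖x‖ * ‖y‖, fun i =>
      (abs_real_inner_le_norm _ _).trans
        (mul_le_mul (x.norm_coe_le_norm i) (y.norm_coe_le_norm i) (norm_nonneg _) (norm_nonneg _))⟩
  let ρ : Representation ℝ G (ι →ᵇ H) :=
    { toFun := fun g =>
        ((π g : H →L[ℝ] H).compLeftContinuousBounded ι : (ι →ᵇ H) →L[ℝ] (ι →ᵇ H))
      map_one' := by ext x i; simp
      map_mul' := fun g h => by ext x i; simp }
  obtain ⟨H', i1, i2, i3, π', φ, hφ, hπ⟩ := exists_orthogonal_rep_of_isPosSemidef ρ (B := B)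
    ⟨⟨fun x y => tendsto_nhds_unique (hB x y)
        ((hB y x).congr fun i => real_inner_comm (x i) (y i))⟩,
      ⟨fun x => ge_of_tendsto' (hB x x) fun i => real_inner_self_nonneg⟩⟩
    (fun g x y => tendsto_nhds_unique (hB _ _)
      ((hB x y).congr fun i => ((π g).inner_map_map _ _).symm))
  refine ⟨H', i1, i2, i3, π', φ, fun x => ?_, fun g x y hy => ?_⟩
  · rw [← real_inner_self_eq_norm_sq, hφ]
    exact (hB x x).congr fun i => real_inner_self_eq_norm_sq _
  · rw [← hπ]
    exact congrArg φ (BoundedContinuousFunction.ext hy)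

theorem exists_ultralimit_cocycle {H : Type u} [NormedAddCommGroup H] [InnerProductSpace ℝ H]
    (π : G →* (H ≃ₗᵢ[ℝ] H)) (v : ℕ → H) (hv : ∀ g, ∃ C, ∀ n, ‖π g (v n) - v n‖ ≤ C) :
    ∃ (H' : Type u) (_ : NormedAddCommGroup H') (_ : InnerProductSpace ℝ H')
      (_ : CompleteSpace H') (π' : G →* (H' ≃ₗᵢ[ℝ] H')) (b : G → H'), IsCocycle π' b ∧
      ∀ S : Finset G, Tendsto (fun n => ‖∑ s ∈ S, (π s (v n) - v n)‖ ^ 2) (hyperfilter ℕ)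
        (𝓝 (‖∑ s ∈ S, b s‖ ^ 2)) := by
  choose C hC using hv
  obtain ⟨H', i1, i2, i3, π', φ, hφ, hπ⟩ := exists_ultralimit_rep (hyperfilter ℕ) π
  let c (g : G) : ℕ →ᵇ H := .ofNormedAddCommGroupDiscrete (fun n => π g (v n) - v n) (C g) (hC g)
  have hc : ∀ g n, c g n = π g (v n) - v n := fun g n => rfl
  refine ⟨H', i1, i2, i3, π', fun g => φ (c g), fun g h => ?_, fun S => ?_⟩
  · rw [← hπ g (c h) (c (g * h) - c g) fun n => by simp [hc], map_sub, add_sub_cancel]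
  · rw [← map_sum]
    exact (hφ _).congr fun n => by simp [hc]

end OrthogonalRepresentations

section Averaging

open scoped Pointwise
open Finset Filter Topology

lemma exists_poly_mul_pow_lt_one (C d : ℕ) {K σ : ℝ} (hK : 0 ≤ K) (hσ : 0 < σ) (hσ1 : σ < 1) :
    ∃ n : ℕ, 2 * (C * (n + 1) ^ d : ℝ) * (2 * (C * (n + 1) ^ d) + n) * (K * σ ^ n) < 1 := by
  have hlim : ∀ k, Tendsto (fun n : ℕ => (n + 1 : ℝ) ^ k * σ ^ n) atTop (𝓝 0) := fun k => by
    have := ((tendsto_pow_const_mul_const_pow_of_abs_lt_one k (r := σ)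
      (by rwa [abs_of_pos hσ])).comp (tendsto_add_atTop_nat 1)).mul_const σ⁻¹
    rw [zero_mul] at this
    refine this.congr fun n => ?_
    simp only [Function.comp_apply, Nat.cast_add, Nat.cast_one, pow_succ σ]
    field_simp
  have hsum := ((hlim (d + d)).const_mul (4 * C ^ 2 * K)).add
    ((hlim (d + 1)).const_mul (2 * C * K))
  rw [mul_zero, mul_zero, add_zero] at hsum
  obtain ⟨n, hn⟩ := (hsum.eventually (gt_mem_nhds one_pos)).exists
  refine ⟨n, lt_of_le_of_lt ?_ hn⟩
  calc _ ≤ 2 * (C * (n + 1) ^ d : ℝ) * (2 * (C * (n + 1) ^ d) + (n + 1)) * (K * σ ^ n) := by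
        gcongr; linarith
    _ = _ := by ring

variable {G : Type*} [Group G] {H : Type*} [NormedAddCommGroup H] [InnerProductSpace ℝ H]

/-- The Markov operator `u ↦ (#S)⁻¹ ∑ₛ π(s) u` of the walk with steps uniform in `S`, in an
orthogonal representation. -/
noncomputable def averaging (π : G →* (H ≃ₗᵢ[ℝ] H)) (S : Finset G) : H →ₗ[ℝ] H :=
  (#S : ℝ)⁻¹ • ∑ s ∈ S, ((π s).toLinearEquiv : H →ₗ[ℝ] H)

/-- The Dirichlet form of the Markov operator `averaging π S`. -/
noncomputable def dirichletEnergy (π : G →* (H ≃ₗᵢ[ℝ] H)) (S : Finset G) (u : H) : ℝ :=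
  inner ℝ (u - averaging π S u) u

variable {π : G →* (H ≃ₗᵢ[ℝ] H)} {S : Finset G}

lemma averaging_apply (u : H) : averaging π S u = (#S : ℝ)⁻¹ • ∑ s ∈ S, π s u := by
  simp only [averaging, LinearMap.smul_apply, LinearMap.sum_apply]
  rfl

lemma sum_apply_sub_eq (hS : S.Nonempty) (u : H) :
    ∑ s ∈ S, (π s u - u) = (#S : ℝ) • (averaging π S u - u) := by
  rw [averaging_apply, smul_sub, smul_inv_smul₀ (cast_card_pos hS).ne', sum_sub_distrib, sum_const,
    Nat.cast_smul_eq_nsmul]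

lemma inner_apply_left_eq (g : G) (u v : H) : inner ℝ (π g u) v = inner ℝ u (π g⁻¹ v) := by
  rw [LinearIsometryEquiv.inner_map_eq_flip, map_inv]
  rfl

lemma card_mul_inner_averaging (hS : S.Nonempty) (u v : H) :
    #S * inner ℝ (averaging π S u) v = ∑ s ∈ S, inner ℝ (π s u) v := by
  rw [averaging_apply, real_inner_smul_left, sum_inner,
    mul_inv_cancel_left₀ (cast_card_pos hS).ne']

lemma inner_averaging_left (hS : S.Nonempty) (hinv : ∀ s ∈ S, s⁻¹ ∈ S) (u v : H) :
    inner ℝ (averaging π S u) v = inner ℝ u (averaging π S v) := by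
  apply mul_left_cancel₀ (cast_card_pos hS).ne'
  rw [real_inner_comm (averaging π S v) u, card_mul_inner_averaging hS,
    card_mul_inner_averaging hS]
  refine sum_bij (fun s _ => s⁻¹) hinv (fun _ _ _ _ h => inv_injective h)
    (fun s hs => ⟨s⁻¹, hinv s hs, inv_inv s⟩) fun s _ => ?_
  rw [inner_apply_left_eq, real_inner_comm]

lemma sum_norm_apply_sub_sq (hS : S.Nonempty) (u : H) :
    ∑ s ∈ S, ‖π s u - u‖ ^ 2 = 2 * #S * dirichletEnergy π S u := by
  have h : ∀ s, ‖π s u - u‖ ^ 2 = 2 * ‖u‖ ^ 2 - 2 * inner ℝ (π s u) u := by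
    intro s
    rw [norm_sub_sq_real, LinearIsometryEquiv.norm_map]; ring
  simp only [h, sum_sub_distrib, ← mul_sum, ← card_mul_inner_averaging hS, dirichletEnergy,
    inner_sub_left, real_inner_self_eq_norm_sq, sum_const, nsmul_eq_mul]
  ring

lemma dirichletEnergy_nonneg (hS : S.Nonempty) (u : H) : 0 ≤ dirichletEnergy π S u := by
  refine (mul_nonneg_iff_of_pos_left (mul_pos two_pos (cast_card_pos hS))).1 ?_
  rw [← sum_norm_apply_sub_sq hS]
  positivity

lemma norm_apply_sub_le (hS : S.Nonempty) (u : H) {s : G} (hs : s ∈ S) :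
    ‖π s u - u‖ ≤ √(2 * #S * dirichletEnergy π S u) := by
  rw [← sum_norm_apply_sub_sq hS]
  exact Real.le_sqrt_of_sq_le
    (single_le_sum (f := fun s => ‖π s u - u‖ ^ 2) (fun _ _ => by positivity) hs)

-- The identity in `S` makes the walk lazy, which keeps the spectrum of `averaging` away from `-1`.
lemma two_div_card_mul_norm_sq_le (h1 : (1 : G) ∈ S) (u : H) :
    2 / #S * ‖u‖ ^ 2 ≤ ‖u‖ ^ 2 + inner ℝ (averaging π S u) u := by
  classical
  have hS : S.Nonempty := ⟨1, h1⟩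
  have hterm : ∀ s ∈ S.erase 1, 0 ≤ ‖u‖ ^ 2 + inner ℝ (π s u) u := fun s _ => by
    have := neg_le_of_abs_le (abs_real_inner_le_norm (π s u) u)
    rw [LinearIsometryEquiv.norm_map, ← sq] at this
    linarith
  have hone : ‖u‖ ^ 2 + inner ℝ (π 1 u) u = 2 * ‖u‖ ^ 2 := by
    rw [map_one, LinearIsometryEquiv.coe_one, id, real_inner_self_eq_norm_sq, two_mul]
  rw [div_mul_eq_mul_div, div_le_iff₀' (cast_card_pos hS)]
  calc 2 * ‖u‖ ^ 2 = ‖u‖ ^ 2 + inner ℝ (π 1 u) u := hone.symm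
    _ ≤ ‖u‖ ^ 2 + inner ℝ (π 1 u) u + ∑ s ∈ S.erase 1, (‖u‖ ^ 2 + inner ℝ (π s u) u) :=
      le_add_of_nonneg_right (sum_nonneg hterm)
    _ = ∑ s ∈ S, (‖u‖ ^ 2 + inner ℝ (π s u) u) :=
      add_sum_erase S (fun s => ‖u‖ ^ 2 + inner ℝ (π s u) u) h1
    _ = #S * (‖u‖ ^ 2 + inner ℝ (averaging π S u) u) := by
      rw [sum_add_distrib, sum_const, nsmul_eq_mul, mul_add, card_mul_inner_averaging hS]

lemma dirichletEnergy_sub_dirichletEnergy_averaging (hS : S.Nonempty) (hinv : ∀ s ∈ S, s⁻¹ ∈ S)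
    (u : H) :
    dirichletEnergy π S u - dirichletEnergy π S (averaging π S u) =
      ‖u - averaging π S u‖ ^ 2 + inner ℝ (averaging π S (u - averaging π S u))
        (u - averaging π S u) := by
  have h := inner_averaging_left (π := π) hS hinv (averaging π S u) u
  simp only [dirichletEnergy, ← real_inner_self_eq_norm_sq, map_sub, inner_sub_left,
    inner_sub_right]
  linarith [real_inner_comm u (averaging π S u)]

lemma dirichletEnergy_averaging_le (h1 : (1 : G) ∈ S) (hinv : ∀ s ∈ S, s⁻¹ ∈ S) {ε : ℝ} {u : H}
    (hu : ε * dirichletEnergy π S u ≤ ‖u - averaging π S u‖ ^ 2) :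
    dirichletEnergy π S (averaging π S u) ≤ (1 - 2 / #S * ε) * dirichletEnergy π S u := by
  have hdiff := dirichletEnergy_sub_dirichletEnergy_averaging (π := π) ⟨1, h1⟩ hinv u
  have hlower := two_div_card_mul_norm_sq_le (π := π) h1 (u - averaging π S u)
  have hscale : 2 / #S * (ε * dirichletEnergy π S u) ≤ 2 / #S * ‖u - averaging π S u‖ ^ 2 := by
    gcongr
  linarith

lemma dirichletEnergy_averaging_pow_le {ρ : ℝ} (hρ : 0 ≤ ρ)
    (h : ∀ u, dirichletEnergy π S (averaging π S u) ≤ ρ * dirichletEnergy π S u) (n : ℕ) (u : H) :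
    dirichletEnergy π S ((averaging π S ^ n) u) ≤ ρ ^ n * dirichletEnergy π S u := by
  induction n with
  | zero => simp
  | succ n ih =>
    rw [pow_succ', Module.End.mul_apply]
    calc _ ≤ ρ * dirichletEnergy π S ((averaging π S ^ n) u) := h _
      _ ≤ ρ * (ρ ^ n * dirichletEnergy π S u) := by gcongr
      _ = _ := by ring

lemma norm_apply_averaging_pow_sub_le (hS : S.Nonempty) {σ : ℝ} (hσ : 0 ≤ σ)
    (h : ∀ u, dirichletEnergy π S (averaging π S u) ≤ σ ^ 2 * dirichletEnergy π S u) (n : ℕ)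
    (u : H) {s : G} (hs : s ∈ S) :
    ‖π s ((averaging π S ^ n) u) - (averaging π S ^ n) u‖ ≤
      √(2 * #S * dirichletEnergy π S u) * σ ^ n := by
  refine (norm_apply_sub_le hS _ hs).trans (Real.sqrt_le_iff.2 ⟨by positivity, ?_⟩)
  have := dirichletEnergy_nonneg (π := π) hS u
  rw [mul_pow, Real.sq_sqrt (by positivity), ← pow_mul, mul_comm n 2, pow_mul,
    mul_assoc (2 * (#S : ℝ)), mul_comm (dirichletEnergy π S u)]
  gcongr
  exact dirichletEnergy_averaging_pow_le (by positivity) h n u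

variable [DecidableEq G]

lemma norm_apply_sub_le_of_mem_pow {u : H} {κ : ℝ} (h : ∀ s ∈ S, ‖π s u - u‖ ≤ κ) (r : ℕ) {x : G}
    (hx : x ∈ S ^ r) : ‖π x u - u‖ ≤ r * κ := by
  induction r generalizing x with
  | zero =>
    rw [pow_zero, Finset.mem_one] at hx
    simp [hx]
  | succ r ih =>
    rw [pow_succ, Finset.mem_mul] at hx
    obtain ⟨y, hy, s, hs, rfl⟩ := hx
    calc ‖π (y * s) u - u‖ = ‖π y (π s u - u) + (π y u - u)‖ := by rw [map_mul, map_sub]; simp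
      _ ≤ ‖π s u - u‖ + ‖π y u - u‖ :=
        (norm_add_le _ _).trans_eq (by rw [LinearIsometryEquiv.norm_map])
      _ ≤ κ + r * κ := add_le_add (h s hs) (ih hy)
      _ = (r + 1 : ℕ) * κ := by push_cast; ring

variable {δ : H}

lemma inner_averaging_pow_eq_walkProb (hδ : Orthonormal ℝ fun g => π g δ) (n : ℕ) (x : G) :
    inner ℝ ((averaging π S ^ n) δ) (π x δ) = walkProb S n x := by
  induction n generalizing x with
  | zero =>
    rw [walkProb_zero, pow_zero]
    simpa [eq_comm] using orthonormal_iff_ite.1 hδ 1 x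
  | succ n ih =>
    rw [pow_succ', Module.End.mul_apply, averaging_apply, real_inner_smul_left, sum_inner,
      walkProb_succ, div_eq_inv_mul]
    congr 1
    refine sum_congr rfl fun s _ => ?_
    rw [inner_apply_left_eq, ← ih, map_mul]
    rfl

lemma abs_walkProb_sub_walkProb_one_le (hδ : Orthonormal ℝ fun g => π g δ) {n : ℕ} {κ : ℝ}
    (h : ∀ s ∈ S, ‖π s ((averaging π S ^ n) δ) - (averaging π S ^ n) δ‖ ≤ κ) (r : ℕ) {x : G}
    (hx : x ∈ S ^ r) : |walkProb S n x - walkProb S n 1| ≤ r * κ := by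
  set f := (averaging π S ^ n) δ
  have hone : walkProb S n 1 = inner ℝ (π x f) (π x δ) := by
    rw [← inner_averaging_pow_eq_walkProb hδ, LinearIsometryEquiv.inner_map_map, map_one]; rfl
  rw [hone, ← inner_averaging_pow_eq_walkProb hδ, ← inner_sub_left]
  calc |inner ℝ (f - π x f) (π x δ)| ≤ ‖f - π x f‖ * ‖π x δ‖ := abs_real_inner_le_norm _ _
    _ = ‖π x f - f‖ := by rw [hδ.1 x, mul_one, norm_sub_rev]
    _ ≤ r * κ := norm_apply_sub_le_of_mem_pow h r hx

lemma sum_walkProb_pow_le_one (hS : S.Nonempty) (n r : ℕ) :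
    ∑ x ∈ S ^ r, walkProb S n x ≤ 1 := by
  calc ∑ x ∈ S ^ r, walkProb S n x ≤ ∑ x ∈ S ^ r ∪ S ^ n, walkProb S n x :=
        sum_le_sum_of_subset_of_nonneg subset_union_left fun _ _ _ => walkProb_nonneg _ _
    _ = ∑ x ∈ S ^ n, walkProb S n x :=
        (sum_subset subset_union_right fun x _ hx => walkProb_eq_zero hx).symm
    _ = 1 := sum_walkProb hS n

-- The `n`-th step is spread over at most `P` points, so it gives the identity probability about
-- `1 / P`; but then the more than `2 P` points of `S ^ (2 * P)` cannot all be as likely.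
lemma one_le_of_abs_walkProb_sub_walkProb_one_le [Infinite G] (h1 : (1 : G) ∈ S)
    (hgen : Subgroup.closure (S : Set G) = ⊤) {n P : ℕ} (hP : #(S ^ n) ≤ P) {κ : ℝ} (hκ : 0 ≤ κ)
    (h : ∀ r : ℕ, ∀ x ∈ S ^ r, |walkProb S n x - walkProb S n 1| ≤ r * κ) :
    1 ≤ 2 * P * (2 * P + n) * κ := by
  set p := walkProb S n 1
  have hp : 0 ≤ p := walkProb_nonneg n 1
  have hupper : 1 ≤ P * (p + n * κ) := by
    rw [← sum_walkProb ⟨1, h1⟩ n]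
    calc _ ≤ ∑ _x ∈ S ^ n, (p + n * κ) :=
          sum_le_sum fun x hx => by linarith [(abs_le.1 (h n x hx)).2]
      _ = #(S ^ n) * (p + n * κ) := by rw [sum_const, nsmul_eq_mul]
      _ ≤ _ := by gcongr
  have hlower : #(S ^ (2 * P)) * (p - 2 * P * κ) ≤ 1 := by
    calc _ = ∑ _x ∈ S ^ (2 * P), (p - 2 * P * κ) := by rw [sum_const, nsmul_eq_mul]
      _ ≤ ∑ x ∈ S ^ (2 * P), walkProb S n x := sum_le_sum fun x hx => by
          have := (abs_le.1 (h _ x hx)).1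
          push_cast at this
          linarith
      _ ≤ 1 := sum_walkProb_pow_le_one ⟨1, h1⟩ n _
  have hcard : (2 * P : ℝ) ≤ #(S ^ (2 * P)) := by
    have := add_one_le_card_pow h1 (by rw [hgen]; exact Set.infinite_univ) (2 * P)
    exact_mod_cast (Nat.le_succ _).trans this
  have hsmall : 2 * P * (p - 2 * P * κ) ≤ 1 := by
    obtain hneg | hpos := le_total (p - 2 * P * κ) 0
    · exact (mul_nonpos_of_nonneg_of_nonpos (by positivity) hneg).trans zero_le_one
    · exact (mul_le_mul_of_nonneg_right hcard hpos).trans hlower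
  linarith

lemma not_dirichletEnergy_averaging_le [Infinite G] (h1 : (1 : G) ∈ S)
    (hgen : Subgroup.closure (S : Set G) = ⊤) {C d : ℕ} (hC : ∀ n, #(S ^ n) ≤ C * (n + 1) ^ d)
    (hδ : Orthonormal ℝ fun g => π g δ) {σ : ℝ} (hσ : 0 < σ) (hσ1 : σ < 1) :
    ¬ ∀ u, dirichletEnergy π S (averaging π S u) ≤ σ ^ 2 * dirichletEnergy π S u := by
  intro hcontr
  set K := √(2 * #S * dirichletEnergy π S δ)
  obtain ⟨n, hn⟩ := exists_poly_mul_pow_lt_one C d (Real.sqrt_nonneg _ : 0 ≤ K) hσ hσ1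
  have hκ : ∀ s ∈ S, ‖π s ((averaging π S ^ n) δ) - (averaging π S ^ n) δ‖ ≤ K * σ ^ n :=
    fun s hs => norm_apply_averaging_pow_sub_le ⟨1, h1⟩ hσ.le hcontr n δ hs
  have := one_le_of_abs_walkProb_sub_walkProb_one_le h1 hgen (hC n) (κ := K * σ ^ n)
    (by positivity) fun r x hx => abs_walkProb_sub_walkProb_one_le hδ hκ r hx
  push_cast at this
  exact this.not_gt hn

theorem exists_almost_harmonic [Infinite G] (h1 : (1 : G) ∈ S) (hinv : ∀ s ∈ S, s⁻¹ ∈ S)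
    (hgen : Subgroup.closure (S : Set G) = ⊤) {C d : ℕ} (hC : ∀ n, #(S ^ n) ≤ C * (n + 1) ^ d)
    (hδ : Orthonormal ℝ fun g => π g δ) {ε : ℝ} (hε : 0 < ε) :
    ∃ u : H, 0 < dirichletEnergy π S u ∧
      ‖u - averaging π S u‖ ^ 2 ≤ ε * dirichletEnergy π S u := by
  have hm := cast_card_pos ⟨1, h1⟩
  by_contra! hcon
  have hall : ∀ u : H, ε * dirichletEnergy π S u ≤ ‖u - averaging π S u‖ ^ 2 := fun u => by
    obtain h | h := (dirichletEnergy_nonneg (π := π) ⟨1, h1⟩ u).eq_or_lt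
    · rw [← h, mul_zero]; positivity
    · exact (hcon u h).le
  set ρ : ℝ := max (1 - 2 / #S * ε) (1 / 2)
  have hρ : 0 < ρ := lt_max_of_lt_right (by norm_num)
  have hρ1 : ρ < 1 := max_lt (sub_lt_self _ (by positivity)) (by norm_num)
  refine not_dirichletEnergy_averaging_le h1 hgen hC hδ (Real.sqrt_pos.2 hρ)
    ((Real.sqrt_lt' one_pos).2 (by rwa [one_pow])) fun u => ?_
  rw [Real.sq_sqrt hρ.le]
  exact (dirichletEnergy_averaging_le h1 hinv (hall u)).trans
    (mul_le_mul_of_nonneg_right (le_max_left _ _) (dirichletEnergy_nonneg ⟨1, h1⟩ u))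

end Averaging

section HarmonicCocycleExistence

open scoped Pointwise
open Finset Filter Topology

lemma exists_bound_norm_apply_sub {G : Type*} [Group G] {H ι : Type*} [NormedAddCommGroup H]
    [InnerProductSpace ℝ H] (π : G →* (H ≃ₗᵢ[ℝ] H)) {S : Set G} (hgen : Subgroup.closure S = ⊤)
    {v : ι → H} (hv : ∀ s ∈ S, ∃ C, ∀ i, ‖π s (v i) - v i‖ ≤ C) (g : G) :
    ∃ C, ∀ i, ‖π g (v i) - v i‖ ≤ C := by
  have hg : g ∈ Subgroup.closure S := hgen ▸ Subgroup.mem_top g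
  induction hg using Subgroup.closure_induction with
  | mem x hx => exact hv x hx
  | one => exact ⟨0, fun i => by simp⟩
  | mul x y _ _ hx hy =>
    obtain ⟨A, hA⟩ := hx
    obtain ⟨B, hB⟩ := hy
    refine ⟨B + A, fun i => ?_⟩
    calc ‖π (x * y) (v i) - v i‖ = ‖π x (π y (v i) - v i) + (π x (v i) - v i)‖ := by simp
      _ ≤ ‖π y (v i) - v i‖ + ‖π x (v i) - v i‖ :=
        (norm_add_le _ _).trans_eq (by rw [LinearIsometryEquiv.norm_map])
      _ ≤ B + A := add_le_add (hB i) (hA i)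
  | inv x _ hx =>
    obtain ⟨A, hA⟩ := hx
    refine ⟨A, fun i => ?_⟩
    rw [← LinearIsometryEquiv.norm_map (π x), map_sub, norm_sub_rev]
    simpa using hA i

universe u

variable {G : Type u} [Group G] [Infinite G] [DecidableEq G] {S : Finset G}

lemma exists_normalized_almost_harmonic {H : Type*} [NormedAddCommGroup H] [InnerProductSpace ℝ H]
    {π : G →* (H ≃ₗᵢ[ℝ] H)} {δ : H} (hδ : Orthonormal ℝ fun g => π g δ) (h1 : (1 : G) ∈ S)
    (hinv : ∀ s ∈ S, s⁻¹ ∈ S) (hgen : Subgroup.closure (S : Set G) = ⊤) {C d : ℕ}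
    (hC : ∀ n, #(S ^ n) ≤ C * (n + 1) ^ d) {ε : ℝ} (hε : 0 < ε) :
    ∃ v : H, ∑ s ∈ S, ‖π s v - v‖ ^ 2 = 2 * #S ∧ ‖∑ s ∈ S, (π s v - v)‖ ^ 2 ≤ #S ^ 2 * ε := by
  obtain ⟨w, hw0, hw⟩ := exists_almost_harmonic h1 hinv hgen hC hδ hε
  set e := dirichletEnergy π S w
  have hsq : (√e)⁻¹ ^ 2 = e⁻¹ := by rw [inv_pow, Real.sq_sqrt hw0.le]
  have hscale : ∀ s, π s ((√e)⁻¹ • w) - (√e)⁻¹ • w = (√e)⁻¹ • (π s w - w) := fun s => by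
    rw [map_smul, smul_sub]
  refine ⟨(√e)⁻¹ • w, ?_, ?_⟩
  · simp only [hscale, norm_smul, mul_pow, ← mul_sum, sum_norm_apply_sub_sq ⟨1, h1⟩,
      Real.norm_eq_abs, sq_abs, hsq]
    exact (inv_mul_eq_iff_eq_mul₀ hw0.ne').2 (mul_comm _ _)
  · simp only [hscale, ← smul_sum, sum_apply_sub_eq ⟨1, h1⟩, norm_smul, mul_pow, Real.norm_eq_abs,
      sq_abs, hsq]
    rw [inv_mul_le_iff₀ hw0, norm_sub_rev, mul_left_comm, mul_comm e]
    gcongr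

theorem exists_harmonic_cocycle (h1 : (1 : G) ∈ S) (hinv : ∀ s ∈ S, s⁻¹ ∈ S)
    (hgen : Subgroup.closure (S : Set G) = ⊤) {C d : ℕ} (hC : ∀ n, #(S ^ n) ≤ C * (n + 1) ^ d) :
    ∃ (H : Type u) (_ : NormedAddCommGroup H) (_ : InnerProductSpace ℝ H)
      (_ : CompleteSpace H) (π : G →* (H ≃ₗᵢ[ℝ] H)) (b : G → H),
      IsCocycle π b ∧ ∑ s ∈ S, b s = 0 ∧ ∃ s ∈ S, b s ≠ 0 := by
  obtain ⟨H, _, _, π, δ, hδ⟩ := exists_orthonormal_orbit G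
  choose v hv_energy hv_lap using fun n : ℕ => exists_normalized_almost_harmonic hδ h1 hinv hgen hC
    (Nat.one_div_pos_of_nat (α := ℝ) (n := n))
  have hbd : ∀ s ∈ S, ∃ C, ∀ n, ‖π s (v n) - v n‖ ≤ C := fun s hs =>
    ⟨√(2 * #S), fun n => Real.le_sqrt_of_sq_le <| hv_energy n ▸
      single_le_sum (f := fun s => ‖π s (v n) - v n‖ ^ 2) (fun _ _ => by positivity) hs⟩
  obtain ⟨H', i1, i2, i3, π', b, hb, hlim⟩ :=
    exists_ultralimit_cocycle π v (exists_bound_norm_apply_sub π hgen hbd)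
  refine ⟨H', i1, i2, i3, π', b, hb, ?_, ?_⟩
  · have hzero : Tendsto (fun n => ‖∑ s ∈ S, (π s (v n) - v n)‖ ^ 2) (hyperfilter ℕ) (𝓝 0) := by
      have := (tendsto_one_div_add_atTop_nhds_zero_nat (𝕜 := ℝ)).const_mul ((#S : ℝ) ^ 2)
      rw [mul_zero] at this
      exact squeeze_zero (fun n => by positivity) hv_lap (this.mono_left Nat.hyperfilter_le_atTop)
    simpa using tendsto_nhds_unique (hlim S) hzero
  · by_contra! hcon
    have hzero : Tendsto (fun n => ∑ s ∈ S, ‖π s (v n) - v n‖ ^ 2) (hyperfilter ℕ)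
        (𝓝 (∑ s ∈ S, ‖b s‖ ^ 2)) :=
      tendsto_finsetSum _ fun s _ => by simpa only [sum_singleton] using hlim {s}
    simp only [hv_energy] at hzero
    have h0 := tendsto_nhds_unique hzero tendsto_const_nhds
    rw [sum_eq_zero fun s hs => by simp [hcon s hs]] at h0
    linarith [cast_card_pos ⟨1, h1⟩]

end HarmonicCocycleExistence

section Growth

open scoped Pointwise
open Finset

open Classical in
/-- Every finite subset of `G` has growth at most polynomial of degree `d`. -/
def PolyGrowth (d : ℕ) (G : Type*) [Group G] : Prop :=
  ∀ S : Finset G, ∃ C : ℕ, ∀ n : ℕ, #(S ^ n) ≤ C * (n + 1) ^ d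

variable {G Γ : Type*} [Group G] [Group Γ] {d : ℕ}

lemma polyGrowth_iff [DecidableEq G] :
    PolyGrowth d G ↔ ∀ S : Finset G, ∃ C : ℕ, ∀ n : ℕ, #(S ^ n) ≤ C * (n + 1) ^ d := by
  unfold PolyGrowth
  convert Iff.rfl

lemma PolyGrowth.exists_card_pow_le [DecidableEq G] (h : PolyGrowth d G) (S : Finset G) :
    ∃ C : ℕ, ∀ n : ℕ, #(S ^ n) ≤ C * (n + 1) ^ d :=
  polyGrowth_iff.1 h S

lemma PolyGrowth.of_injective (h : PolyGrowth d G) (f : Γ →* G) (hf : Function.Injective f) :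
    PolyGrowth d Γ := by
  classical
  refine polyGrowth_iff.2 fun S => ?_
  obtain ⟨C, hC⟩ := h.exists_card_pow_le (S.image f)
  refine ⟨C, fun n => ?_⟩
  rw [← card_image_of_injective _ hf, image_pow]
  exact hC n

lemma PolyGrowth.subgroup (h : PolyGrowth d G) (K : Subgroup G) : PolyGrowth d K :=
  h.of_injective K.subtype K.subtype_injective

lemma PolyGrowth.of_surjective (h : PolyGrowth d G) (f : G →* Γ) (hf : Function.Surjective f) :
    PolyGrowth d Γ := by
  classical
  refine polyGrowth_iff.2 fun S => ?_
  obtain ⟨C, hC⟩ := h.exists_card_pow_le (S.image (Function.surjInv hf))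
  refine ⟨C, fun n => ?_⟩
  have : S = (S.image (Function.surjInv hf)).image f := by
    rw [image_image, (Function.rightInverse_surjInv hf).comp_eq_id, image_id]
  rw [this, ← image_pow]
  exact card_image_le.trans (hC n)

end Growth

section SmallElements

open scoped Pointwise commutatorElement
open Finset

lemma commutator_pow_eq {Γ : Type*} [Group Γ] {g s : Γ} (hc : Commute ⁅g, s⁆ g) (m : ℕ) :
    ⁅g ^ m, s⁆ = ⁅g, s⁆ ^ m := by
  have hconj : s * g ^ m * s⁻¹ = (⁅g, s⁆ ^ m)⁻¹ * g ^ m := by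
    rw [← conj_pow, ← inv_pow, ← hc.inv_left.mul_pow, commutatorElement_def]
    congr 1
    group
  calc ⁅g ^ m, s⁆ = g ^ m * (s * g ^ m * s⁻¹)⁻¹ := by rw [commutatorElement_def]; group
    _ = ⁅g, s⁆ ^ m := by rw [hconj, mul_inv_rev, inv_inv, mul_inv_cancel_left]

/-- The ordered products `h n ^ e₀ * h (n + 1) ^ e₁ * ⋯` of `l` factors with exponents below `M`.
When the `h n` tend to `1` fast enough they are pairwise distinct, which bounds the growth of `Γ`
from below. -/
def orderedProducts {Γ : Type*} [Group Γ] [DecidableEq Γ] (h : ℕ → Γ) (M : ℕ) :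
    ℕ → ℕ → Finset Γ
  | _, 0 => 1
  | n, l + 1 => image₂ (fun k p => h n ^ k * p) (range M) (orderedProducts h M (n + 1) l)

section Contractive

variable {Γ A : Type*} [Group Γ] [NormedRing A] {T : Γ →* A}

lemma norm_map_mul_sub_one_le (hT : ∀ g, ‖T g‖ ≤ 1) (g h : Γ) :
    ‖T (g * h) - 1‖ ≤ ‖T g - 1‖ + ‖T h - 1‖ := by
  calc ‖T (g * h) - 1‖ = ‖T g * (T h - 1) + (T g - 1)‖ := by rw [map_mul]; congr 1; noncomm_ring
    _ ≤ ‖T g‖ * ‖T h - 1‖ + ‖T g - 1‖ := norm_add_le_of_le (norm_mul_le _ _) le_rfl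
    _ ≤ 1 * ‖T h - 1‖ + ‖T g - 1‖ := by gcongr; exact hT g
    _ = ‖T g - 1‖ + ‖T h - 1‖ := by ring

lemma norm_map_inv_sub_one_le (hT : ∀ g, ‖T g‖ ≤ 1) (g : Γ) : ‖T g⁻¹ - 1‖ ≤ ‖T g - 1‖ := by
  calc ‖T g⁻¹ - 1‖ = ‖T g⁻¹ * (T g - 1)‖ := by
        rw [mul_sub, ← map_mul, inv_mul_cancel, map_one, mul_one, norm_sub_rev]
    _ ≤ ‖T g⁻¹‖ * ‖T g - 1‖ := norm_mul_le _ _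
    _ ≤ 1 * ‖T g - 1‖ := by gcongr; exact hT _
    _ = ‖T g - 1‖ := one_mul _

lemma norm_map_pow_sub_one_le (hT : ∀ g, ‖T g‖ ≤ 1) (g : Γ) (n : ℕ) :
    ‖T (g ^ n) - 1‖ ≤ n * ‖T g - 1‖ := by
  induction n with
  | zero => simp
  | succ n ih =>
    rw [pow_succ]
    push_cast
    linarith [norm_map_mul_sub_one_le hT (g ^ n) g]

lemma norm_map_sub_one_le_two (hT : ∀ g, ‖T g‖ ≤ 1) (g : Γ) : ‖T g - 1‖ ≤ 2 := by
  calc ‖T g - 1‖ = ‖T g - T 1‖ := by rw [map_one]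
    _ ≤ 1 + 1 := norm_sub_le_of_le (hT g) (hT 1)
    _ = 2 := one_add_one_eq_two

lemma norm_map_commutator_sub_one_le (hT : ∀ g, ‖T g‖ ≤ 1) (g h : Γ) :
    ‖T ⁅g, h⁆ - 1‖ ≤ 2 * ‖T g - 1‖ * ‖T h - 1‖ := by
  have hcomm : (T g - 1) * (T h - 1) - (T h - 1) * (T g - 1) = T (g * h) - T (h * g) := by
    simp only [map_mul]; noncomm_ring
  have hfactor : T ⁅g, h⁆ - 1 =
      ((T g - 1) * (T h - 1) - (T h - 1) * (T g - 1)) * T (g⁻¹ * h⁻¹) := by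
    rw [hcomm, sub_mul, ← map_mul, ← map_mul, commutatorElement_def]
    simp [mul_assoc]
  calc ‖T ⁅g, h⁆ - 1‖
      ≤ ‖(T g - 1) * (T h - 1) - (T h - 1) * (T g - 1)‖ * ‖T (g⁻¹ * h⁻¹)‖ :=
        hfactor ▸ norm_mul_le _ _
    _ ≤ (‖T g - 1‖ * ‖T h - 1‖ + ‖T h - 1‖ * ‖T g - 1‖) * 1 := by
        gcongr
        exacts [norm_sub_le_of_le (norm_mul_le _ _) (norm_mul_le _ _), hT _]
    _ = 2 * ‖T g - 1‖ * ‖T h - 1‖ := by ring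

lemma mul_norm_map_commutator_sub_one_lt (hT : ∀ g, ‖T g‖ ≤ 1) {M : ℕ} {g h : Γ}
    (hg : 0 < ‖T g - 1‖) (hh : M * ‖T h - 1‖ ≤ 1 / 32) :
    8 * M * ‖T ⁅g, h⁆ - 1‖ < ‖T g - 1‖ := by
  calc 8 * M * ‖T ⁅g, h⁆ - 1‖ ≤ 8 * M * (2 * ‖T g - 1‖ * ‖T h - 1‖) := by
        gcongr; exact norm_map_commutator_sub_one_le hT g h
    _ = 16 * ‖T g - 1‖ * (M * ‖T h - 1‖) := by ring
    _ ≤ 16 * ‖T g - 1‖ * (1 / 32) := by gcongr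
    _ < ‖T g - 1‖ := by linarith

lemma norm_map_sub_one_le_of_mem_orderedProducts [DecidableEq Γ] {h : ℕ → Γ} {M : ℕ}
    (hT : ∀ g, ‖T g‖ ≤ 1)
    (hdec : ∀ n, 2 * ‖T (h (n + 1)) - 1‖ ≤ ‖T (h n) - 1‖) (l n : ℕ) {p : Γ}
    (hp : p ∈ orderedProducts h M n l) : ‖T p - 1‖ ≤ 2 * M * ‖T (h n) - 1‖ := by
  induction l generalizing n p with
  | zero =>
    rw [mem_one.1 hp, map_one, sub_self, norm_zero]
    positivity
  | succ l ih =>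
    obtain ⟨k, hk, q, hq, rfl⟩ := mem_image₂.1 hp
    have hkM : (k : ℝ) ≤ M := by exact_mod_cast (mem_range.1 hk).le
    calc ‖T (h n ^ k * q) - 1‖ ≤ ‖T (h n ^ k) - 1‖ + ‖T q - 1‖ := norm_map_mul_sub_one_le hT _ _
      _ ≤ k * ‖T (h n) - 1‖ + 2 * M * ‖T (h (n + 1)) - 1‖ := by
          gcongr
          exacts [norm_map_pow_sub_one_le hT _ _, ih _ hq]
      _ ≤ M * ‖T (h n) - 1‖ + M * ‖T (h n) - 1‖ := by
          rw [mul_comm 2 (M : ℝ), mul_assoc (M : ℝ)]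
          gcongr
          exact hdec n
      _ = 2 * M * ‖T (h n) - 1‖ := by ring

variable [NormedAlgebra ℝ A]

lemma norm_map_pow_sub_one_ge (hT : ∀ g, ‖T g‖ ≤ 1) (g : Γ) (n : ℕ) :
    n * ‖T g - 1‖ - (n * ‖T g - 1‖) ^ 2 ≤ ‖T (g ^ n) - 1‖ := by
  have hterm : ∀ k ∈ range n, ‖(1 - T g ^ k) * (T g - 1)‖ ≤ n * ‖T g - 1‖ * ‖T g - 1‖ := by
    intro k hk
    refine (norm_mul_le _ _).trans ?_
    rw [norm_sub_rev, ← map_pow]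
    gcongr
    refine (norm_map_pow_sub_one_le hT g k).trans ?_
    gcongr
    exact (mem_range.1 hk).le
  have hsum : (n : ℝ) • (T g - 1) - (T (g ^ n) - 1) =
      ∑ k ∈ range n, (1 - T g ^ k) * (T g - 1) := by
    rw [← sum_mul, sum_sub_distrib, sub_mul, geom_sum_mul, ← map_pow, sum_const, card_range,
      smul_one_mul, Nat.cast_smul_eq_nsmul]
  have hlinear : ‖(n : ℝ) • (T g - 1) - (T (g ^ n) - 1)‖ ≤ (n * ‖T g - 1‖) ^ 2 := by
    rw [hsum]
    refine (norm_sum_le_of_le _ hterm).trans_eq ?_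
    rw [sum_const, card_range, nsmul_eq_mul]
    ring
  have := (norm_sub_norm_le _ _).trans hlinear
  rw [norm_smul, Real.norm_natCast] at this
  linarith

lemma map_eq_one_of_forall_norm_map_pow_sub_one_le (hT : ∀ g, ‖T g‖ ≤ 1) {g : Γ}
    (hg : ∀ n : ℕ, ‖T (g ^ n) - 1‖ ≤ 1 / 8) : T g = 1 := by
  by_contra hne
  have hpos : 0 < ‖T g - 1‖ := norm_pos_iff.2 (sub_ne_zero.2 hne)
  have hle : ‖T g - 1‖ ≤ 1 / 8 := by simpa using hg 1
  set n := ⌈3 / 8 / ‖T g - 1‖⌉₊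
  have hlower : 3 / 8 ≤ n * ‖T g - 1‖ := (div_le_iff₀ hpos).1 (Nat.le_ceil _)
  have hupper : n * ‖T g - 1‖ ≤ 1 / 2 := by
    have := mul_lt_mul_of_pos_right (Nat.ceil_lt_add_one (by positivity : 0 ≤ 3 / 8 / ‖T g - 1‖))
      hpos
    rw [add_mul, div_mul_cancel₀ _ hpos.ne', one_mul] at this
    exact this.le.trans (by linarith)
  nlinarith [norm_map_pow_sub_one_ge hT g n, hg n]

lemma map_commutator_eq_one (hT : ∀ g, ‖T g‖ ≤ 1) {g s : Γ} (hs : ‖T s - 1‖ ≤ 1 / 32)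
    (hc : Commute ⁅g, s⁆ g) : T ⁅g, s⁆ = 1 := by
  refine map_eq_one_of_forall_norm_map_pow_sub_one_le hT fun m => ?_
  rw [← commutator_pow_eq hc m]
  calc ‖T ⁅g ^ m, s⁆ - 1‖ ≤ 2 * ‖T (g ^ m) - 1‖ * ‖T s - 1‖ := norm_map_commutator_sub_one_le hT _ _
    _ ≤ 2 * 2 * (1 / 32) := by gcongr; exact norm_map_sub_one_le_two hT _
    _ = 1 / 8 := by norm_num

lemma norm_map_sub_one_le_two_mul_norm_map_pow_sub_one (hT : ∀ g, ‖T g‖ ≤ 1) {g : Γ} {n : ℕ}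
    (hn : n ≠ 0) (hg : n * ‖T g - 1‖ ≤ 1 / 2) : ‖T g - 1‖ ≤ 2 * ‖T (g ^ n) - 1‖ := by
  have hle : 1 * ‖T g - 1‖ ≤ n * ‖T g - 1‖ := by
    gcongr
    exact_mod_cast Nat.one_le_iff_ne_zero.2 hn
  nlinarith [norm_map_pow_sub_one_ge hT g n, norm_nonneg (T g - 1)]

lemma exists_commutator_ne_one (hT : ∀ g, ‖T g‖ ≤ 1) (hinj : Function.Injective T) {F : Set Γ}
    (hF : ∀ s ∈ F, ‖T s - 1‖ ≤ 1 / 32) {g s : Γ} (hg : g ∈ Subgroup.closure F) (hs : s ∈ F)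
    (hgs : ⁅g, s⁆ ≠ 1) : ∃ t ∈ F, ⁅⁅g, s⁆, t⁆ ≠ 1 := by
  by_contra! hall
  have hle : Subgroup.closure F ≤ Subgroup.centralizer {⁅g, s⁆} :=
    (Subgroup.closure_le _).2 fun t ht => Subgroup.mem_centralizer_singleton_iff.2
      (commutatorElement_eq_one_iff_mul_comm.1 (hall t ht)).symm
  have hcomm : Commute ⁅g, s⁆ g := (Subgroup.mem_centralizer_singleton_iff.1 (hle hg)).symm
  exact hgs (hinj ((map_commutator_eq_one hT (hF s hs) hcomm).trans (map_one T).symm))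

lemma exists_iterated_commutators (hT : ∀ g, ‖T g‖ ≤ 1) (hinj : Function.Injective T)
    {F : Set Γ} (hF : ∀ s ∈ F, ‖T s - 1‖ ≤ 1 / 32) {s t : Γ} (hs : s ∈ F) (ht : t ∈ F)
    (hst : ¬ Commute s t) :
    ∃ h : ℕ → Γ, h 0 ∈ F ∧ (∀ n, h n ≠ 1) ∧ ∀ n, ∃ r ∈ F, h (n + 1) = ⁅h n, r⁆ := by
  let Good : Set Γ := {g | g ∈ Subgroup.closure F ∧ ∃ r ∈ F, ⁅g, r⁆ ≠ 1}
  have hnext : ∀ g : Good, ∃ g' : Good, ∃ r ∈ F, (g' : Γ) = ⁅(g : Γ), r⁆ := by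
    rintro ⟨g, hg, r, hr, hgr⟩
    have hr' := Subgroup.subset_closure hr
    exact ⟨⟨⁅g, r⁆, mul_mem (mul_mem (mul_mem hg hr') (inv_mem hg)) (inv_mem hr'),
      exists_commutator_ne_one hT hinj hF hg hr hgr⟩, r, hr, rfl⟩
  choose next r hr hnext using hnext
  let h (n : ℕ) : Good := next^[n]
    ⟨s, Subgroup.subset_closure hs, t, ht, mt commutatorElement_eq_one_iff_commute.1 hst⟩
  refine ⟨fun n => h n, hs, fun n hn => ?_, fun n => ⟨r (h n), hr _, ?_⟩⟩
  · obtain ⟨r', -, hr'⟩ := (h n).2.2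
    exact hr' (by rw [show (h n : Γ) = 1 from hn, commutatorElement_one_left])
  · rw [← hnext]
    exact congrArg _ (Function.iterate_succ_apply' next n _)

section OrderedProducts

variable [DecidableEq Γ] {h : ℕ → Γ} {M : ℕ}

lemma pow_mul_ne_pow_mul_of_mem_orderedProducts (hT : ∀ g, ‖T g‖ ≤ 1) (hM : 1 ≤ M)
    (hdec : ∀ n, 8 * M * ‖T (h (n + 1)) - 1‖ < ‖T (h n) - 1‖) {l n e f : ℕ}
    (hsmall : M * ‖T (h n) - 1‖ ≤ 1 / 2) (he : e < M) (hfe : f < e) {p q : Γ}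
    (hp : p ∈ orderedProducts h M (n + 1) l) (hq : q ∈ orderedProducts h M (n + 1) l) :
    h n ^ e * p ≠ h n ^ f * q := by
  intro heq
  have hM' : (1 : ℝ) ≤ M := by exact_mod_cast hM
  have hhalf : ∀ n, 2 * ‖T (h (n + 1)) - 1‖ ≤ ‖T (h n) - 1‖ := fun n => by
    nlinarith [hdec n, norm_nonneg (T (h (n + 1)) - 1)]
  have hquot : h n ^ (e - f) = q * p⁻¹ := by
    rw [eq_mul_inv_iff_mul_eq, ← mul_right_inj (h n ^ f), ← mul_assoc, ← pow_add,
      Nat.add_sub_cancel' hfe.le, heq]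
  have hexp : ((e - f : ℕ) : ℝ) * ‖T (h n) - 1‖ ≤ 1 / 2 := by
    refine le_trans ?_ hsmall
    gcongr
    lia
  have hlower := norm_map_sub_one_le_two_mul_norm_map_pow_sub_one hT
    (Nat.sub_ne_zero_of_lt hfe) hexp
  rw [hquot] at hlower
  linarith [hdec n, norm_map_mul_sub_one_le hT q p⁻¹, norm_map_inv_sub_one_le hT p,
    norm_map_sub_one_le_of_mem_orderedProducts hT hhalf l (n + 1) hp,
    norm_map_sub_one_le_of_mem_orderedProducts hT hhalf l (n + 1) hq]

lemma card_orderedProducts (hT : ∀ g, ‖T g‖ ≤ 1) (hM : 1 ≤ M)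
    (hdec : ∀ n, 8 * M * ‖T (h (n + 1)) - 1‖ < ‖T (h n) - 1‖)
    (hsmall : ∀ n, M * ‖T (h n) - 1‖ ≤ 1 / 2) (l n : ℕ) :
    #(orderedProducts h M n l) = M ^ l := by
  induction l generalizing n with
  | zero => exact card_one
  | succ l ih =>
    rw [orderedProducts, card_image₂_iff.2, card_range, ih, pow_succ']
    rintro ⟨e, p⟩ ⟨he, hp⟩ ⟨f, q⟩ ⟨hf, hq⟩ (heq : h n ^ e * p = h n ^ f * q)
    rw [mem_coe, mem_range] at he hf
    rcases lt_trichotomy e f with hef | rfl | hfe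
    · exact absurd heq.symm
        (pow_mul_ne_pow_mul_of_mem_orderedProducts hT hM hdec (hsmall n) hf hef hq hp)
    · rw [mul_left_cancel heq]
    · exact absurd heq
        (pow_mul_ne_pow_mul_of_mem_orderedProducts hT hM hdec (hsmall n) he hfe hp hq)

end OrderedProducts

end Contractive

section WordLength

variable {Γ : Type*} [Group Γ] [DecidableEq Γ] {S : Finset Γ} {h : ℕ → Γ}

lemma mem_pow_of_iterated_commutators (hinv : S⁻¹ = S) (h0 : h 0 ∈ S)
    (hsucc : ∀ n, ∃ r ∈ S, h (n + 1) = ⁅h n, r⁆) (n : ℕ) : h n ∈ S ^ (3 * 2 ^ n - 2) := by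
  induction n with
  | zero => simpa using h0
  | succ n ih =>
    obtain ⟨r, hr, heq⟩ := hsucc n
    have hr' : r⁻¹ ∈ S := hinv ▸ inv_mem_inv hr
    have ih' : (h n)⁻¹ ∈ S ^ (3 * 2 ^ n - 2) := by
      rw [← hinv, inv_pow]
      exact inv_mem_inv ih
    have hlen : 3 * 2 ^ (n + 1) - 2 = (3 * 2 ^ n - 2) + 1 + (3 * 2 ^ n - 2) + 1 := by
      have := Nat.one_le_two_pow (n := n)
      lia
    rw [heq, commutatorElement_def, hlen, pow_succ, pow_add, pow_succ]
    exact mul_mem_mul (mul_mem_mul (mul_mem_mul ih hr) ih') hr'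

lemma orderedProducts_subset_pow (h1 : 1 ∈ S) (hS : ∀ n, h n ∈ S ^ (3 * 2 ^ n)) (M l n : ℕ) :
    orderedProducts h M n l ⊆ S ^ (3 * M * (2 ^ n * (2 ^ l - 1))) := by
  induction l generalizing n with
  | zero => simp [orderedProducts]
  | succ l ih =>
    intro p hp
    obtain ⟨k, hk, q, hq, rfl⟩ := mem_image₂.1 hp
    have hpow : h n ^ k ∈ S ^ (3 * 2 ^ n * k) := pow_mul S _ k ▸ pow_mem_pow (hS n)
    refine pow_subset_pow_right h1 ?_ (pow_add S _ _ ▸ mul_mem_mul hpow (ih _ hq))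
    have hkM : k ≤ M := (mem_range.1 hk).le
    obtain ⟨c, hc⟩ := Nat.exists_eq_add_of_le (Nat.one_le_two_pow (n := l))
    rw [pow_succ 2 l, pow_succ 2 n, hc, show (1 + c) * 2 - 1 = 1 + 2 * c by lia,
      Nat.add_sub_cancel_left]
    calc 3 * 2 ^ n * k + 3 * M * (2 ^ n * 2 * c) ≤ 3 * 2 ^ n * M + 3 * M * (2 ^ n * 2 * c) := by
          gcongr
      _ = 3 * M * (2 ^ n * (1 + 2 * c)) := by ring

end WordLength

lemma exists_mul_pow_lt_two_pow_pow (C a d : ℕ) :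
    ∃ l : ℕ, C * (a * 2 ^ l) ^ d < (2 ^ (d + 1)) ^ l := by
  refine ⟨C * a ^ d, ?_⟩
  set l := C * a ^ d
  calc C * (a * 2 ^ l) ^ d = l * 2 ^ (l * d) := by rw [mul_pow, ← mul_assoc, ← pow_mul]
    _ < 2 ^ l * 2 ^ (l * d) := by gcongr; exact Nat.lt_two_pow_self
    _ = (2 ^ (d + 1)) ^ l := by rw [← pow_add, ← pow_mul]; ring_nf

lemma exists_symm_superset {G : Type*} [Group G] [DecidableEq G] (F : Finset G) :
    ∃ S : Finset G, 1 ∈ S ∧ S⁻¹ = S ∧ F ⊆ S := by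
  refine ⟨insert 1 (F ∪ F⁻¹), mem_insert_self _ _, ?_,
    subset_union_left.trans (subset_insert _ _)⟩
  ext x
  simp only [Finset.mem_inv', mem_insert, mem_union, inv_inv, inv_eq_one, or_comm (a := x ∈ F)]

variable {Γ A : Type*} [Group Γ] [NormedRing A] [NormedAlgebra ℝ A] {T : Γ →* A} {d : ℕ}

lemma not_polyGrowth_of_norm_map_sub_one_succ_lt [DecidableEq Γ] {S : Finset Γ} {h : ℕ → Γ}
    (hT : ∀ g, ‖T g‖ ≤ 1) (h1S : 1 ∈ S) (hlen : ∀ n, h n ∈ S ^ (3 * 2 ^ n))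
    (hdec : ∀ n, 8 * (2 ^ (d + 1) : ℕ) * ‖T (h (n + 1)) - 1‖ < ‖T (h n) - 1‖)
    (hsmall : ∀ n, (2 ^ (d + 1) : ℕ) * ‖T (h n) - 1‖ ≤ 1 / 2) : ¬ PolyGrowth d Γ := by
  intro hG
  set M : ℕ := 2 ^ (d + 1)
  have hM1 : 1 ≤ M := Nat.one_le_two_pow
  obtain ⟨C, hC⟩ := hG.exists_card_pow_le S
  obtain ⟨l, hl⟩ := exists_mul_pow_lt_two_pow_pow C (4 * M) d
  refine hl.not_ge ?_
  calc M ^ l = #(orderedProducts h M 0 l) := (card_orderedProducts hT hM1 hdec hsmall l 0).symm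
    _ ≤ #(S ^ (3 * M * (2 ^ 0 * (2 ^ l - 1)))) :=
        card_le_card (orderedProducts_subset_pow h1S hlen M l 0)
    _ ≤ C * (3 * M * (2 ^ 0 * (2 ^ l - 1)) + 1) ^ d := hC _
    _ ≤ C * (4 * M * 2 ^ l) ^ d := by
        gcongr
        have : 1 ≤ M * 2 ^ l := Nat.mul_pos hM1 (Nat.two_pow_pos l)
        calc 3 * M * (2 ^ 0 * (2 ^ l - 1)) + 1 ≤ 3 * M * 2 ^ l + M * 2 ^ l := by
              gcongr; simp
          _ = 4 * M * 2 ^ l := by ring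

/- If `s` and `t` did not commute, iterated commutators of them would converge to `1` geometrically,
but never reach it, and their ordered products would be too many. -/
lemma PolyGrowth.commute_of_norm_map_sub_one_le (hG : PolyGrowth d Γ) (hT : ∀ g, ‖T g‖ ≤ 1)
    (hinj : Function.Injective T) {s t : Γ} (hs : ‖T s - 1‖ ≤ 1 / (32 * 2 ^ (d + 1)))
    (ht : ‖T t - 1‖ ≤ 1 / (32 * 2 ^ (d + 1))) : Commute s t := by
  classical
  by_contra hst
  set M : ℕ := 2 ^ (d + 1) with hM
  have hM1 : 1 ≤ M := Nat.one_le_two_pow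
  have hF : ∀ r ∈ ({s, t} : Set Γ), M * ‖T r - 1‖ ≤ 1 / 32 := by
    have hε : M * (1 / (32 * 2 ^ (d + 1)) : ℝ) = 1 / 32 := by rw [hM]; push_cast; field_simp
    rintro r (rfl | rfl) <;> rw [← hε] <;> gcongr
  have hF1 : ∀ r ∈ ({s, t} : Set Γ), ‖T r - 1‖ ≤ 1 / 32 := fun r hr =>
    (le_mul_of_one_le_left (norm_nonneg _) (by exact_mod_cast hM1)).trans (hF r hr)
  obtain ⟨h, h0, hne, hsucc⟩ := exists_iterated_commutators hT hinj hF1 (Set.mem_insert s {t})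
    (Set.mem_insert_of_mem s rfl) hst
  have hdec : ∀ n, 8 * M * ‖T (h (n + 1)) - 1‖ < ‖T (h n) - 1‖ := by
    intro n
    obtain ⟨r, hr, heq⟩ := hsucc n
    have hpos : 0 < ‖T (h n) - 1‖ :=
      norm_pos_iff.2 (sub_ne_zero.2 fun h => hne n (hinj (h.trans (map_one T).symm)))
    exact heq ▸ mul_norm_map_commutator_sub_one_lt hT hpos (hF r hr)
  have hsmall : ∀ n, M * ‖T (h n) - 1‖ ≤ 1 / 2 := by
    have hanti : Antitone fun n => ‖T (h n) - 1‖ := antitone_nat_of_succ_le fun n => by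
      have : (1 : ℝ) ≤ M := by exact_mod_cast hM1
      nlinarith [hdec n, norm_nonneg (T (h (n + 1)) - 1)]
    intro n
    calc M * ‖T (h n) - 1‖ ≤ M * ‖T (h 0) - 1‖ := by gcongr; exact hanti n.zero_le
      _ ≤ 1 / 2 := (hF _ h0).trans (by norm_num)
  obtain ⟨S, h1S, hinv, hFS⟩ := exists_symm_superset ({s, t} : Finset Γ)
  replace hFS : ∀ r ∈ ({s, t} : Set Γ), r ∈ S := fun r hr => hFS (by simpa using hr)
  have hlen : ∀ n, h n ∈ S ^ (3 * 2 ^ n) := fun n => pow_subset_pow_right h1S (Nat.sub_le _ 2)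
    (mem_pow_of_iterated_commutators hinv (hFS _ h0)
      (fun n => (hsucc n).imp fun r hr => ⟨hFS r hr.1, hr.2⟩) n)
  exact not_polyGrowth_of_norm_map_sub_one_succ_lt hT h1S hlen hdec hsmall hG

end SmallElements

section VirtualIntegerQuotient

open scoped Pointwise IsMulCommutative
open Finset

universe u

lemma finiteIndex_closure_setOf_norm_map_sub_one_le {Γ A : Type*} [Group Γ] [NormedRing A]
    [ProperSpace A] {T : Γ →* A} (hT : ∀ g, ‖T g‖ ≤ 1) {ε : ℝ} (hε : 0 < ε) :
    (Subgroup.closure {g | ‖T g - 1‖ ≤ ε}).FiniteIndex := by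
  set K := Subgroup.closure {g | ‖T g - 1‖ ≤ ε}
  obtain ⟨t, -, htfin, ht⟩ := Metric.finite_approx_of_totallyBounded
    (isCompact_closedBall (0 : A) 1).totallyBounded (ε / 2) (half_pos hε)
  have hcov : ∀ g, ∃ y : t, dist (T g) y < ε / 2 := fun g => by
    simpa using ht (show T g ∈ Metric.closedBall (0 : A) 1 by simpa using hT g)
  choose c hc using hcov
  have : Finite t := htfin
  have : Finite (Γ ⧸ K) := by
    refine Finite.of_injective (fun q : Γ ⧸ K => c q.out) fun q r (hqr : c q.out = c r.out) => ?_
    rw [← q.out_eq', ← r.out_eq', QuotientGroup.eq]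
    refine Subgroup.subset_closure ?_
    calc ‖T (q.out⁻¹ * r.out) - 1‖ = ‖T q.out⁻¹ * (T r.out - T q.out)‖ := by
          rw [mul_sub, ← map_mul, ← map_mul, inv_mul_cancel, map_one]
      _ ≤ ‖T q.out⁻¹‖ * ‖T r.out - T q.out‖ := norm_mul_le _ _
      _ ≤ 1 * dist (T r.out) (T q.out) := by rw [dist_eq_norm]; gcongr; exact hT _
      _ ≤ dist (T r.out) (c r.out) + dist (T q.out) (c q.out) := by
          rw [one_mul, ← hqr]; exact dist_triangle_right _ _ _
      _ ≤ ε := by linarith [hc q.out, hc r.out]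
  exact Subgroup.finiteIndex_of_finite_quotient

theorem PolyGrowth.exists_finiteIndex_isMulCommutative {Γ A : Type*} [Group Γ] [NormedRing A]
    [NormedAlgebra ℝ A] [ProperSpace A] {T : Γ →* A} {d : ℕ} (hG : PolyGrowth d Γ)
    (hT : ∀ g, ‖T g‖ ≤ 1) (hinj : Function.Injective T) :
    ∃ K : Subgroup Γ, K.FiniteIndex ∧ IsMulCommutative K :=
  ⟨_, finiteIndex_closure_setOf_norm_map_sub_one_le hT (by positivity),
    Subgroup.isMulCommutative_closure fun _ hs _ ht =>
      hG.commute_of_norm_map_sub_one_le hT hinj hs ht⟩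

lemma PolyGrowth.exists_finiteIndex_isMulCommutative_of_isometries {W : Type*}
    [NormedAddCommGroup W] [InnerProductSpace ℝ W] [FiniteDimensional ℝ W]
    {Γ : Subgroup (W ≃ₗᵢ[ℝ] W)} {d : ℕ} (hΓ : PolyGrowth d Γ) :
    ∃ K : Subgroup Γ, K.FiniteIndex ∧ IsMulCommutative K := by
  let T : Γ →* (W →L[ℝ] W) :=
    { toFun g := (g : W ≃ₗᵢ[ℝ] W).toContinuousLinearEquiv.toContinuousLinearMap
      map_one' := rfl
      map_mul' _ _ := rfl }
  have hT : ∀ g, ‖T g‖ ≤ 1 := fun g => ContinuousLinearMap.opNorm_le_bound _ zero_le_one fun x =>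
    ((g : W ≃ₗᵢ[ℝ] W).norm_map x).le.trans_eq (one_mul _).symm
  have : ProperSpace (W →L[ℝ] W) := FiniteDimensional.proper ℝ _
  exact hΓ.exists_finiteIndex_isMulCommutative hT fun g h hgh =>
    Subtype.ext (LinearIsometryEquiv.ext fun x => DFunLike.congr_fun hgh x)

lemma exists_surjective_int_of_infinite_commGroup (A : Type*) [CommGroup A] [Group.FG A]
    [Infinite A] : ∃ φ : A →* Multiplicative ℤ, Function.Surjective φ := by
  obtain ⟨n, ι, _, p, hp, e, ⟨f⟩⟩ :=
    AddCommGroup.equiv_free_prod_directSum_zmod (Additive A)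
  obtain _ | n := n
  · have : ∀ i, NeZero (p i ^ e i) := fun i => ⟨pow_ne_zero _ (hp i).ne_zero⟩
    have : Finite (DirectSum ι fun i => ZMod (p i ^ e i)) :=
      Finite.of_equiv _ (DirectSum.addEquivProd fun i => ZMod (p i ^ e i)).symm.toEquiv
    have : Finite (Additive A) := Finite.of_equiv _ f.symm.toEquiv
    exact (not_finite (Additive A)).elim
  · let ψ : Additive A →+ ℤ :=
      ((Finsupp.applyAddHom (0 : Fin (n + 1))).comp (AddMonoidHom.fst _ _)).comp f.toAddMonoidHom
    have hψ : Function.Surjective ψ := fun z =>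
      ⟨f.symm (Finsupp.single 0 z, 0), by simp [ψ]⟩
    exact ⟨AddMonoidHom.toMultiplicativeRight ψ, hψ⟩

lemma exists_surjective_int_of_infinite_range {G A : Type*} [Group G] [Group.FG G] [CommGroup A]
    (f : G →* A) (hf : (Set.range f).Infinite) :
    ∃ φ : G →* Multiplicative ℤ, Function.Surjective φ := by
  have : Infinite f.range := hf.to_subtype
  obtain ⟨φ, hφ⟩ := exists_surjective_int_of_infinite_commGroup f.range
  exact ⟨φ.comp f.rangeRestrict, hφ.comp f.rangeRestrict_surjective⟩

lemma exists_finiteIndex_surjective_int_of_infinite_isMulCommutative {G Γ : Type*} [Group G]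
    [Group.FG G] [Group Γ] {f : G →* Γ} (hf : Function.Surjective f) (K : Subgroup Γ)
    [K.FiniteIndex] [IsMulCommutative K] [Infinite K] :
    ∃ L : Subgroup G, L.FiniteIndex ∧ ∃ φ : L →* Multiplicative ℤ, Function.Surjective φ := by
  have hfi : (K.comap f).FiniteIndex :=
    ⟨by rw [Subgroup.index_comap_of_surjective K hf]; exact Subgroup.FiniteIndex.index_ne_zero⟩
  refine ⟨K.comap f, hfi, exists_surjective_int_of_infinite_range (A := K)
    (f.subgroupComap K) ?_⟩
  rw [(f.subgroupComap_surjective_of_surjective K hf).range_eq]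
  exact Set.infinite_univ

section Cocycle

variable {G H : Type*} [Group G] [NormedAddCommGroup H] [InnerProductSpace ℝ H]
  {π : G →* (H ≃ₗᵢ[ℝ] H)} {b : G → H} {S : Finset G}

/-- The restriction of an orthogonal representation to an invariant subspace. -/
def restrictRep (π : G →* (H ≃ₗᵢ[ℝ] H)) (W : Submodule ℝ H) (hW : ∀ g, ∀ w ∈ W, π g w ∈ W) :
    G →* (W ≃ₗᵢ[ℝ] W) where
  toFun g :=
    { toLinearEquiv := LinearEquiv.ofLinearMap
        ((π g).toLinearEquiv.toLinearMap.restrict (hW g))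
        ((π g⁻¹).toLinearEquiv.toLinearMap.restrict (hW g⁻¹))
        (by ext x; simp) (by ext x; simp)
      norm_map' := fun x => (π g).norm_map x }
  map_one' := by ext x; simp
  map_mul' g h := by ext x; simp

namespace IsCocycle

lemma map_inv (hb : IsCocycle π b) (g : G) : b g⁻¹ = -π g⁻¹ (b g) :=
  eq_neg_of_add_eq_zero_left (by rw [← hb, inv_mul_cancel, hb.map_one])

lemma eq_zero_of_forall_mem (hb : IsCocycle π b) (hgen : Subgroup.closure (S : Set G) = ⊤)
    (h : ∀ s ∈ S, b s = 0) (g : G) : b g = 0 := by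
  have hg : g ∈ Subgroup.closure (S : Set G) := hgen ▸ Subgroup.mem_top g
  induction hg using Subgroup.closure_induction with
  | mem x hx => exact h x hx
  | one => exact hb.map_one
  | mul x y _ _ hx hy => rw [hb, hx, hy, _root_.map_zero, add_zero]
  | inv x _ hx => rw [hb.map_inv, hx, _root_.map_zero, neg_zero]

lemma orthogonalProjectionOnto (hb : IsCocycle π b) {W : Submodule ℝ H}
    [W.HasOrthogonalProjection] (hW : ∀ g, ∀ w ∈ W, π g w ∈ W) :
    IsCocycle (restrictRep π W hW) fun g => W.orthogonalProjectionOnto (b g) := by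
  have hequiv : ∀ g x, W.orthogonalProjectionOnto (π g x) =
      restrictRep π W hW g (W.orthogonalProjectionOnto x) := by
    refine fun g x => ext_inner_right ℝ fun w => ?_
    have hw : ((restrictRep π W hW g⁻¹ w : W) : H) = π g⁻¹ w := rfl
    rw [inner_apply_left_eq, Submodule.inner_orthogonalProjectionOnto_eq_of_mem_right,
      Submodule.inner_orthogonalProjectionOnto_eq_of_mem_right, inner_apply_left_eq, hw]
  exact fun g h => by simp only [hb g h, map_add, hequiv]

lemma exists_bound_of_finiteIndex (hb : IsCocycle π b) (K : Subgroup G) [K.FiniteIndex] {B : ℝ}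
    (hK : ∀ g ∈ K, ‖b g‖ ≤ B) : ∃ D, ∀ g, ‖b g‖ ≤ D := by
  have := Subgroup.finite_quotient_of_finiteIndex (H := K)
  obtain ⟨D, hD⟩ := (Set.finite_range fun q : G ⧸ K => ‖b q.out‖).bddAbove
  refine ⟨D + B, fun g => ?_⟩
  set q : G := (QuotientGroup.mk g : G ⧸ K).out
  have hmem : q⁻¹ * g ∈ K := QuotientGroup.eq.1 (QuotientGroup.out_eq' _)
  calc ‖b g‖ = ‖b q + π q (b (q⁻¹ * g))‖ := by rw [← hb, mul_inv_cancel_left]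
    _ ≤ ‖b q‖ + ‖π q (b (q⁻¹ * g))‖ := norm_add_le _ _
    _ ≤ D + B := by
        rw [LinearIsometryEquiv.norm_map]
        exact add_le_add (hD ⟨_, rfl⟩) (hK _ hmem)

lemma eq_zero_of_bounded (hb : IsCocycle π b) (hharm : ∑ s ∈ S, b s = 0) {D : ℝ}
    (hD : ∀ g, ‖b g‖ ≤ D) {s : G} (hs : s ∈ S) : b s = 0 := by
  by_contra hbs
  have hS : S.Nonempty := ⟨s, hs⟩
  have hpos : 0 < stepEnergy S b := by
    refine div_pos ((pow_pos (norm_pos_iff.2 hbs) 2).trans_le ?_) (cast_card_pos hS)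
    exact single_le_sum (f := fun s => ‖b s‖ ^ 2) (fun _ _ => by positivity) hs
  obtain ⟨n, hn⟩ := exists_nat_gt (D ^ 2 / stepEnergy S b)
  rw [div_lt_iff₀ hpos] at hn
  refine hn.not_ge ?_
  calc n * stepEnergy S b = walkMean S n fun g => ‖b g‖ ^ 2 :=
        (hb.walkMean_norm_sq hS hharm n).symm
    _ ≤ walkMean S n fun _ => D ^ 2 :=
        walkMean_mono n fun g => pow_le_pow_left₀ (norm_nonneg _) (hD g) 2
    _ = D ^ 2 := walkMean_const hS n _

/- On the kernel of `π` the cocycle is a homomorphism to the vector space `H`. -/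
lemma exists_surjective_int_of_finite_range [Group.FG G] [Finite π.range] (hb : IsCocycle π b)
    (hharm : ∑ s ∈ S, b s = 0) (hne : ∃ s ∈ S, b s ≠ 0) :
    ∃ φ : π.ker →* Multiplicative ℤ, Function.Surjective φ := by
  have : π.ker.FiniteIndex := Subgroup.finiteIndex_ker π
  let f : π.ker →* Multiplicative H :=
    { toFun g := Multiplicative.ofAdd (b g)
      map_one' := by simp [hb.map_one]
      map_mul' g h := by simp [hb _ _, MonoidHom.mem_ker.1 g.2] }
  refine exists_surjective_int_of_infinite_range f fun hfin => ?_
  obtain ⟨B, hB⟩ := (hfin.image fun w => ‖Multiplicative.toAdd w‖).bddAbove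
  obtain ⟨D, hD⟩ := hb.exists_bound_of_finiteIndex π.ker (B := B) fun g hg =>
    hB ⟨f ⟨g, hg⟩, ⟨_, rfl⟩, rfl⟩
  obtain ⟨s, hs, hbs⟩ := hne
  exact hbs (hb.eq_zero_of_bounded hharm hD hs)

end IsCocycle

end Cocycle

theorem exists_finiteDimensional_harmonic_cocycle {G : Type u} [Group G] [Infinite G]
    [DecidableEq G] {S : Finset G} (h1 : (1 : G) ∈ S) (hinv : ∀ s ∈ S, s⁻¹ ∈ S)
    (hgen : Subgroup.closure (S : Set G) = ⊤) {C d : ℕ} (hC : ∀ n, #(S ^ n) ≤ C * (n + 1) ^ d) :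
    ∃ (W : Type u) (_ : NormedAddCommGroup W) (_ : InnerProductSpace ℝ W)
      (_ : FiniteDimensional ℝ W) (π : G →* (W ≃ₗᵢ[ℝ] W)) (b : G → W),
      IsCocycle π b ∧ ∑ s ∈ S, b s = 0 ∧ ∃ s ∈ S, b s ≠ 0 := by
  obtain ⟨H, _, _, _, π, b, hb, hharm, hne⟩ := exists_harmonic_cocycle h1 hinv hgen hC
  obtain ⟨W, hWfin, hW, g, w, hw, hgw⟩ :=
    hb.exists_finiteDimensional_invariant ⟨1, h1⟩ hinv hgen hC hharm hne
  have hbW := hb.orthogonalProjectionOnto hW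
  refine ⟨W, inferInstance, inferInstance, hWfin, _, _, hbW, ?_, ?_⟩
  · rw [← map_sum, hharm, map_zero]
  · by_contra! hzero
    have hbg := hbW.eq_zero_of_forall_mem hgen hzero g
    refine hgw ?_
    rw [← Submodule.inner_orthogonalProjectionOnto_eq_of_mem_right ⟨w, hw⟩, hbg, inner_zero_left]

theorem PolyGrowth.exists_finiteIndex_surjective_int {G : Type u} [Group G] [Infinite G]
    [Group.FG G] {d : ℕ} (hG : PolyGrowth d G) :
    ∃ K : Subgroup G, K.FiniteIndex ∧ ∃ φ : K →* Multiplicative ℤ, Function.Surjective φ := by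
  classical
  obtain ⟨F, hF⟩ := (Group.FG.out : (⊤ : Subgroup G).FG)
  obtain ⟨S, h1, hinv, hFS⟩ := exists_symm_superset F
  have hgen : Subgroup.closure (S : Set G) = ⊤ :=
    eq_top_iff.2 (hF ▸ Subgroup.closure_mono (coe_subset.2 hFS))
  obtain ⟨C, hC⟩ := hG.exists_card_pow_le S
  obtain ⟨W, _, _, _, π, b, hb, hharm, hne⟩ :=
    exists_finiteDimensional_harmonic_cocycle h1 (fun s hs => hinv ▸ inv_mem_inv hs) hgen hC
  obtain ⟨K, _, _⟩ := (hG.of_surjective π.rangeRestrict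
    π.rangeRestrict_surjective).exists_finiteIndex_isMulCommutative_of_isometries
  obtain _ | _ := finite_or_infinite K
  · have := Subgroup.finite_quotient_of_finiteIndex (H := K)
    have : Finite π.range :=
      Finite.of_equiv _ (Subgroup.groupEquivQuotientProdSubgroup (s := K)).symm
    exact ⟨π.ker, Subgroup.finiteIndex_ker π, hb.exists_surjective_int_of_finite_range hharm hne⟩
  · exact exists_finiteIndex_surjective_int_of_infinite_isMulCommutative
      π.rangeRestrict_surjective K

end VirtualIntegerQuotient

section KernelOfIntegerQuotient

open scoped Pointwise
open Finset

variable {G : Type*} [Group G] {d : ℕ}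

lemma exists_mul_succ_pow_lt_two_pow (C d : ℕ) : ∃ n : ℕ, C * (n + 1) ^ d < 2 ^ n := by
  have hlim := (Filter.tendsto_add_atTop_iff_nat 1).2
    (tendsto_pow_const_div_const_pow_of_one_lt d (r := (2 : ℝ)) (by norm_num))
  obtain ⟨n, hn⟩ := (hlim.eventually_lt_const
    (show (0 : ℝ) < 1 / (2 * (C + 1)) by positivity)).exists
  refine ⟨n, ?_⟩
  rw [div_lt_div_iff₀ (by positivity) (by positivity), pow_succ (2 : ℝ) n] at hn
  have hpos : (0 : ℝ) ≤ ((n + 1 : ℕ) : ℝ) ^ d := by positivity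
  have : (C : ℝ) * ((n + 1 : ℕ) : ℝ) ^ d < 2 ^ n := by linarith
  exact_mod_cast this

/-- The subgroup generated by the conjugates of `e` by `t ^ j` with `0 ≤ j < m`. -/
def conjPowClosure (t e : G) (m : ℕ) : Subgroup G :=
  Subgroup.closure ((fun j : ℕ => MulAut.conj (t ^ j) e) '' Set.Iio m)

/-- The subgroup generated by the conjugates of `e` by all integer powers of `t`. -/
def conjZPowClosure (t e : G) : Subgroup G :=
  Subgroup.closure (Set.range fun i : ℤ => MulAut.conj (t ^ i) e)

lemma conjPowClosure_mono (t e : G) : Monotone (conjPowClosure t e) := fun _ _ hmn =>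
  Subgroup.closure_mono (Set.image_mono (Set.Iio_subset_Iio hmn))

lemma conj_pow_mem_conjPowClosure (t e : G) {j m : ℕ} (hj : j < m) :
    MulAut.conj (t ^ j) e ∈ conjPowClosure t e m :=
  Subgroup.subset_closure ⟨j, hj, rfl⟩

lemma conj_pow_mem_conjPowClosure_of_mem {t e : G} {m : ℕ}
    (hm : MulAut.conj (t ^ m) e ∈ conjPowClosure t e m) (i : ℕ) :
    MulAut.conj (t ^ i) e ∈ conjPowClosure t e m := by
  have hsucc (j : ℕ) : MulAut.conj t (MulAut.conj (t ^ j) e) = MulAut.conj (t ^ (j + 1)) e := by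
    rw [pow_succ', map_mul, MulAut.mul_apply]
  have hstable : conjPowClosure t e m ≤ (conjPowClosure t e m).comap (MulAut.conj t) := by
    refine (Subgroup.closure_le _).2 ?_
    rintro _ ⟨j, hj, rfl⟩
    change MulAut.conj t _ ∈ conjPowClosure t e m
    rw [hsucc]
    obtain hlt | rfl := (Nat.succ_le_of_lt hj).lt_or_eq
    exacts [conj_pow_mem_conjPowClosure t e hlt, hm]
  induction i with
  | zero =>
    obtain rfl | hpos := m.eq_zero_or_pos
    exacts [hm, conj_pow_mem_conjPowClosure t e hpos]
  | succ i ih => exact hsucc i ▸ hstable ih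

lemma mul_inv_pow_mem_conjPowClosure [DecidableEq G] (t e : G) {n : ℕ} {p : G}
    (hp : p ∈ ({t, e * t} : Finset G) ^ n) : p * (t ^ n)⁻¹ ∈ conjPowClosure t e n := by
  induction n generalizing p with
  | zero => simp_all
  | succ n ih =>
    rw [pow_succ, mem_mul] at hp
    obtain ⟨q, hq, s, hs, rfl⟩ := hp
    have hq' := conjPowClosure_mono t e n.le_succ (ih hq)
    rw [mem_insert, mem_singleton] at hs
    obtain rfl | rfl := hs
    · convert hq' using 1
      group
    · convert mul_mem hq' (conj_pow_mem_conjPowClosure t e n.lt_succ_self) using 1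
      rw [MulAut.conj_apply]
      group

/- The two halves `S ^ n * t` and `S ^ n * (e * t)` of `S ^ (n + 1)` can only meet when the `n`th
conjugate of `e` is generated by the earlier ones. -/
lemma two_pow_le_card_pow [DecidableEq G] {t e : G}
    (h : ∀ m, MulAut.conj (t ^ m) e ∉ conjPowClosure t e m) (n : ℕ) :
    2 ^ n ≤ #(({t, e * t} : Finset G) ^ n) := by
  induction n with
  | zero => simp
  | succ n ih =>
    set S : Finset G := {t, e * t}
    have hdisj : Disjoint ((S ^ n).image (· * t)) ((S ^ n).image (· * (e * t))) := by
      simp only [disjoint_left, mem_image]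
      rintro _ ⟨p, hp, rfl⟩ ⟨q, hq, hqp⟩
      obtain rfl : q * e = p := by simpa [← mul_assoc] using hqp
      apply h n
      convert mul_mem (inv_mem (mul_inv_pow_mem_conjPowClosure t e hq))
        (mul_inv_pow_mem_conjPowClosure t e hp) using 1
      rw [MulAut.conj_apply]
      group
    have hsub : (S ^ n).image (· * t) ∪ (S ^ n).image (· * (e * t)) ⊆ S ^ (n + 1) := by
      rw [pow_succ]
      exact union_subset
        (image_subset_iff.2 fun q hq => mul_mem_mul hq (mem_insert_self _ _))
        (image_subset_iff.2 fun q hq => mul_mem_mul hq (by simp [S]))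
    calc 2 ^ (n + 1) = 2 ^ n + 2 ^ n := by ring
      _ ≤ #(S ^ n) + #(S ^ n) := add_le_add ih ih
      _ = #((S ^ n).image (· * t) ∪ (S ^ n).image (· * (e * t))) := by
        rw [card_union_of_disjoint hdisj, card_image_of_injective _ (mul_left_injective _),
          card_image_of_injective _ (mul_left_injective _)]
      _ ≤ #(S ^ (n + 1)) := card_le_card hsub

lemma PolyGrowth.exists_forall_conj_pow_mem_conjPowClosure (h : PolyGrowth d G) (t e : G) :
    ∃ m : ℕ, ∀ i : ℕ, MulAut.conj (t ^ i) e ∈ conjPowClosure t e m := by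
  classical
  suffices ∃ m, MulAut.conj (t ^ m) e ∈ conjPowClosure t e m from
    this.imp fun _ => conj_pow_mem_conjPowClosure_of_mem
  by_contra! hnot
  obtain ⟨C, hC⟩ := h.exists_card_pow_le {t, e * t}
  obtain ⟨n, hn⟩ := exists_mul_succ_pow_lt_two_pow C d
  exact hn.not_ge ((two_pow_le_card_pow hnot n).trans (hC n))

lemma PolyGrowth.fg_conjZPowClosure (h : PolyGrowth d G) (t e : G) :
    (conjZPowClosure t e).FG := by
  obtain ⟨m, hm⟩ := h.exists_forall_conj_pow_mem_conjPowClosure t e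
  obtain ⟨m', hm'⟩ := h.exists_forall_conj_pow_mem_conjPowClosure t⁻¹ e
  have hfg (t : G) (m : ℕ) : (conjPowClosure t e m).FG :=
    (Subgroup.fg_iff _).2 ⟨_, rfl, (Set.finite_Iio m).image _⟩
  suffices conjZPowClosure t e = conjPowClosure t e m ⊔ conjPowClosure t⁻¹ e m' from
    this ▸ (hfg t m).sup (hfg t⁻¹ m')
  refine le_antisymm ((Subgroup.closure_le _).2 ?_) (sup_le ?_ ?_)
  · rintro _ ⟨i, rfl⟩
    obtain ⟨n, rfl | rfl⟩ := i.eq_nat_or_neg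
    · simpa using Subgroup.mem_sup_left (hm n)
    · simpa using Subgroup.mem_sup_right (hm' n)
  · refine Subgroup.closure_mono ?_
    rintro _ ⟨j, -, rfl⟩
    exact ⟨j, by simp⟩
  · refine Subgroup.closure_mono ?_
    rintro _ ⟨j, -, rfl⟩
    exact ⟨-j, by simp⟩

lemma map_conj_conjZPowClosure (t e : G) :
    (conjZPowClosure t e).map (MulAut.conj t) = conjZPowClosure t e := by
  rw [conjZPowClosure, MonoidHom.map_closure, ← Set.range_comp,
    ← (Equiv.addLeft (1 : ℤ)).surjective.range_comp fun i : ℤ => MulAut.conj (t ^ i) e]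
  congr! 2
  ext i
  simp [zpow_add, mul_assoc]

lemma self_mem_conjZPowClosure (t e : G) : e ∈ conjZPowClosure t e :=
  Subgroup.subset_closure ⟨0, by simp⟩

lemma conjZPowClosure_le_of_normal (t : G) {e : G} {N : Subgroup G} [N.Normal] (he : e ∈ N) :
    conjZPowClosure t e ≤ N := by
  refine (Subgroup.closure_le _).2 ?_
  rintro _ ⟨i, rfl⟩
  exact Subgroup.Normal.conj_mem ‹_› e he _

lemma map_zpow_of_map_eq_ofAdd_one {φ : G →* Multiplicative ℤ} {t : G}
    (ht : φ t = Multiplicative.ofAdd 1) (i : ℤ) : φ (t ^ i) = Multiplicative.ofAdd i := by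
  rw [map_zpow, ht, ← ofAdd_zsmul, smul_eq_mul, mul_one]

lemma mul_zpow_toAdd_inv_mem_ker {φ : G →* Multiplicative ℤ} {t : G}
    (ht : φ t = Multiplicative.ofAdd 1) (g : G) : g * (t ^ (φ g).toAdd)⁻¹ ∈ φ.ker := by
  rw [MonoidHom.mem_ker, map_mul, map_inv, map_zpow_of_map_eq_ofAdd_one ht, ofAdd_toAdd,
    mul_inv_cancel]

lemma eq_ker_of_sup_zpowers_eq_top {φ : G →* Multiplicative ℤ} {t : G}
    (ht : φ t = Multiplicative.ofAdd 1) {L : Subgroup G} (hL : L ≤ φ.ker)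
    (hnorm : t ∈ Subgroup.normalizer (L : Set G)) (htop : L ⊔ Subgroup.zpowers t = ⊤) :
    L = φ.ker := by
  refine le_antisymm hL fun g hg => ?_
  have hmul : g ∈ (L : Set G) * (Subgroup.zpowers t : Set G) := by
    rw [← Subgroup.coe_mul_of_right_le_normalizer_left _ _ (by simpa using hnorm), htop]
    exact Set.mem_univ g
  obtain ⟨x, hx, _, ⟨i, rfl⟩, rfl⟩ := hmul
  have hi : φ (t ^ i) = 1 := by
    simpa only [map_mul, MonoidHom.mem_ker.1 (hL hx), one_mul] using MonoidHom.mem_ker.1 hg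
  rw [map_zpow_of_map_eq_ofAdd_one ht, ofAdd_eq_one] at hi
  simpa [hi] using hx

lemma PolyGrowth.fg_ker [Group.FG G] (h : PolyGrowth d G) (φ : G →* Multiplicative ℤ)
    (hφ : Function.Surjective φ) : φ.ker.FG := by
  obtain ⟨t, ht⟩ := hφ (Multiplicative.ofAdd 1)
  obtain ⟨S, hS⟩ := (Group.FG.out : (⊤ : Subgroup G).FG)
  set r : G → G := fun g => g * (t ^ (φ g).toAdd)⁻¹
  set L : Subgroup G := ⨆ s ∈ S, conjZPowClosure t (r s) with hL
  have hLfg : L.FG := Subgroup.FG.biSup_finset S _ fun s _ => h.fg_conjZPowClosure t (r s)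
  suffices L = φ.ker from this ▸ hLfg
  refine eq_ker_of_sup_zpowers_eq_top ht ?_ ?_ ?_
  · exact iSup₂_le fun s _ => conjZPowClosure_le_of_normal t (mul_zpow_toAdd_inv_mem_ker ht s)
  · simp only [Subgroup.mem_normalizer_iff_map_conj_eq, hL, Subgroup.map_iSup,
      map_conj_conjZPowClosure]
  · rw [eq_top_iff, ← hS, Subgroup.closure_le]
    intro s hs
    have hrs : r s ∈ L :=
      Subgroup.mem_iSup_of_mem s (Subgroup.mem_iSup_of_mem hs (self_mem_conjZPowClosure t (r s)))
    simpa [r] using Subgroup.mul_mem_sup hrs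
      (zpow_mem (Subgroup.mem_zpowers t) (φ s).toAdd)

lemma card_pow_mul_succ_le_card_pow [DecidableEq G] {φ : G →* Multiplicative ℤ} {t : G}
    (ht : φ t = Multiplicative.ofAdd 1) (S : Finset φ.ker) (n : ℕ) :
    #(S ^ n) * (n + 1) ≤ #((S.image φ.ker.subtype ∪ {1, t}) ^ (2 * n)) := by
  set S' : Finset G := S.image φ.ker.subtype ∪ {1, t} with hS'
  have hinj : Set.InjOn (fun p : φ.ker × ℕ => (p.1 : G) * t ^ p.2)
      ((S ^ n) ×ˢ range (n + 1) : Finset (φ.ker × ℕ)) := by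
    rintro ⟨x, i⟩ - ⟨y, j⟩ - hxy
    have hφxy := congrArg φ hxy
    simp only [map_mul, MonoidHom.mem_ker.1 x.2, MonoidHom.mem_ker.1 y.2, one_mul,
      ← zpow_natCast, map_zpow_of_map_eq_ofAdd_one ht] at hφxy
    obtain rfl : i = j := by simpa using hφxy
    exact Prod.ext (Subtype.ext (mul_right_cancel hxy)) rfl
  rw [← card_range (n + 1), ← card_product, ← card_image_of_injOn hinj, two_mul, pow_add]
  refine card_le_card (image_subset_iff.2 fun ⟨x, i⟩ hxi => ?_)
  rw [mem_product, mem_range] at hxi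
  have hx : (x : G) ∈ (S.image φ.ker.subtype) ^ n :=
    image_pow φ.ker.subtype S n ▸ mem_image_of_mem _ hxi.1
  exact mul_mem_mul (pow_subset_pow_left subset_union_left hx)
    (pow_subset_pow_right (by simp [hS']) (Nat.lt_succ_iff.1 hxi.2)
      (pow_mem_pow (by simp [hS'])))

lemma PolyGrowth.ker (h : PolyGrowth (d + 1) G) (φ : G →* Multiplicative ℤ)
    (hφ : Function.Surjective φ) : PolyGrowth d φ.ker := by
  classical
  obtain ⟨t, ht⟩ := hφ (Multiplicative.ofAdd 1)
  refine polyGrowth_iff.2 fun S => ?_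
  obtain ⟨C, hC⟩ := h.exists_card_pow_le (S.image φ.ker.subtype ∪ {1, t})
  refine ⟨C * 2 ^ (d + 1), fun n => ?_⟩
  have hmul : #(S ^ n) * (n + 1) ≤ C * 2 ^ (d + 1) * (n + 1) ^ d * (n + 1) :=
    calc #(S ^ n) * (n + 1) ≤ C * (2 * n + 1) ^ (d + 1) :=
          (card_pow_mul_succ_le_card_pow ht S n).trans (hC _)
      _ ≤ C * (2 * (n + 1)) ^ (d + 1) := by gcongr; omega
      _ = C * 2 ^ (d + 1) * (n + 1) ^ d * (n + 1) := by rw [mul_pow]; ring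
  exact Nat.le_of_mul_le_mul_right hmul n.succ_pos

lemma PolyGrowth.finite_of_zero [Group.FG G] (h : PolyGrowth 0 G) : Finite G := by
  classical
  by_contra hinf
  rw [not_finite_iff_infinite] at hinf
  obtain ⟨S, hS⟩ := (Group.FG.out : (⊤ : Subgroup G).FG)
  obtain ⟨C, hC⟩ := h.exists_card_pow_le (insert 1 S)
  have hgen : Subgroup.closure ((insert 1 S : Finset G) : Set G) = ⊤ :=
    eq_top_iff.2 (hS ▸ Subgroup.closure_mono (coe_subset.2 (subset_insert 1 S)))
  have hlt := Finset.add_one_le_card_pow (mem_insert_self 1 S)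
    (by rw [hgen]; exact Set.infinite_univ) C
  have hle : #(insert 1 S ^ C) ≤ C := by simpa using hC C
  omega

end KernelOfIntegerQuotient

section VirtuallyCyclic

universe u

/-- `G` contains a pair `a`, `b` of commuting elements that freely generates a free abelian
subgroup of rank two. -/
def HasFreePair (G : Type*) [Group G] : Prop :=
  ∃ a b : G, Commute a b ∧ ∀ i j : ℤ, a ^ i * b ^ j = 1 → i = 0 ∧ j = 0

lemma HasFreePair.of_injective {K G : Type*} [Group K] [Group G] (h : HasFreePair K)
    (f : K →* G) (hf : Function.Injective f) : HasFreePair G := by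
  obtain ⟨a, b, hab, hfree⟩ := h
  refine ⟨f a, f b, hab.map f, fun i j hij => hfree i j (hf ?_)⟩
  rw [map_mul, map_zpow, map_zpow, hij, map_one]

lemma HasFreePair.exists_subgroup {G : Type*} [Group G] (h : HasFreePair G) :
    ∃ H : Subgroup G, Nonempty (H ≃* Multiplicative (ℤ × ℤ)) := by
  obtain ⟨a, b, hab, hfree⟩ := h
  let f : Multiplicative (ℤ × ℤ) →* G :=
    ((zpowersHom G a).noncommCoprod (zpowersHom G b) fun _ _ => hab.zpow_zpow _ _).comp
      (MulEquiv.prodMultiplicative ℤ ℤ).toMonoidHom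
  have hf : Function.Injective f := (injective_iff_map_eq_one f).2 fun p hp =>
    have ⟨hi, hj⟩ := hfree _ _ hp
    Multiplicative.toAdd.injective (Prod.ext hi hj)
  exact ⟨f.range, ⟨(MonoidHom.ofInjective hf).symm⟩⟩

lemma index_zpowers_zpow {K : Type*} [Group K] {c : K} (hc : ¬ IsOfFinOrder c) (m : ℤ) :
    (Subgroup.zpowers (c ^ m)).index = m.natAbs * (Subgroup.zpowers c).index := by
  have hinj : Function.Injective (zpowersHom K c) := fun x y hxy =>
    Multiplicative.toAdd.injective (injective_zpow_iff_not_isOfFinOrder.2 hc hxy)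
  have hmap : Subgroup.zpowers (c ^ m) =
      (Subgroup.zpowers (Multiplicative.ofAdd m)).map (zpowersHom K c) := by
    rw [MonoidHom.map_zpowers, zpowersHom_apply, toAdd_ofAdd]
  have hindex : (Subgroup.zpowers (Multiplicative.ofAdd m)).index = m.natAbs := by
    have hmul : Subgroup.zpowers (Multiplicative.ofAdd m) =
        AddSubgroup.toSubgroup (AddSubgroup.zmultiples m) := by
      ext x
      rfl
    rw [hmul, AddSubgroup.index_toSubgroup, Int.index_zmultiples]
  have hrange : (zpowersHom K c).range = Subgroup.zpowers c := by
    ext x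
    rfl
  rw [hmap, Subgroup.index_map_of_injective _ hinj, hindex, hrange]

/- If `α (c ^ a) = c ^ b`, comparing the indices of the two powers gives `|b| = a`, so
`α (c ^ a) = c ^ (± a)`. -/
lemma exists_pos_apply_apply_pow_eq_pow {K : Type*} [Group K] {c : K} (hc : ¬ IsOfFinOrder c)
    (hind : (Subgroup.zpowers c).index ≠ 0) (α : K ≃* K) :
    ∃ a : ℕ, 0 < a ∧ α (α (c ^ a)) = c ^ a := by
  obtain ⟨a, ha, -, b, hb : c ^ b = α c ^ a⟩ :=
    Subgroup.exists_pow_mem_of_index_ne_zero hind (α c)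
  have hαc : ¬ IsOfFinOrder (α c) := fun h =>
    hc ((α.injective.isOfFinOrder_iff (f := α.toMonoidHom)).1 h)
  have hindα : (Subgroup.zpowers (α c)).index = (Subgroup.zpowers c).index := by
    rw [← Subgroup.index_map_equiv (Subgroup.zpowers c) α, MonoidHom.map_zpowers]
    rfl
  have hba : b.natAbs = a := by
    have hindex := index_zpowers_zpow hαc a
    rw [zpow_natCast, ← hb, index_zpowers_zpow hc, hindα, Int.natAbs_natCast] at hindex
    exact Nat.eq_of_mul_eq_mul_right (Nat.pos_of_ne_zero hind) hindex
  refine ⟨a, ha, ?_⟩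
  rw [map_pow, ← hb, map_zpow]
  obtain rfl | rfl : b = a ∨ b = -a := hba ▸ b.natAbs_eq
  · rw [zpow_natCast, ← hb, zpow_natCast]
  · rw [zpow_neg, zpow_natCast, ← hb, zpow_neg, zpow_natCast, inv_inv]

lemma finiteIndex_zpowers_of_finite_ker {G : Type*} [Group G] (φ : G →* Multiplicative ℤ)
    [Finite φ.ker] {t : G} (ht : φ t = Multiplicative.ofAdd 1) :
    (Subgroup.zpowers t).FiniteIndex := by
  suffices Finite (G ⧸ Subgroup.zpowers t) from Subgroup.finiteIndex_of_finite_quotient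
  refine Finite.of_surjective (fun x : φ.ker => ((x : G) : G ⧸ Subgroup.zpowers t)) fun q => ?_
  obtain ⟨g, rfl⟩ := QuotientGroup.mk_surjective q
  exact ⟨⟨_, mul_zpow_toAdd_inv_mem_ker ht g⟩, QuotientGroup.eq.2 ⟨(φ g).toAdd, by simp⟩⟩

lemma finiteIndex_zpowers_coe {G : Type*} [Group G] {H : Subgroup G} [H.FiniteIndex] (t : H)
    [ht : (Subgroup.zpowers t).FiniteIndex] : (Subgroup.zpowers (t : G)).FiniteIndex := by
  refine ⟨?_⟩
  rw [← Subgroup.coe_subtype, ← MonoidHom.map_zpowers, Subgroup.index_map_subtype]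
  exact mul_ne_zero ht.index_ne_zero Subgroup.FiniteIndex.index_ne_zero

lemma hasFreePair_of_zpowers_finiteIndex_ker {G : Type*} [Group G] {φ : G →* Multiplicative ℤ}
    {t : G} (ht : φ t = Multiplicative.ofAdd 1) {c : φ.ker} (hc : ¬ IsOfFinOrder c)
    (hind : (Subgroup.zpowers c).index ≠ 0) : HasFreePair G := by
  obtain ⟨a, ha, hfix⟩ := exists_pos_apply_apply_pow_eq_pow hc hind (MulAut.conjNormal t)
  refine ⟨((c ^ a : φ.ker) : G), t ^ 2, ?_, fun i j hij => ?_⟩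
  · have hconj : t ^ 2 * ((c ^ a : φ.ker) : G) * (t ^ 2)⁻¹ = (c ^ a : φ.ker) := by
      simpa only [MulAut.conjNormal_apply, sq, mul_assoc, mul_inv_rev] using
        congrArg Subtype.val hfix
    exact (mul_inv_eq_iff_eq_mul.1 hconj).symm
  · have hj : j = 0 := by
      have hφ := congrArg φ hij
      rw [map_mul, map_zpow φ _ i, MonoidHom.mem_ker.1 (c ^ a : φ.ker).2, one_zpow, one_mul,
        ← zpow_natCast, ← zpow_mul, map_zpow_of_map_eq_ofAdd_one ht, map_one, ofAdd_eq_one] at hφ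
      simpa using hφ
    subst hj
    have hi : c ^ ((a : ℤ) * i) = c ^ (0 : ℤ) := by
      apply Subtype.ext
      simpa [zpow_mul] using hij
    have hai := injective_zpow_iff_not_isOfFinOrder.2 hc hi
    exact ⟨(mul_eq_zero.1 hai).resolve_left (by exact_mod_cast ha.ne'), rfl⟩

theorem PolyGrowth.virtually_cyclic_or_hasFreePair {d : ℕ} {G : Type u} [Group G] [Group.FG G]
    (hG : PolyGrowth d G) :
    (∃ c : G, (Subgroup.zpowers c).FiniteIndex) ∨ HasFreePair G := by
  induction d generalizing G with
  | zero =>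
    have := hG.finite_of_zero
    exact Or.inl ⟨1, inferInstance⟩
  | succ d ih =>
    obtain _ | _ := finite_or_infinite G
    · exact Or.inl ⟨1, inferInstance⟩
    obtain ⟨H, _, φ, hφ⟩ := hG.exists_finiteIndex_surjective_int
    obtain ⟨t, ht⟩ := hφ (Multiplicative.ofAdd 1)
    have hH : PolyGrowth (d + 1) H := hG.subgroup H
    have hker : Group.FG φ.ker := (Group.fg_iff_subgroup_fg _).2 (hH.fg_ker φ hφ)
    obtain ⟨c, hc⟩ | hfree := ih (hH.ker φ hφ)
    · by_cases hcfin : IsOfFinOrder c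
      · have : Finite φ.ker := (Subgroup.zpowers c).finite_iff_finite_and_finiteIndex.2
          ⟨finite_zpowers.2 hcfin, hc⟩
        have := finiteIndex_zpowers_of_finite_ker φ ht
        exact Or.inl ⟨t, finiteIndex_zpowers_coe t⟩
      · have hfree := hasFreePair_of_zpowers_finiteIndex_ker ht hcfin hc.index_ne_zero
        exact Or.inr (hfree.of_injective _ H.subtype_injective)
    · have hfreeH := hfree.of_injective _ φ.ker.subtype_injective
      exact Or.inr (hfreeH.of_injective _ H.subtype_injective)

end VirtuallyCyclic

section LinearGrowth

open scoped Pointwise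
open Finset

variable {G : Type*} [Group G] {d : ℕ}

lemma natAbs_toAdd_le_of_mem_pow {S : Finset (Multiplicative ℤ)} {M : ℕ}
    (hM : ∀ s ∈ S, s.toAdd.natAbs ≤ M) {n : ℕ} {x : Multiplicative ℤ} (hx : x ∈ S ^ n) :
    x.toAdd.natAbs ≤ n * M := by
  induction n generalizing x with
  | zero => simp_all
  | succ n ih =>
    rw [pow_succ, mem_mul] at hx
    obtain ⟨y, hy, s, hs, rfl⟩ := hx
    calc (y * s).toAdd.natAbs ≤ y.toAdd.natAbs + s.toAdd.natAbs := Int.natAbs_add_le _ _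
      _ ≤ n * M + M := add_le_add (ih hy) (hM s hs)
      _ = (n + 1) * M := by ring

lemma polyGrowth_one_multiplicative_int : PolyGrowth 1 (Multiplicative ℤ) := by
  refine polyGrowth_iff.2 fun S => ?_
  set M : ℕ := S.sup fun s => s.toAdd.natAbs
  refine ⟨2 * M + 1, fun n => ?_⟩
  have hsub : (S ^ n).map Multiplicative.toAdd.toEmbedding ⊆
      Icc (-(n * M : ℕ) : ℤ) (n * M : ℕ) := by
    intro i hi
    obtain ⟨x, hx, rfl⟩ := mem_map.1 hi
    have hle := natAbs_toAdd_le_of_mem_pow (M := M)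
      (fun s hs => le_sup (f := fun s => s.toAdd.natAbs) hs) hx
    rw [mem_Icc, Equiv.coe_toEmbedding]
    omega
  calc #(S ^ n) ≤ #(Icc (-(n * M : ℕ) : ℤ) (n * M : ℕ)) := card_map _ ▸ card_le_card hsub
    _ = 2 * (n * M) + 1 := by rw [Int.card_Icc]; omega
    _ ≤ (2 * M + 1) * (n + 1) ^ 1 := by nlinarith

lemma mul_pow_subset_pow_mul [DecidableEq G] {S T E : Finset G} (h : T * S ⊆ E * T) (n : ℕ) :
    T * S ^ n ⊆ E ^ n * T := by
  induction n with
  | zero => simp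
  | succ n ih =>
    calc T * S ^ (n + 1) = T * S ^ n * S := by rw [pow_succ, mul_assoc]
      _ ⊆ E ^ n * T * S := mul_subset_mul_right ih
      _ = E ^ n * (T * S) := mul_assoc _ _ _
      _ ⊆ E ^ n * (E * T) := mul_subset_mul_left h
      _ = E ^ (n + 1) * T := by rw [pow_succ, mul_assoc]

lemma PolyGrowth.of_finiteIndex {H : Subgroup G} [H.FiniteIndex] (hH : PolyGrowth d H) :
    PolyGrowth d G := by
  classical
  refine polyGrowth_iff.2 fun S => ?_
  obtain ⟨T, hT, h1⟩ := H.exists_isComplement_right 1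
  lift T to Finset G using hT.finite_right
  have hdecomp (g : G) : ∃ x : H, ∃ t ∈ T, x * t = g := by
    obtain ⟨x, hx, t, ht, hg⟩ : g ∈ (H : Set G) * (T : Set G) := hT.mul_eq ▸ Set.mem_univ g
    exact ⟨⟨x, hx⟩, t, ht, hg⟩
  choose η τ hτ hητ using hdecomp
  set E : Finset H := (T * S).image η
  have hTS : T * S ⊆ E.image H.subtype * T := fun g hg => mem_mul.2
    ⟨η g, mem_image_of_mem H.subtype (mem_image_of_mem η hg), τ g, hτ g, hητ g⟩
  obtain ⟨C, hC⟩ := hH.exists_card_pow_le E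
  refine ⟨C * #T, fun n => ?_⟩
  calc #(S ^ n) ≤ #((E ^ n).image H.subtype * T) := by
        rw [image_pow]
        exact card_le_card ((subset_mul_right _ h1).trans (mul_pow_subset_pow_mul hTS n))
    _ ≤ #(E ^ n) * #T := card_mul_le.trans (Nat.mul_le_mul_right _ card_image_le)
    _ ≤ C * (n + 1) ^ d * #T := Nat.mul_le_mul_right _ (hC n)
    _ = C * #T * (n + 1) ^ d := by ring

lemma polyGrowth_one_of_finiteIndex_zpowers (c : G) [(Subgroup.zpowers c).FiniteIndex] :
    PolyGrowth 1 G := by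
  have hc : PolyGrowth 1 (Subgroup.zpowers c) :=
    polyGrowth_one_multiplicative_int.of_surjective (zpowersHom G c).rangeRestrict
      (zpowersHom G c).rangeRestrict_surjective
  exact hc.of_finiteIndex

lemma polyGrowth_of_forall_fg (h : ∀ K : Subgroup G, K.FG → PolyGrowth d K) : PolyGrowth d G := by
  classical
  refine polyGrowth_iff.2 fun S => ?_
  set K := Subgroup.closure (S : Set G)
  obtain ⟨C, hC⟩ := (h K ⟨S, rfl⟩).exists_card_pow_le
    (S.preimage K.subtype K.subtype_injective.injOn)
  refine ⟨C, fun n => ?_⟩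
  have himage : (S.preimage K.subtype K.subtype_injective.injOn).image K.subtype = S := by
    rw [image_preimage, filter_true_of_mem]
    exact fun s hs => ⟨⟨s, Subgroup.subset_closure hs⟩, rfl⟩
  rw [← himage, ← image_pow]
  exact card_image_le.trans (hC n)

lemma PolyGrowth.one_of_not_hasFreePair (hG : PolyGrowth d G) (hfree : ¬ HasFreePair G) :
    PolyGrowth 1 G := by
  refine polyGrowth_of_forall_fg fun K hK => ?_
  have : Group.FG K := (Group.fg_iff_subgroup_fg K).2 hK
  obtain ⟨c, hc⟩ | hK := (hG.subgroup K).virtually_cyclic_or_hasFreePair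
  · exact polyGrowth_one_of_finiteIndex_zpowers c
  · exact absurd (hK.of_injective _ K.subtype_injective) hfree

end LinearGrowth

section GelfandKirillov

open scoped Pointwise
open Finset Filter

lemma limsup_ofReal_logb_le {f : ℕ → ℕ} {C d : ℕ} (hf : ∀ n, f n ≤ C * (n + 1) ^ d) :
    limsup (fun n : ℕ => ENNReal.ofReal (Real.logb n (f n))) atTop ≤ d := by
  set A : ℝ := C * 2 ^ d + 1
  have hA : 1 ≤ A := by simp only [A, le_add_iff_nonneg_left]; positivity
  have hle : ∀ᶠ n : ℕ in atTop, ENNReal.ofReal (Real.logb n (f n)) ≤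
      ENNReal.ofReal (d + Real.log A / Real.log n) := by
    filter_upwards [eventually_ge_atTop 2] with n hn
    have hn1 : (1 : ℝ) < n := by exact_mod_cast hn
    apply ENNReal.ofReal_le_ofReal
    obtain h0 | hpos := (f n).eq_zero_or_pos
    · rw [h0, Nat.cast_zero, Real.logb_zero]
      have := Real.log_nonneg hA
      have := Real.log_pos hn1
      positivity
    · have hfn : (f n : ℝ) ≤ n ^ d * A :=
        calc (f n : ℝ) ≤ C * (n + 1) ^ d := by exact_mod_cast hf n
          _ ≤ C * (2 * n) ^ d := by gcongr; linarith
          _ ≤ n ^ d * A := by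
            have : (0 : ℝ) ≤ n ^ d := by positivity
            simp only [A, mul_pow]
            linarith
      calc Real.logb n (f n) ≤ Real.logb n (n ^ d * A) :=
            Real.logb_le_logb_of_le hn1 (by exact_mod_cast hpos) hfn
        _ = d + Real.log A / Real.log n := by
            rw [Real.logb_mul (by positivity) (by positivity), Real.logb_pow,
              Real.logb_self_eq_one hn1, mul_one, Real.log_div_log]
  have htend : Tendsto (fun n : ℕ => ENNReal.ofReal (d + Real.log A / Real.log n)) atTop
      (nhds d) := by
    have hlog : Tendsto (fun n : ℕ => (d : ℝ) + Real.log A / Real.log n) atTop (nhds (d + 0)) :=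
      tendsto_const_nhds.add
        ((Real.tendsto_log_atTop.comp tendsto_natCast_atTop_atTop).const_div_atTop _)
    simpa using ENNReal.tendsto_ofReal hlog
  exact (limsup_le_limsup hle).trans htend.limsup_eq.le

lemma exists_le_mul_pow_of_limsup_ofReal_logb_lt {f : ℕ → ℕ} {d : ℕ}
    (hf : limsup (fun n : ℕ => ENNReal.ofReal (Real.logb n (f n))) atTop < d) :
    ∃ C : ℕ, ∀ n, f n ≤ C * (n + 1) ^ d := by
  obtain ⟨N, hN⟩ := eventually_atTop.1 (eventually_lt_of_limsup_lt hf)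
  have hlarge {n : ℕ} (hn : N + 2 ≤ n) : f n ≤ n ^ d := by
    obtain h0 | hpos := (f n).eq_zero_or_pos
    · omega
    have hn1 : (1 : ℝ) < n := by exact_mod_cast (by omega : 1 < n)
    have hlog := hN n (by omega)
    rw [← ENNReal.ofReal_natCast d, ENNReal.ofReal_lt_ofReal_iff_of_nonneg
      (Real.logb_nonneg hn1 (by exact_mod_cast hpos)),
      Real.logb_lt_iff_lt_rpow hn1 (by exact_mod_cast hpos), Real.rpow_natCast] at hlog
    exact_mod_cast hlog.le
  refine ⟨1 + ∑ n ∈ range (N + 2), f n, fun n => ?_⟩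
  obtain hn | hn := lt_or_ge n (N + 2)
  · calc f n ≤ ∑ n ∈ range (N + 2), f n :=
          single_le_sum (fun _ _ => Nat.zero_le _) (mem_range.2 hn)
      _ ≤ (1 + ∑ n ∈ range (N + 2), f n) * 1 := by omega
      _ ≤ _ := by gcongr; exact Nat.one_le_pow _ _ n.succ_pos
  · calc f n ≤ n ^ d := hlarge hn
      _ ≤ 1 * (n + 1) ^ d := by rw [one_mul]; gcongr; omega
      _ ≤ _ := by gcongr; omega

variable (k : Type*) [Field k] {G : Type*} [Group G] {d : ℕ}

lemma span_of_image_pow [DecidableEq G] (S : Finset G) (n : ℕ) :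
    Submodule.span k (MonoidAlgebra.of k G '' (S : Set G)) ^ n =
      Submodule.span k (MonoidAlgebra.of k G '' ((S ^ n : Finset G) : Set G)) := by
  rw [Submodule.span_pow, coe_pow, Set.image_pow]

lemma finrank_span_of_image (T : Finset G) :
    Module.finrank k (Submodule.span k (MonoidAlgebra.of k G '' (T : Set G))) = #T := by
  have hli : LinearIndependent k (fun t : T => MonoidAlgebra.of k G t) := by
    convert (MonoidAlgebra.basis G k).linearIndependent.comp (Subtype.val : T → G)
      Subtype.val_injective using 1
    ext1 t
    simp
  rw [← Fintype.card_coe, ← finrank_span_eq_card hli, Set.image_eq_range]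
  rfl

lemma exists_finset_le_span (V : Submodule k (MonoidAlgebra k G)) [FiniteDimensional k V] :
    ∃ S : Finset G, V ≤ Submodule.span k (MonoidAlgebra.of k G '' (S : Set G)) := by
  classical
  obtain ⟨B, hB⟩ := (Module.Finite.iff_fg.1 ‹_› : V.FG)
  refine ⟨B.biUnion fun b => b.coeff.support, ?_⟩
  rw [← hB, Submodule.span_le]
  intro b hb
  refine Submodule.span_mono (Set.image_mono ?_) (MonoidAlgebra.mem_span_support_coeff b)
  exact_mod_cast subset_biUnion_of_mem (fun b => b.coeff.support) hb

variable {k} in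
lemma exists_polyGrowth_of_gkDim_lt_top (h : gkDim k (MonoidAlgebra k G) < ⊤) :
    ∃ d : ℕ, PolyGrowth d G := by
  classical
  obtain ⟨d, hd⟩ := ENNReal.exists_nat_gt h.ne
  refine ⟨d, polyGrowth_iff.2 fun S => exists_le_mul_pow_of_limsup_ofReal_logb_lt ?_⟩
  have hfin : FiniteDimensional k (Submodule.span k (MonoidAlgebra.of k G '' (S : Set G))) :=
    FiniteDimensional.span_of_finite k (S.finite_toSet.image _)
  have hcard (n : ℕ) : #(S ^ n) = Module.finrank k (Submodule.span k
      (MonoidAlgebra.of k G '' (S : Set G)) ^ n : Submodule k (MonoidAlgebra k G)) := by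
    rw [span_of_image_pow, finrank_span_of_image]
  simp only [hcard]
  exact (le_iSup (fun V : {V : Submodule k (MonoidAlgebra k G) // FiniteDimensional k V} =>
    limsup (fun n : ℕ => ENNReal.ofReal (Real.logb n (Module.finrank k
      ((V : Submodule k (MonoidAlgebra k G)) ^ n : Submodule k (MonoidAlgebra k G))))) atTop)
    ⟨_, hfin⟩).trans_lt hd

lemma PolyGrowth.gkDim_le (h : PolyGrowth d G) : gkDim k (MonoidAlgebra k G) ≤ d := by
  classical
  refine iSup_le fun ⟨V, _⟩ => ?_
  obtain ⟨S, hS⟩ := exists_finset_le_span k V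
  obtain ⟨C, hC⟩ := h.exists_card_pow_le S
  refine limsup_ofReal_logb_le fun n => (le_trans ?_ (hC n))
  have hfin : FiniteDimensional k
      (Submodule.span k (MonoidAlgebra.of k G '' ((S ^ n : Finset G) : Set G))) :=
    FiniteDimensional.span_of_finite k ((S ^ n).finite_toSet.image _)
  rw [← finrank_span_of_image k (S ^ n)]
  exact Submodule.finrank_mono (span_of_image_pow k S n ▸ pow_le_pow_left' hS n)

end GelfandKirillov

end PolynomialGrowth

theorem subgroup_isomorphic_to_Z2_of_gkDim_ge_two_general (k : Type*) [Field k] (G : Type*)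
    [Group G] (h1 : 1 < gkDim k (MonoidAlgebra k G)) (hfin : gkDim k (MonoidAlgebra k G) < ⊤) :
    ∃ H : Subgroup G, Nonempty (H ≃* Multiplicative (ℤ × ℤ)) := by
  obtain ⟨d, hd⟩ := PolynomialGrowth.exists_polyGrowth_of_gkDim_lt_top hfin
  by_contra hno
  have hlin : PolynomialGrowth.PolyGrowth 1 G :=
    hd.one_of_not_hasFreePair fun hfree => hno hfree.exists_subgroup
  exact h1.not_ge (by exact_mod_cast hlin.gkDim_le k)

/-- **Statement 16**: a group `G` with `2 ≤ GKdim k[G] < ∞` has a subgroup isomorphic to `ℤ²`. -/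
theorem subgroup_isomorphic_to_Z2_of_gkDim_ge_two
    (k : Type*) [Field k] [IsAlgClosed k] [CharZero k]
    (G : Type*) [Group G]
    (h2 : 2 ≤ gkDim k (MonoidAlgebra k G)) (hfin : gkDim k (MonoidAlgebra k G) < ⊤) :
    ∃ H : Subgroup G, Nonempty (H ≃* Multiplicative (ℤ × ℤ)) :=
  subgroup_isomorphic_to_Z2_of_gkDim_ge_two_general k G (ENNReal.one_lt_two.trans_le h2) hfin
end
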